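/- Let f be a homeomorphism of the open annulus 𝔸 isotopic to the identity and satisfying the intersection property, and let F be a lift of f to ℝ². Then the set Rot(F) is reduced to a single irrational number ρ if and only if Rec⁺(f) ≠ ∅ and f has no periodic orbit. -/

import Mathlib

open Filter Topology Set

noncomputable section

/-- The plane ℝ². -/
abbrev Plane := ℝ × ℝ

/-- The open annulus 𝔸 = ℝ/ℤ × ℝ. -/
abbrev Ann := AddCircle (1 : ℝ) × ℝ

/-- The covering map π : ℝ² → 𝔸, (x,y) ↦ (x + ℤ, y). -/
def prj : Plane → Ann := fun p => ((p.1 : AddCircle (1 : ℝ)), p.2)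

/-- The deck transformation T^k : ℝ² → ℝ², (x,y) ↦ (x + k, y). -/
def Tr (k : ℤ) : Plane → Plane := fun p => (p.1 + (k : ℝ), p.2)

/-- `F` is a lift of `f` to the universal cover ℝ² of the annulus. -/
def IsLift (f : Ann ≃ₜ Ann) (F : Plane ≃ₜ Plane) : Prop :=
  ∀ p : Plane, prj (F p) = f (prj p)

/-- `f` is isotopic to the identity: there is a continuous family of homeomorphisms
joining the identity to `f`. -/
def IsotopicToId (f : Ann ≃ₜ Ann) : Prop :=
  ∃ H : ℝ → Ann → Ann,
    Continuous (fun q : ℝ × Ann => H q.1 q.2) ∧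
    (∀ t : ℝ, ∃ h : Ann ≃ₜ Ann, ∀ z, H t z = h z) ∧
    (∀ z, H 0 z = z) ∧ (∀ z, H 1 z = f z)

/-- An essential circle in 𝔸: a simple closed curve which is not null-homotopic. -/
def IsEssentialCircle (c : Set Ann) : Prop :=
  ∃ φ : C(AddCircle (1 : ℝ), Ann), Function.Injective φ ∧ Set.range φ = c ∧
    ¬ ∃ pt : Ann, φ.Homotopic (ContinuousMap.const _ pt)

/-- `f` has the intersection property: every essential circle meets its image. -/
def IntersectionProperty (f : Ann → Ann) : Prop :=
  ∀ c : Set Ann, IsEssentialCircle c → (c ∩ f '' c).Nonempty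

/-- `z` is a positively recurrent point of `g`: some subsequence of the forward orbit
of `z` converges to `z`. -/
def PosRec {X : Type*} [TopologicalSpace X] (g : X → X) (z : X) : Prop :=
  ∃ φ : ℕ → ℕ, StrictMono φ ∧ Tendsto (fun k => g^[φ k] z) atTop (𝓝 z)

/-- The positively recurrent point `z` has rotation number `ρ` for the lift `F` of `f`. -/
def HasRotNum (f : Ann → Ann) (F : Plane → Plane) (z : Ann) (ρ : ℝ) : Prop :=
  PosRec f z ∧
    ∀ zt : Plane, prj zt = z →
      ∀ φ : ℕ → ℕ, StrictMono φ →
        Tendsto (fun k => f^[φ k] z) atTop (𝓝 z) →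
        Tendsto (fun k => ((F^[φ k] zt).1 - zt.1) / (φ k : ℝ)) atTop (𝓝 ρ)

/-- The rotation set Rot(F): the set of rotation numbers of positively recurrent
points of `f`. -/
def Rot (f : Ann → Ann) (F : Plane → Plane) : Set ℝ := {ρ | ∃ z, HasRotNum f F z ρ}

/-- The region `L(Γ)` of the plane on the left (west) of a line `Γ` (as a subset of ℝ²):
points lying in the connected component of the complement of `Γ` containing all far-west
points of the horizontal axis. -/
def Lset (Γ : Set Plane) : Set Plane :=
  {p | ∃ s : ℝ, ∀ x ≤ s, p ∈ connectedComponentIn Γᶜ ((x, 0) : Plane)}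

/-- The region `R(Γ)` of the plane on the right (east) of a line `Γ`. -/
def Rset (Γ : Set Plane) : Set Plane :=
  {p | ∃ s : ℝ, ∀ x ≥ s, p ∈ connectedComponentIn Γᶜ ((x, 0) : Plane)}

/-- The relation `Γ₁ < Γ₂` on (essential, oriented from south to north) lines:
`Cl(L(Γ₁)) ⊆ L(Γ₂)`. -/
def lineLT (Γ₁ Γ₂ : Set Plane) : Prop := closure (Lset Γ₁) ⊆ Lset Γ₂

/-- An essential line in ℝ², oriented from south to north: a properly embedded copy of ℝ
whose second coordinate tends to ±∞ at ±∞. -/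
def IsEssLinePlane (Γ : ℝ → Plane) : Prop :=
  Continuous Γ ∧ Function.Injective Γ ∧ IsProperMap Γ ∧
    Tendsto (fun t => (Γ t).2) atTop atTop ∧ Tendsto (fun t => (Γ t).2) atBot atBot

/-- An essential line in the annulus 𝔸: a properly embedded simple path joining one end
to the other. -/
def IsEssLineAnn (γ : ℝ → Ann) : Prop :=
  Continuous γ ∧ Function.Injective γ ∧ IsProperMap γ ∧
    ((Tendsto (fun t => (γ t).2) atTop atTop ∧ Tendsto (fun t => (γ t).2) atBot atBot) ∨
     (Tendsto (fun t => (γ t).2) atTop atBot ∧ Tendsto (fun t => (γ t).2) atBot atTop))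

/-- An oriented essential line in 𝔸 joining the lower end S to the upper end N. -/
def IsEssLineAnnSN (γ : ℝ → Ann) : Prop :=
  Continuous γ ∧ Function.Injective γ ∧ IsProperMap γ ∧
    Tendsto (fun t => (γ t).2) atTop atTop ∧ Tendsto (fun t => (γ t).2) atBot atBot

theorem log_lift {E : Type*} [NormedAddCommGroup E] [NormedSpace ℝ E] (φ : E → ℂ)
    (hc : Continuous φ) (h0 : ∀ x, φ x ≠ 0) :
    ∃ L : E → ℂ, Continuous L ∧ ∀ x, Complex.exp (L x) = φ x := by
  obtain ⟨L, ⟨-, hL⟩, -⟩ := Complex.isCoveringMapOn_exp.existsUnique_continuousMap_lifts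
    (⟨φ, hc⟩ : C(E, ℂ)) (a₀ := 0) (e₀ := Complex.log (φ 0)) (Complex.exp_log (h0 0))
    (fun x => h0 x)
  exact ⟨L, L.continuous, fun x => congrFun hL x⟩

theorem exp_const {A : Type*} [TopologicalSpace A] [PreconnectedSpace A] (L M : A → ℂ)
    (hL : Continuous L) (hM : Continuous M) (h : ∀ x, Complex.exp (L x) = Complex.exp (M x))
    (a b : A) : L a - M a = L b - M b := by
  have key : L = fun x => M x + (L a - M a) := by
    refine Complex.isCoveringMap_exp.eq_of_comp_eq hL (by fun_prop) ?_ a (by simp)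
    funext x
    apply Subtype.ext
    simp [Complex.exp_add, Complex.exp_sub, h a, h x, Complex.exp_ne_zero]
  have := congrFun key b
  rw [this]; ring

/-- The plane as complex numbers. -/
def toC (p : Plane) : ℂ := (p.1 : ℂ) + p.2 * Complex.I

theorem toC_cont : Continuous toC := by unfold toC; fun_prop

theorem toC_inj {p q : Plane} (h : toC p = toC q) : p = q := by
  have h1 := congrArg Complex.re h
  have h2 := congrArg Complex.im h
  simp [toC] at h1 h2
  exact Prod.ext h1 h2

theorem toC_ne {p q : Plane} (h : p ≠ q) : toC (p - q) ≠ 0 := by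
  intro h0
  apply h
  have : toC (p - q) = toC 0 := by rw [h0]; simp [toC]
  exact sub_eq_zero.mp (toC_inj this)

/-- Isotopy to the identity in the plane (through injective maps). -/
def IsoId (h : Plane ≃ₜ Plane) : Prop :=
  ∃ H : ℝ → Plane → Plane, Continuous (fun q : ℝ × Plane => H q.1 q.2) ∧
    (∀ t, Function.Injective (H t)) ∧ (∀ z, H 0 z = z) ∧ (∀ z, H 1 z = h z)

theorem IsoId.refl : IsoId (Homeomorph.refl _) :=
  ⟨fun _ z => z, by fun_prop, fun _ => Function.injective_id, fun _ => rfl, fun _ => rfl⟩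

theorem IsoId.trans {g h : Plane ≃ₜ Plane} (hg : IsoId g) (hh : IsoId h) : IsoId (g.trans h) := by
  obtain ⟨H, Hc, Hi, H0, H1⟩ := hg
  obtain ⟨K, Kc, Ki, K0, K1⟩ := hh
  refine ⟨fun t z => K t (H t z), ?_, fun t => (Ki t).comp (Hi t), by simp [H0, K0],
    by simp [H1, K1]⟩
  exact Kc.comp (continuous_fst.prodMk Hc)

theorem IsoId.symm {g : Plane ≃ₜ Plane} (hg : IsoId g) : IsoId g.symm := by
  obtain ⟨H, Hc, Hi, H0, H1⟩ := hg
  refine ⟨fun t z => H (1 - t) (g.symm z), ?_, fun t => (Hi _).comp g.symm.injective, ?_, ?_⟩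
  · exact Hc.comp (f := fun q : ℝ × Plane => ((1 - q.1, g.symm q.2) : ℝ × Plane)) (by fun_prop)
  · intro z; simp [H1]
  · intro z; simp [H0]

theorem period2 (f : Plane ≃ₜ Plane) (hf : IsoId f) (hfix : ∀ x, f x ≠ x) (a : Plane) :
    f (f a) ≠ a := by
  intro hper
  obtain ⟨H, Hc, Hi, H0, H1⟩ := hf
  obtain ⟨Λ, Λc, hΛ⟩ := log_lift (fun x : Plane => toC (f x - x))
    (toC_cont.comp (by fun_prop)) (fun x => toC_ne (hfix x))
  set b := f a with hb
  let γ : ℝ → Plane := fun s => a + s • (b - a)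
  have γc : Continuous γ := by fun_prop
  have γ0 : γ 0 = a := by simp [γ]
  have γ1 : γ 1 = b := by simp [γ]
  have c1 : Continuous (fun q : ℝ × ℝ => H q.1 (f (γ q.2))) :=
    Hc.comp (f := fun q : ℝ × ℝ => ((q.1, f (γ q.2)) : ℝ × Plane)) (by fun_prop)
  have c2 : Continuous (fun q : ℝ × ℝ => H q.1 (γ q.2)) :=
    Hc.comp (f := fun q : ℝ × ℝ => ((q.1, γ q.2) : ℝ × Plane)) (by fun_prop)
  obtain ⟨L, Lc, hL⟩ := log_lift (fun q : ℝ × ℝ => toC (H q.1 (f (γ q.2)) - H q.1 (γ q.2)))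
    (toC_cont.comp (c1.sub c2)) (fun q => toC_ne (fun h => hfix _ (Hi _ h)))
  have e1 := exp_const (fun s : ℝ => L (0, s)) (fun s => Λ (γ s)) (by fun_prop) (by fun_prop)
    (fun s => by simp [hL, hΛ, H0]) 0 1
  have e2 := exp_const (fun s : ℝ => L (1, s)) (fun s => Λ (f (γ s))) (by fun_prop) (by fun_prop)
    (fun s => by simp [hL, hΛ, H1]) 0 1
  have e3 := exp_const (fun t : ℝ => L (t, 1)) (fun t => L (t, 0) + Real.pi * Complex.I)
    (by fun_prop) (by fun_prop)
    (fun t => by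
      rw [Complex.exp_add, Complex.exp_pi_mul_I, hL, hL]
      simp only [γ0, γ1, ← hb, hper]
      simp only [toC]; push_cast [Prod.fst_sub, Prod.snd_sub]; ring) 0 1
  simp only [γ0, γ1, ← hb, hper] at e1 e2 e3
  have e : Λ a = Λ b := by linear_combination (1/2 : ℂ) * (e2 - e1 - e3)
  have : toC (f a - a) = toC (f b - b) := by rw [← hΛ a, ← hΛ b, e]
  have h2 := toC_inj this
  rw [hper, ← hb] at h2
  have h3 : b = a := by
    have : b - a = 0 := by
      have : (2:ℝ) • (b - a) = 0 := by
        rw [two_smul]; nth_rewrite 1 [h2]; abel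
      simpa using this
    exact sub_eq_zero.mp this
  exact hfix a h3

/-- bump map -/
def bumpMap (p : Plane) (r : ℝ) (v : Plane) (x : Plane) : Plane :=
  x + (max 0 (1 - ‖x - p‖ / r)) • v

theorem bump_approx (p : Plane) (r : ℝ) (hr : 0 < r) (v x y : Plane) :
    ‖bumpMap p r v x - bumpMap p r v y - (x - y)‖ ≤ (‖v‖ / r) * ‖x - y‖ := by
  have e : bumpMap p r v x - bumpMap p r v y - (x - y)
      = (max 0 (1 - ‖x - p‖ / r) - max 0 (1 - ‖y - p‖ / r)) • v := by
    simp only [bumpMap, sub_smul]; abel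
  rw [e, norm_smul]
  have h1 : ‖max 0 (1 - ‖x - p‖ / r) - max 0 (1 - ‖y - p‖ / r)‖ ≤ ‖x - y‖ / r := by
    rw [Real.norm_eq_abs]
    have h0 : |max 0 (1 - ‖x - p‖ / r) - max 0 (1 - ‖y - p‖ / r)|
        ≤ |(1 - ‖x - p‖ / r) - (1 - ‖y - p‖ / r)| := by
      rw [max_comm, max_comm 0]; exact abs_max_sub_max_le_abs _ _ _
    refine h0.trans ?_
    · have : (1 - ‖x - p‖ / r) - (1 - ‖y - p‖ / r) = (‖y - p‖ - ‖x - p‖) / r := by ring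
      rw [this, abs_div, abs_of_pos hr]
      gcongr
      have := abs_norm_sub_norm_le (y - p) (x - p)
      simpa [norm_sub_rev] using this
  calc _ ≤ ‖x - y‖ / r * ‖v‖ := by gcongr
    _ = _ := by ring

theorem bump_inj (p : Plane) (r : ℝ) (hr : 0 < r) (v : Plane) (hv : ‖v‖ < r) :
    Function.Injective (bumpMap p r v) := by
  intro x y h
  have := bump_approx p r hr v x y
  rw [h, sub_self, zero_sub, norm_neg] at this
  have h1 : ‖v‖ / r < 1 := (div_lt_one hr).2 hv
  by_contra hne
  have : 0 < ‖x - y‖ := norm_pos_iff.2 (sub_ne_zero.2 hne)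
  nlinarith

theorem ball_push (p : Plane) (r : ℝ) (v : Plane) (hv : ‖v‖ < r) :
    ∃ φ : Plane ≃ₜ Plane, IsoId φ ∧ φ p = p + v ∧ ∀ x, x ∉ Metric.ball p r → φ x = x := by
  have hr : 0 < r := lt_of_le_of_lt (norm_nonneg _) hv
  have ha : ApproximatesLinearOn (bumpMap p r v)
      ((ContinuousLinearEquiv.refl ℝ Plane : Plane ≃L[ℝ] Plane) : Plane →L[ℝ] Plane) univ
      (⟨‖v‖ / r, by positivity⟩ : NNReal) := by
    intro x _ y _
    exact bump_approx p r hr v x y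
  have hc : (⟨‖v‖ / r, by positivity⟩ : NNReal) <
      ‖((ContinuousLinearEquiv.refl ℝ Plane).symm : Plane →L[ℝ] Plane)‖₊⁻¹ := by
    have : ‖((ContinuousLinearEquiv.refl ℝ Plane).symm : Plane →L[ℝ] Plane)‖₊ = 1 := by
      have : ((ContinuousLinearEquiv.refl ℝ Plane).symm : Plane →L[ℝ] Plane)
        = ContinuousLinearMap.id ℝ Plane := by ext <;> rfl
      rw [this]
      exact ContinuousLinearMap.nnnorm_id
    rw [this, inv_one]
    exact (div_lt_one hr).2 hv
  refine ⟨ha.toHomeomorph _ (Or.inr hc), ?_, ?_, ?_⟩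
  · refine ⟨fun t z => bumpMap p r ((max 0 (min 1 t)) • v) z, ?_, ?_, ?_, ?_⟩
    · unfold bumpMap; fun_prop
    · intro t
      apply bump_inj p r hr
      rw [norm_smul, Real.norm_eq_abs, abs_of_nonneg (le_max_left _ _)]
      have : max 0 (min 1 t) ≤ 1 := max_le zero_le_one (min_le_left _ _)
      nlinarith [norm_nonneg v]
    · intro z; simp [bumpMap]
    · intro z
      show _ = bumpMap p r v z
      simp
  · show bumpMap p r v p = p + v
    simp [bumpMap]
  · intro x hx
    show bumpMap p r v x = x
    simp only [Metric.mem_ball, not_lt, dist_eq_norm] at hx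
    have : max 0 (1 - ‖x - p‖ / r) = 0 := by
      apply max_eq_left
      rw [sub_nonpos, le_div_iff₀ hr]; linarith
    simp [bumpMap, this]

theorem push_open (U : Set Plane) (hU : IsOpen U) (hc : IsPreconnected U) {p q : Plane}
    (hp : p ∈ U) (hq : q ∈ U) :
    ∃ φ : Plane ≃ₜ Plane, IsoId φ ∧ φ p = q ∧ ∀ x, x ∉ U → φ x = x := by
  refine hc.induction₂' (fun p q => ∃ φ : Plane ≃ₜ Plane, IsoId φ ∧ φ p = q ∧ ∀ x, x ∉ U → φ x = x)
    ?_ ?_ hp hq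
  · intro x hx
    obtain ⟨r, hr, hrU⟩ := Metric.isOpen_iff.1 hU x hx
    refine eventually_nhdsWithin_of_eventually_nhds ?_
    filter_upwards [Metric.ball_mem_nhds x hr] with y hy
    obtain ⟨φ, h1, h2, h3⟩ := ball_push x r (y - x) (by simpa [dist_eq_norm] using hy)
    have h2' : φ x = y := by rw [h2]; abel
    refine ⟨⟨φ, h1, h2', fun z hz => h3 z (fun h => hz (hrU h))⟩, φ.symm, h1.symm, ?_, ?_⟩
    · rw [← h2']; simp
    · intro z hz
      rw [Homeomorph.symm_apply_eq]
      exact (h3 z (fun h => hz (hrU h))).symm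
  · rintro x y z _ _ _ ⟨φ, a1, a2, a3⟩ ⟨ψ, b1, b2, b3⟩
    refine ⟨φ.trans ψ, a1.trans b1, by simp [a2, b2], fun w hw => ?_⟩
    simp [a3 w hw, b3 w hw]

theorem conn_nhd (K O : Set Plane) (hK : IsCompact K) (hc : IsPreconnected K) (hO : IsOpen O)
    (hKO : K ⊆ O) (hne : K.Nonempty) : ∃ U, IsOpen U ∧ IsPreconnected U ∧ K ⊆ U ∧ U ⊆ O := by
  obtain ⟨δ, hδ, hs⟩ := hK.exists_thickening_subset_open hO hKO
  refine ⟨_, Metric.isOpen_thickening, ?_, Metric.self_subset_thickening hδ K, hs⟩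
  obtain ⟨x0, hx0⟩ := hne
  refine isPreconnected_of_forall x0 fun y hy => ?_
  rw [Metric.mem_thickening_iff] at hy
  obtain ⟨z, hz, hyz⟩ := hy
  refine ⟨K ∪ Metric.ball z δ, ?_, Or.inl hx0, Or.inr hyz, ?_⟩
  · apply union_subset (Metric.self_subset_thickening hδ K)
    exact Metric.ball_subset_thickening hz δ
  · exact IsPreconnected.union z hz (Metric.mem_ball_self hδ) hc (convex_ball z δ).isPreconnected

theorem free_nhd (f : Plane ≃ₜ Plane) (K O : Set Plane) (hK : IsCompact K) (hc : IsPreconnected K)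
    (hO : IsOpen O) (hKO : K ⊆ O) (hne : K.Nonempty) (hfree : ∀ x ∈ K, f x ∉ K) :
    ∃ U, IsOpen U ∧ IsPreconnected U ∧ K ⊆ U ∧ U ⊆ O ∧ ∀ x ∈ U, f x ∉ U := by
  have hd : Disjoint K (f '' K) := by
    rw [Set.disjoint_left]
    rintro _ hx ⟨y, hy, rfl⟩
    exact hfree y hy hx
  obtain ⟨O1, O2, ho1, ho2, h1, h2, hdd⟩ :=
    SeparatedNhds.of_isCompact_isCompact hK (hK.image f.continuous) hd
  obtain ⟨U, a1, a2, a3, a4⟩ := conn_nhd K (O ∩ O1 ∩ f ⁻¹' O2) hK hc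
    ((hO.inter ho1).inter (ho2.preimage f.continuous))
    (fun x hx => ⟨⟨hKO hx, h1 hx⟩, h2 ⟨x, hx, rfl⟩⟩) hne
  refine ⟨U, a1, a2, a3, fun x hx => (a4 hx).1.1, fun x hx hfx => ?_⟩
  exact Set.disjoint_left.1 hdd (a4 hfx).1.2 (a4 hx).2

theorem push_free (f φ : Plane ≃ₜ Plane) (U : Set Plane) (hU : ∀ x ∈ U, f x ∉ U)
    (hφ : ∀ x, x ∉ U → φ x = x) (hfix : ∀ x, f x ≠ x) (x : Plane) : φ (f x) ≠ x := by
  intro h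
  by_cases hx : f x ∈ U
  · have hxU : x ∉ U := fun h' => hU x h' hx
    have := hφ x hxU
    rw [← h] at this
    have := φ.injective this
    rw [h] at this
    exact hfix x this.symm
  · rw [hφ _ hx] at h
    exact hfix x h

theorem push_compact (f : Plane ≃ₜ Plane) (hfix : ∀ x, f x ≠ x) (K O : Set Plane)
    (hK : IsCompact K) (hc : IsPreconnected K)
    (hO : IsOpen O) (hKO : K ⊆ O) (hfree : ∀ x ∈ K, f x ∉ K) {p q : Plane} (hp : p ∈ K)
    (hq : q ∈ K) :
    ∃ φ : Plane ≃ₜ Plane, IsoId φ ∧ φ p = q ∧ (∀ x, x ∉ O → φ x = x) ∧ ∀ x, φ (f x) ≠ x := by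
  obtain ⟨U, a1, a2, a3, a4, a5⟩ := free_nhd f K O hK hc hO hKO ⟨p, hp⟩ hfree
  obtain ⟨φ, b1, b2, b3⟩ := push_open U a1 a2 (a3 hp) (a3 hq)
  exact ⟨φ, b1, b2, fun x hx => b3 x (fun h => hx (a4 h)), push_free f φ U a5 b3 hfix⟩

theorem free2 (f : Plane ≃ₜ Plane) (hf : IsoId f) (hfix : ∀ x, f x ≠ x) (K : Set Plane)
    (hK : IsCompact K) (hc : IsPreconnected K) (hfree : ∀ x ∈ K, f x ∉ K) {u : Plane}
    (hu : u ∈ K) : f (f u) ∉ K := by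
  intro hv
  obtain ⟨φ, h1, h2, h3, h4⟩ := push_compact f hfix K {f u}ᶜ hK hc isOpen_compl_singleton
    (fun x hx h => hfree u hu (by rw [mem_singleton_iff] at h; rwa [← h])) hfree hv hu
  have e : φ (f u) = f u := h3 _ (by simp)
  exact period2 (f.trans φ) (hf.trans h1) (fun x => h4 x) u (by simp [e, h2])

theorem brouwer_step (m : ℕ) (hm : 2 ≤ m)
    (IH : ∀ m' < m, 1 ≤ m' → ∀ g : Plane ≃ₜ Plane, IsoId g → (∀ x, g x ≠ x) →
      ∀ x, g^[m'] x ≠ x)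
    (f : Plane ≃ₜ Plane) (hf : IsoId f) (hfix : ∀ x, f x ≠ x) (x0 : Plane) (hx : f^[m] x0 = x0)
    (σ : ℝ → Plane) (hσ : Continuous σ) (hσ0 : σ 0 = x0) (s t : ℝ) (hs : 0 ≤ s) (hst : s < t)
    (hc : f (σ s) = σ t)
    (hfree : ∀ u v, 0 ≤ u → u < t → 0 ≤ v → v < t → f (σ u) ≠ σ v) : False := by
  have Kc : ∀ a b, IsCompact (σ '' Icc a b) := fun a b => isCompact_Icc.image hσ
  have Kp : ∀ a b, IsPreconnected (σ '' Icc a b) := fun a b =>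
    isPreconnected_Icc.image σ hσ.continuousOn
  -- no orbit point on the free half-open arc
  have A : ∀ i, 1 ≤ i → i < m → ∀ r, 0 ≤ r → r < t → f^[i] x0 ≠ σ r := by
    intro i
    induction i using Nat.strong_induction_on with
    | _ i ih =>
      intro hi1 him r hr hrt he
      have hKfree : ∀ x ∈ σ '' Icc 0 r, f x ∉ σ '' Icc 0 r := by
        rintro _ ⟨u, ⟨hu0, hur⟩, rfl⟩ ⟨v, ⟨hv0, hvr⟩, h⟩
        exact hfree u v hu0 (hur.trans_lt hrt) hv0 (hvr.trans_lt hrt) h.symm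
      set S : Set Plane := (fun j => f^[j] x0) '' {j | 1 ≤ j ∧ j < i} with hS
      have Sfin : S.Finite := ((Set.finite_lt_nat i).subset (fun j hj => hj.2)).image _
      obtain ⟨φ, h1, h2, h3, h4⟩ := push_compact f hfix (σ '' Icc 0 r) Sᶜ (Kc _ _) (Kp _ _)
        Sfin.isClosed.isOpen_compl
        (by
          rintro _ ⟨u, ⟨hu0, hur⟩, rfl⟩ ⟨j, ⟨hj1, hji⟩, hj⟩
          exact ih j hji hj1 (hji.trans him) u hu0 (hur.trans_lt hrt) hj)
        hKfree (p := f^[i] x0) (q := x0) ⟨r, ⟨hr, le_rfl⟩, he.symm⟩ ⟨0, ⟨le_rfl, hr⟩, hσ0⟩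
      have hit : ∀ j, j < i → (f.trans φ)^[j] x0 = f^[j] x0 := by
        intro j
        induction j with
        | zero => intro _; rfl
        | succ j jh =>
          intro hj
          rw [Function.iterate_succ_apply', jh (by omega)]
          show φ (f (f^[j] x0)) = _
          rw [← Function.iterate_succ_apply' f]
          exact h3 _ (fun h => h ⟨j + 1, ⟨by omega, hj⟩, rfl⟩)
      refine IH i him hi1 (f.trans φ) (hf.trans h1) (fun x => h4 x) x0 ?_
      obtain ⟨k, rfl⟩ : ∃ k, i = k + 1 := ⟨i - 1, by omega⟩
      rw [Function.iterate_succ_apply', hit k (by omega)]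
      show φ (f (f^[k] x0)) = _
      rw [← Function.iterate_succ_apply' f]
      exact h2
  have t0 : 0 < t := hs.trans_lt hst
  -- f² (σ [0,s]) misses σ [0,t]
  have B : ∀ u, 0 ≤ u → u ≤ s → ∀ r, 0 ≤ r → r ≤ t → f (f (σ u)) ≠ σ r := by
    intro u hu0 hus r hr0 hrt he
    rcases hrt.lt_or_eq with hlt | rfl
    · refine free2 f hf hfix (σ '' Icc 0 (max u r)) (Kc _ _) (Kp _ _) ?_
        (u := σ u) ⟨u, ⟨hu0, le_max_left _ _⟩, rfl⟩ ⟨r, ⟨hr0, le_max_right _ _⟩, he.symm⟩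
      rintro _ ⟨a, ⟨ha0, har⟩, rfl⟩ ⟨b, ⟨hb0, hbr⟩, h⟩
      have : max u r < t := max_lt (hus.trans_lt hst) hlt
      exact hfree a b ha0 (har.trans_lt this) hb0 (hbr.trans_lt this) h.symm
    · rw [← hc] at he
      exact hfree u s hu0 (hus.trans_lt hst) hs hst (f.injective he)
  have Bc : ∀ r, 0 ≤ r → r ≤ t → f (σ t) ≠ σ r := by
    intro r h0 h1; rw [← hc]; exact B s hs le_rfl r h0 h1
  -- choose η
  obtain ⟨t', ht's, ht't, ht'⟩ : ∃ t', 0 ≤ t' ∧ t' < t ∧ ∀ u, t' ≤ u → u ≤ t →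
      f (σ u) ∉ σ '' Icc 0 t := by
    have hop : IsOpen {u : ℝ | f (σ u) ∉ σ '' Icc 0 t} :=
      ((Kc 0 t).isClosed.preimage (f.continuous.comp hσ)).isOpen_compl
    have hmem : t ∈ {u : ℝ | f (σ u) ∉ σ '' Icc 0 t} := by
      rintro ⟨r, ⟨h0, h1⟩, h⟩; exact Bc r h0 h1 h.symm
    obtain ⟨δ, hδ, hb⟩ := Metric.isOpen_iff.1 hop t hmem
    refine ⟨max 0 (t - δ / 2), le_max_left _ _, max_lt t0 (by linarith), fun u hu hut => ?_⟩
    apply hb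
    rw [Metric.mem_ball, Real.dist_eq, abs_lt]
    have := (le_max_right 0 (t - δ / 2)).trans hu
    constructor <;> linarith
  set S : Set Plane := (fun j => f^[j] x0) '' {j | 2 ≤ j ∧ j < m} with hS
  have Sfin : S.Finite := ((Set.finite_lt_nat m).subset (fun j hj => hj.2)).image _
  have S1 : ∀ r, 0 ≤ r → r ≤ t → σ r ∉ S := by
    rintro r h0 h1 ⟨j, ⟨hj2, hjm⟩, hj⟩
    rcases h1.lt_or_eq with hlt | rfl
    · exact A j (by omega) hjm r h0 hlt hj
    · obtain ⟨k, rfl⟩ : ∃ k, j = k + 1 := ⟨j - 1, by omega⟩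
      simp only [Function.iterate_succ_apply', ← hc] at hj
      exact A k (by omega) (by omega) s hs hst (f.injective hj)
  have S2 : ∀ r, 0 ≤ r → r ≤ s → f (σ r) ∉ S := by
    rintro r h0 h1 ⟨j, ⟨hj2, hjm⟩, hj⟩
    obtain ⟨k, rfl⟩ : ∃ k, j = k + 1 := ⟨j - 1, by omega⟩
    simp only [Function.iterate_succ_apply'] at hj
    exact A k (by omega) (by omega) r h0 (h1.trans_lt hst) (f.injective hj)
  set K1 := σ '' Icc 0 t'
  set K2 := σ '' Icc t' t
  set K3 := f '' (σ '' Icc 0 s)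
  have K3c : IsCompact K3 := (Kc _ _).image f.continuous
  have K3p : IsPreconnected K3 := (Kp _ _).image f f.continuous.continuousOn
  have cl2 : IsClosed (f '' K2) := ((Kc _ _).image f.continuous).isClosed
  have cl3 : IsClosed (f '' K3) := (K3c.image f.continuous).isClosed
  -- first push
  obtain ⟨φ1, p1, p2, p3, p4⟩ := push_compact f hfix K1 (S ∪ (f '' K2 ∪ f '' K3))ᶜ
    (Kc _ _) (Kp _ _) (Sfin.isClosed.union (cl2.union cl3)).isOpen_compl
    (by
      rintro _ ⟨r, ⟨h0, h1⟩, rfl⟩ (h | ⟨_, ⟨u, ⟨h2, h3⟩, rfl⟩, h⟩ | ⟨_, ⟨_, ⟨u, ⟨h2, h3⟩, rfl⟩, rfl⟩, h⟩)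
      · exact S1 r h0 (h1.trans ht't.le) h
      · exact ht' u h2 h3 ⟨r, ⟨h0, h1.trans ht't.le⟩, h.symm⟩
      · exact B u h2 h3 r h0 (h1.trans ht't.le) h)
    (by
      rintro _ ⟨u, ⟨hu0, hur⟩, rfl⟩ ⟨v, ⟨hv0, hvr⟩, h⟩
      exact hfree u v hu0 (hur.trans_lt ht't) hv0 (hvr.trans_lt ht't) h.symm)
    (p := x0) (q := σ t') ⟨0, ⟨le_rfl, ht's⟩, hσ0⟩ ⟨t', ⟨ht's, le_rfl⟩, rfl⟩
  -- second push
  obtain ⟨φ2, q1, q2, q3, q4⟩ := push_compact (f.trans φ1) p4 K2 (S ∪ f '' K3)ᶜ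
    (Kc _ _) (Kp _ _) (Sfin.isClosed.union cl3).isOpen_compl
    (by
      rintro _ ⟨r, ⟨h0, h1⟩, rfl⟩ (h | ⟨_, ⟨_, ⟨u, ⟨h2, h3⟩, rfl⟩, rfl⟩, h⟩)
      · exact S1 r (ht's.trans h0) h1 h
      · exact B u h2 h3 r (ht's.trans h0) h1 h)
    (by
      rintro _ ⟨u, ⟨hu0, hur⟩, rfl⟩ ⟨v, ⟨hv0, hvr⟩, h⟩
      have e : φ1 (f (σ u)) = f (σ u) := p3 _ (fun h => h (Or.inr (Or.inl ⟨_, ⟨u, ⟨hu0, hur⟩, rfl⟩, rfl⟩)))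
      rw [Homeomorph.trans_apply, e] at h
      exact ht' u hu0 hur ⟨v, ⟨ht's.trans hv0, hvr⟩, h⟩)
    (p := σ t') (q := σ t) ⟨t', ⟨le_rfl, ht't.le⟩, rfl⟩ ⟨t, ⟨ht't.le, le_rfl⟩, rfl⟩
  -- third push
  obtain ⟨φ3, r1, r2, r3, r4⟩ := push_compact ((f.trans φ1).trans φ2) q4 K3 Sᶜ
    K3c K3p Sfin.isClosed.isOpen_compl
    (by
      rintro _ ⟨_, ⟨u, ⟨h2, h3⟩, rfl⟩, rfl⟩ h
      exact S2 u h2 h3 h)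
    (by
      rintro _ ⟨_, ⟨u, ⟨h2, h3⟩, rfl⟩, rfl⟩ ⟨_, ⟨v, ⟨h4, h5⟩, rfl⟩, h⟩
      have hm : f (f (σ u)) ∈ f '' K3 := ⟨_, ⟨_, ⟨u, ⟨h2, h3⟩, rfl⟩, rfl⟩, rfl⟩
      have e : φ1 (f (f (σ u))) = f (f (σ u)) := p3 _ (fun h => h (Or.inr (Or.inr hm)))
      have e2 : φ2 (f (f (σ u))) = f (f (σ u)) := q3 _ (fun h => h (Or.inr hm))
      rw [Homeomorph.trans_apply, Homeomorph.trans_apply, e, e2] at h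
      exact hfree u v h2 (h3.trans_lt hst) h4 (h5.trans_lt hst) (f.injective h).symm)
    (p := σ t) (q := f x0) ⟨_, ⟨s, ⟨hs, le_rfl⟩, rfl⟩, hc⟩ ⟨_, ⟨0, ⟨le_rfl, hs⟩, rfl⟩, by rw [hσ0]⟩
  set g := ((f.trans φ1).trans φ2).trans φ3 with hg
  have gi : IsoId g := ((hf.trans p1).trans q1).trans r1
  have gS : ∀ y, f y ∈ S → g y = f y := by
    intro y hy
    simp only [hg, Homeomorph.trans_apply]
    rw [p3 _ (fun h => h (Or.inl hy)), q3 _ (fun h => h (Or.inl hy)), r3 _ (fun h => h hy)]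
  have hit : ∀ j, j + 1 < m → g^[j] (f x0) = f^[j + 1] x0 := by
    intro j
    induction j with
    | zero => intro _; rfl
    | succ j jh =>
      intro hj
      rw [Function.iterate_succ_apply', jh (by omega), gS, ← Function.iterate_succ_apply' f]
      refine ⟨j + 2, ⟨by omega, hj⟩, ?_⟩
      simp only [Function.iterate_succ_apply']
  refine IH (m - 1) (by omega) (by omega) g gi (fun x => r4 x) (f x0) ?_
  obtain ⟨k, rfl⟩ : ∃ k, m = k + 2 := ⟨m - 2, by omega⟩
  rw [show k + 2 - 1 = k + 1 by omega, Function.iterate_succ_apply', hit k (by omega)]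
  have e : f (f^[k + 1] x0) = x0 := by rw [← Function.iterate_succ_apply' f]; exact hx
  simp only [hg, Homeomorph.trans_apply]
  rw [e, p2, q2, r2]

theorem brouwer (m : ℕ) (hm : 1 ≤ m) (f : Plane ≃ₜ Plane) (hf : IsoId f) (hfix : ∀ x, f x ≠ x)
    (x0 : Plane) : f^[m] x0 ≠ x0 := by
  induction m using Nat.strong_induction_on generalizing f x0 with
  | _ m IH =>
    intro hx
    have IH' : ∀ m' < m, 1 ≤ m' → ∀ g : Plane ≃ₜ Plane, IsoId g → (∀ x, g x ≠ x) →
      ∀ x, g^[m'] x ≠ x := fun m' h1 h2 g h3 h4 x => IH m' h1 h2 g h3 h4 x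
    rcases hm.eq_or_lt with rfl | hm2
    · exact hfix x0 hx
    let σ : ℝ → Plane := fun s => x0 + s • (f x0 - x0)
    have hσ : Continuous σ := by fun_prop
    have σ0 : σ 0 = x0 := by simp [σ]
    have σ1 : σ 1 = f x0 := by simp [σ]
    let Q : Set (ℝ × ℝ) := {q | (q.1 ∈ Icc (0:ℝ) 1 ∧ q.2 ∈ Icc (0:ℝ) 1) ∧ q.2 ≤ q.1 ∧
      (f (σ q.2) = σ q.1 ∨ f (σ q.1) = σ q.2)}
    have Qc : IsCompact Q := by
      have h1 : IsCompact (Icc (0:ℝ) 1 ×ˢ Icc (0:ℝ) 1) := isCompact_Icc.prod isCompact_Icc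
      refine h1.inter_right (t := {q : ℝ × ℝ | q.2 ≤ q.1 ∧
      (f (σ q.2) = σ q.1 ∨ f (σ q.1) = σ q.2)}) ?_
      refine (isClosed_le continuous_snd continuous_fst).inter
        ((isClosed_eq ?_ ?_).union (isClosed_eq ?_ ?_)) <;> fun_prop
    obtain ⟨t, ⟨⟨⟨t', s⟩, hQ, rfl⟩, hmin⟩⟩ := (Qc.image continuous_fst).exists_isLeast
      ⟨1, (1, 0), ⟨⟨by simp, by simp⟩, by simp, Or.inl (by simp only [σ0, σ1])⟩, rfl⟩
    simp only [Q, mem_ofPred_eq, mem_Icc] at hQ hmin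
    obtain ⟨⟨⟨ht0, ht1⟩, hs0, hs1⟩, hst, hor⟩ := hQ
    have hlt : s < t' := by
      rcases hst.lt_or_eq with h | rfl
      · exact h
      · rcases hor with h | h <;> exact absurd h (hfix _)
    have hfree : ∀ u v, 0 ≤ u → u < t' → 0 ≤ v → v < t' → f (σ u) ≠ σ v := by
      intro u v hu hut hv hvt he
      rcases le_total u v with huv | huv
      · have := hmin ⟨(v, u), ⟨⟨⟨by linarith, by simp; linarith⟩, by constructor <;> simp <;> linarith⟩, huv, Or.inl he⟩, rfl⟩
        simp at this; linarith
      · have := hmin ⟨(u, v), ⟨⟨⟨by linarith, by simp; linarith⟩, by constructor <;> simp <;> linarith⟩, huv, Or.inr he⟩, rfl⟩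
        simp at this; linarith
    rcases hor with h | h
    · exact brouwer_step m hm2 IH' f hf hfix x0 hx σ hσ σ0 s t' hs0 hlt h hfree
    · refine brouwer_step m hm2 IH' f.symm hf.symm ?_ x0 ?_ σ hσ σ0 s t' hs0 hlt ?_ ?_
      · intro x hx'
        exact hfix x (by rw [Homeomorph.symm_apply_eq] at hx'; exact hx'.symm)
      · have : Function.LeftInverse f.symm^[m] f^[m] :=
          Function.LeftInverse.iterate (fun x => f.symm_apply_apply x) m
        have h2 := this x0
        rw [hx] at h2; exact h2
      · rw [Homeomorph.symm_apply_eq]; exact h.symm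
      · intro u v hu hut hv hvt he
        rw [Homeomorph.symm_apply_eq] at he
        exact hfree v u hv hvt hu hut he.symm

/-- One-step relation between tiles. -/
def RG {ι : Type*} (G : Plane ≃ₜ Plane) (b : ι → Set Plane) (i j : ι) : Prop :=
  ∃ x ∈ b i, G x ∈ b j

/-- walks of given length -/
def Walk {ι : Type*} (R : ι → ι → Prop) : ℕ → ι → ι → Prop
  | 0, i, j => i = j
  | n + 1, i, j => ∃ k, R i k ∧ Walk R n k j

theorem Walk.add {ι : Type*} {R : ι → ι → Prop} {m n : ℕ} {i j k : ι} (h1 : Walk R m i j)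
    (h2 : Walk R n j k) : Walk R (m + n) i k := by
  induction m generalizing i with
  | zero => cases h1; simpa using h2
  | succ m ih =>
    obtain ⟨l, hl, h⟩ := h1
    rw [show m + 1 + n = (m + n) + 1 by omega]
    exact ⟨l, hl, ih h⟩

theorem Walk.of_transGen {ι : Type*} {R : ι → ι → Prop} {i j : ι} (h : Relation.TransGen R i j) :
    ∃ n, 1 ≤ n ∧ Walk R n i j := by
  induction h with
  | single h => exact ⟨1, le_rfl, _, h, rfl⟩
  | tail _ h ih =>
    obtain ⟨n, hn, hw⟩ := ih
    exact ⟨n + 1, by omega, hw.add ⟨_, h, rfl⟩⟩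

theorem Walk.seq {ι : Type*} {R : ι → ι → Prop} {m : ℕ} {i j : ι} (h : Walk R m i j) :
    ∃ c : ℕ → ι, c 0 = i ∧ c m = j ∧ ∀ k < m, R (c k) (c (k + 1)) := by
  induction m generalizing i with
  | zero => exact ⟨fun _ => i, rfl, h, by simp⟩
  | succ m ih =>
    obtain ⟨l, hl, h⟩ := h
    obtain ⟨c, c0, cm, hc⟩ := ih h
    refine ⟨fun k => Nat.casesOn k i c, rfl, cm, ?_⟩
    rintro (_ | k) hk
    · simpa [c0] using hl
    · exact hc k (by omega)

theorem Walk.slice {ι : Type*} {R : ι → ι → Prop} {m : ℕ} {c : ℕ → ι}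
    (hc : ∀ k < m, R (c k) (c (k + 1))) {k n : ℕ} (h : k + n ≤ m) : Walk R n (c k) (c (k + n)) := by
  induction n generalizing k with
  | zero => rfl
  | succ n ih =>
    refine ⟨c (k + 1), hc k (by omega), ?_⟩
    have := ih (k := k + 1) (by omega)
    rwa [show k + 1 + n = k + (n + 1) by omega] at this

theorem Walk.slice' {ι : Type*} {R : ι → ι → Prop} {m : ℕ} {c : ℕ → ι}
    (hc : ∀ k < m, R (c k) (c (k + 1))) {k l : ℕ} (hkl : k ≤ l) (h : l ≤ m) :
    Walk R (l - k) (c k) (c l) := by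
  have := Walk.slice hc (k := k) (n := l - k) (by omega)
  rwa [show k + (l - k) = l by omega] at this

theorem sim_push (G : Plane ≃ₜ Plane) (hG : IsoId G) (hfix : ∀ x, G x ≠ x) (m : ℕ)
    (K : ℕ → Set Plane) (hK : ∀ k, IsCompact (K k)) (hc : ∀ k, IsPreconnected (K k))
    (hfree : ∀ k < m, ∀ x ∈ K k, G x ∉ K k)
    (hd : ∀ k < m, ∀ l < m, k ≠ l → Disjoint (K k) (K l)) (e y : ℕ → Plane)
    (he : ∀ k < m, e k ∈ K k) (hy : ∀ k < m, y k ∈ K k) (n : ℕ) (hn : n ≤ m) :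
    ∃ φ : Plane ≃ₜ Plane, IsoId φ ∧ (∀ k < n, φ (e k) = y k) ∧
      (∀ l, n ≤ l → l < m → ∀ x ∈ K l, φ x = x) ∧ ∀ x, φ (G x) ≠ x := by
  induction n with
  | zero => exact ⟨Homeomorph.refl _, IsoId.refl, by simp, fun _ _ _ _ _ => rfl, hfix⟩
  | succ n ih =>
    obtain ⟨φ, h1, h2, h3, h4⟩ := ih (by omega)
    have hcl : IsClosed (⋃ l ∈ {l | l < m ∧ l ≠ n}, K l) :=
      Set.Finite.isClosed_biUnion ((Set.finite_lt_nat m).subset (fun l hl => hl.1))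
        (fun l _ => (hK l).isClosed)
    obtain ⟨ψ, p1, p2, p3, p4⟩ := push_compact (G.trans φ) h4 (K n)
      (⋃ l ∈ {l | l < m ∧ l ≠ n}, K l)ᶜ (hK n) (hc n) hcl.isOpen_compl
      (by
        intro x hx hx'
        simp only [mem_iUnion] at hx'
        obtain ⟨l, ⟨hl, hln⟩, hxl⟩ := hx'
        exact Set.disjoint_left.1 (hd l hl n (by omega) hln) hxl hx)
      (by
        intro x hx hx'
        have e1 : φ (φ (G x)) = φ (G x) := h3 n le_rfl (by omega) _ hx'
        have e2 := φ.injective e1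
        rw [Homeomorph.trans_apply, e2] at hx'
        exact hfree n (by omega) x hx hx')
      (he n (by omega)) (hy n (by omega))
    have p3' : ∀ l < m, l ≠ n → ∀ x ∈ K l, ψ x = x := by
      intro l hl hln x hx
      refine p3 x (fun h => h ?_)
      simp only [mem_iUnion]
      exact ⟨l, ⟨hl, hln⟩, hx⟩
    refine ⟨φ.trans ψ, h1.trans p1, ?_, ?_, p4⟩
    · intro k hk
      rw [Homeomorph.trans_apply]
      rcases Nat.lt_succ_iff_lt_or_eq.1 hk with hk | rfl
      · rw [h2 k hk, p3' k (by omega) (by omega) _ (hy k (by omega))]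
      · rw [h3 k le_rfl (by omega) _ (he k (by omega)), p2]
    · intro l hl hlm x hx
      rw [Homeomorph.trans_apply, h3 l (by omega) hlm x hx, p3' l hlm (by omega) x hx]

theorem franks {ι : Type*} (G : Plane ≃ₜ Plane) (hG : IsoId G) (hfix : ∀ x, G x ≠ x)
    (b : ι → Set Plane) (hfree : ∀ i, ∀ x ∈ b i, G x ∉ b i)
    (hpath : ∀ i, ∀ x ∈ b i, ∀ y ∈ b i, ∃ K : Set Plane, IsCompact K ∧ IsPreconnected K ∧ x ∈ K ∧
      y ∈ K ∧ K ⊆ b i ∧ ∀ j, j ≠ i → ∀ z ∈ K, z ∈ b j → z = x ∨ z = y) (i : ι) :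
    ¬ Relation.TransGen (RG G b) i i := by
  intro hT
  obtain ⟨n0, hn0, hw0⟩ := Walk.of_transGen hT
  classical
  have hex : ∃ m, 1 ≤ m ∧ ∃ i, Walk (RG G b) m i i := ⟨n0, hn0, i, hw0⟩
  set m := Nat.find hex with hm
  obtain ⟨hm1, i0, hw⟩ := Nat.find_spec hex
  rw [← hm] at hm1 hw
  have hmin : ∀ n, 1 ≤ n → n < m → ∀ i, ¬ Walk (RG G b) n i i := by
    intro n h1 h2 i h
    exact Nat.find_min hex h2 ⟨h1, i, h⟩
  obtain ⟨c, c0, cm, hc⟩ := hw.seq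
  have hx : ∀ k, ∃ x, k < m → x ∈ b (c k) ∧ G x ∈ b (c (k + 1)) := by
    intro k
    by_cases hk : k < m
    · obtain ⟨x, h1, h2⟩ := hc k hk; exact ⟨x, fun _ => ⟨h1, h2⟩⟩
    · exact ⟨0, fun h => absurd h hk⟩
  choose x hx using hx
  have hcm : c m = c 0 := by rw [c0, cm]
  -- x_l not in other tiles
  have C1 : ∀ l < m, ∀ k, 1 ≤ k → k ≤ m → l ≠ k → ¬ (l = 0 ∧ k = m) → x l ∉ b (c k) := by
    intro l hl k hk1 hkm hlk hne hxb
    have w1 : Walk (RG G b) 1 (c k) (c (l + 1)) := ⟨_, ⟨x l, hxb, (hx l hl).2⟩, rfl⟩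
    rcases lt_or_gt_of_ne hlk with h | h
    · have w2 := w1.add (Walk.slice' hc (k := l + 1) (l := k) (by omega) hkm)
      exact hmin _ (by omega) (by omega) _ w2
    · have w2 := w1.add (Walk.slice' hc (k := l + 1) (l := m) (by omega) le_rfl)
      rw [hcm] at w2
      have w3 := w2.add (Walk.slice' hc (k := 0) (l := k) (by omega) hkm)
      exact hmin _ (by omega) (by omega) _ w3
  have C2 : ∀ l < m, ∀ k, 1 ≤ k → k ≤ m → l + 1 ≠ k → G (x l) ∉ b (c k) := by
    intro l hl k hk1 hkm hlk hxb
    have w1 : Walk (RG G b) 1 (c l) (c k) := ⟨_, ⟨x l, (hx l hl).1, hxb⟩, rfl⟩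
    rcases lt_or_gt_of_ne hlk with h | h
    · have w2 := w1.add (Walk.slice' hc (k := k) (l := m) (by omega) le_rfl)
      rw [hcm] at w2
      have w3 := w2.add (Walk.slice' hc (k := 0) (l := l) (by omega) (by omega))
      exact hmin _ (by omega) (by omega) _ w3
    · have w2 := w1.add (Walk.slice' hc (k := k) (l := l) (by omega) (by omega))
      exact hmin _ (by omega) (by omega) _ w2
  let X : ℕ → Plane := fun j => if j = m then x 0 else x j
  have Xmem : ∀ j < m, X (j + 1) ∈ b (c (j + 1)) := by
    intro j hj
    by_cases h : j + 1 = m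
    · simp only [X, h, if_true, hcm]; exact (hx 0 (by omega)).1
    · simp only [X, h, if_false]; exact (hx (j + 1) (by omega)).1
  have Xnot : ∀ j < m, ∀ k < m, j ≠ k → X (j + 1) ∉ b (c (k + 1)) := by
    intro j hj k hk hjk
    by_cases h : j + 1 = m
    · simp only [X, h, if_true]; exact C1 0 (by omega) (k + 1) (by omega) (by omega) (by omega) (by omega)
    · simp only [X, h, if_false]; exact C1 (j + 1) (by omega) (k + 1) (by omega) (by omega) (by omega) (by omega)
  have hKe : ∀ j, ∃ K : Set Plane, IsCompact K ∧ IsPreconnected K ∧ (j < m → G (x j) ∈ K ∧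
      X (j + 1) ∈ K ∧ K ⊆ b (c (j + 1)) ∧ ∀ k, k ≠ c (j + 1) → ∀ z ∈ K, z ∈ b k →
        z = G (x j) ∨ z = X (j + 1)) := by
    intro j
    by_cases hj : j < m
    · obtain ⟨K, a1, a2, a3, a4, a5, a6⟩ := hpath (c (j + 1)) _ (hx j hj).2 _ (Xmem j hj)
      exact ⟨K, a1, a2, fun _ => ⟨a3, a4, a5, a6⟩⟩
    · exact ⟨∅, isCompact_empty, isPreconnected_empty, fun h => absurd h hj⟩
  choose K K1 K2 K3 using hKe
  have hd : ∀ k < m, ∀ l < m, k ≠ l → Disjoint (K k) (K l) := by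
    intro k hk l hl hkl
    rw [Set.disjoint_left]
    intro z hzk hzl
    have hzb := (K3 l hl).2.2.1 hzl
    have hne : c (l + 1) ≠ c (k + 1) := by
      intro h
      apply Xnot l hl k hk hkl.symm
      rw [← h]; exact Xmem l hl
    rcases (K3 k hk).2.2.2 _ hne z hzk hzb with rfl | rfl
    · exact C2 k hk (l + 1) (by omega) (by omega) (by omega) hzb
    · exact Xnot k hk l hl hkl hzb
  obtain ⟨φ, f1, f2, -, f4⟩ := sim_push G hG hfix m K K1 K2
    (fun k hk z hz hz' => hfree _ z ((K3 k hk).2.2.1 hz) ((K3 k hk).2.2.1 hz')) hd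
    (fun j => G (x j)) (fun j => X (j + 1)) (fun k hk => (K3 k hk).1) (fun k hk => (K3 k hk).2.1)
    m le_rfl
  have hit : ∀ j, j ≤ m → (G.trans φ)^[j] (x 0) = X j := by
    intro j
    induction j with
    | zero => intro _; simp [X]
    | succ j ih =>
      intro hj
      rw [Function.iterate_succ_apply', ih (by omega)]
      have : X j = x j := by simp [X]; omega
      rw [this]
      exact f2 j (by omega)
  refine brouwer m hm1 (G.trans φ) (hG.trans f1) f4 (x 0) ?_
  rw [hit m le_rfl]; simp [X]

theorem orbit_chain {ι : Type*} (G : Plane ≃ₜ Plane) (b : ι → Set Plane)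
    (hcov : ∀ x, ∃ i, x ∈ b i) {n : ℕ} (hn : 1 ≤ n) {x : Plane} {i j : ι} (hx : x ∈ b i)
    (hy : G^[n] x ∈ b j) : Relation.TransGen (RG G b) i j := by
  induction n, hn using Nat.le_induction generalizing x i with
  | base => exact Relation.TransGen.single ⟨x, hx, hy⟩
  | succ n hn ih =>
    obtain ⟨k, hk⟩ := hcov (G x)
    exact Relation.TransGen.head ⟨x, hx, hk⟩ (ih hk hy)

/-- commutation with the deck group -/
def CommT (G : Plane → Plane) : Prop := ∀ (k : ℤ) p, G (Tr k p) = Tr k (G p)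

@[simp] theorem Tr_zero (p : Plane) : Tr 0 p = p := by simp [Tr]
@[simp] theorem Tr_Tr (k l : ℤ) (p : Plane) : Tr k (Tr l p) = Tr (k + l) p := by
  simp [Tr]; ring
theorem Tr_cont (k : ℤ) : Continuous (Tr k) := by unfold Tr; fun_prop

theorem CommT.iter {G : Plane → Plane} (h : CommT G) (n : ℕ) : CommT G^[n] := by
  intro k p
  induction n generalizing p with
  | zero => rfl
  | succ n ih => rw [Function.iterate_succ_apply, h, ih, Function.iterate_succ_apply]

/-- T as a homeomorphism -/
def TrH (k : ℤ) : Plane ≃ₜ Plane where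
  toFun := Tr k
  invFun := Tr (-k)
  left_inv p := by simp
  right_inv p := by simp
  continuous_toFun := Tr_cont _
  continuous_invFun := Tr_cont _

theorem dl_lemma (G : Plane ≃ₜ Plane) (hG : IsoId G) (hfix : ∀ x, G x ≠ x) (hcomm : CommT G)
    (D : Set Plane) (hconv : Convex ℝ D) (hDT : ∀ j : ℤ, j ≠ 0 → ∀ x ∈ D, Tr j x ∉ D)
    (hDf : ∀ x ∈ D, G x ∉ D) (x x' : Plane) (hx : x ∈ D) (hx' : x' ∈ D) (m m' : ℕ) (hm : 1 ≤ m)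
    (hm' : 1 ≤ m') (k k' : ℤ) (hk : 0 ≤ k) (hk' : 0 ≤ k') (h1 : Tr (-k) (G^[m] x) ∈ D)
    (h2 : Tr k' (G^[m'] x') ∈ D) : False := by
  let ι := ℤ ⊕ {x : Plane // ∀ j : ℤ, Tr j x ∉ D}
  let b : ι → Set Plane := fun i => Sum.elim (fun j => {p | Tr (-j) p ∈ D}) (fun x => {x.1}) i
  have hcov : ∀ x, ∃ i, x ∈ b i := by
    intro x
    by_cases h : ∀ j : ℤ, Tr j x ∉ D
    · exact ⟨Sum.inr ⟨x, h⟩, rfl⟩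
    · push Not at h
      obtain ⟨j, hj⟩ := h
      refine ⟨Sum.inl (-j), ?_⟩
      show Tr (- -j) x ∈ D
      simpa using hj
  have disj : ∀ i j : ι, i ≠ j → ∀ z ∈ b i, z ∉ b j := by
    rintro (i | i) (j | j) hij z hi hj
    · have hi' : Tr (-i) z ∈ D := hi
      have hj' : Tr (-j) z ∈ D := hj
      refine hDT (-j + i) (fun h => hij ?_) _ hi' ?_
      · congr 1; omega
      · rw [Tr_Tr]; simpa using hj'
    · have hj' : z = j.1 := hj
      subst hj'; exact j.2 _ hi
    · have hi' : z = i.1 := hi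
      subst hi'; exact i.2 _ hj
    · have hj' : z = j.1 := hj
      have hi' : z = i.1 := hi
      exact hij (congrArg Sum.inr (Subtype.ext (hi'.symm.trans hj')))
  have F := franks G hG hfix b (by
      rintro (i | i) z hz hz'
      · have hz'' : Tr (-i) (G z) ∈ D := hz'
        rw [← hcomm] at hz''
        exact hDf _ hz hz''
      · have e1 : z = i.1 := hz
        have e2 : G z = i.1 := hz'
        exact hfix z (e2.trans e1.symm)) (by
      rintro (i | i) u hu v hv
      · refine ⟨segment ℝ u v, ?_, (convex_segment u v).isPreconnected, left_mem_segment _ _ _,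
          right_mem_segment _ _ _, ?_, ?_⟩
        · rw [segment_eq_image]
          exact isCompact_Icc.image (by fun_prop)
        · intro z hz
          have hz' := hz
          obtain ⟨p, q, hp, hq, hpq, rfl⟩ := hz
          have := hconv hu hv hp hq hpq
          show Tr (-i) _ ∈ D
          convert this using 1
          ext <;> simp [Tr]
          linear_combination (i:ℝ) * hpq
        · intro j hj z hz hzj
          exfalso
          refine disj _ _ hj z hzj ?_
          obtain ⟨p, q, hp, hq, hpq, rfl⟩ := hz
          have := hconv hu hv hp hq hpq
          show Tr (-i) _ ∈ D
          convert this using 1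
          ext <;> simp [Tr]
          linear_combination (i:ℝ) * hpq
      · have e1 : u = i.1 := hu
        have e2 : v = i.1 := hv
        refine ⟨{u}, isCompact_singleton, isPreconnected_singleton, rfl, ?_, ?_, ?_⟩
        · rw [e1, e2]; rfl
        · rw [e1]; exact subset_rfl
        · intro j hj z hz _; left; exact hz)
  have L1 : ∀ a : ℤ, Relation.TransGen (RG G b) (Sum.inl a) (Sum.inl (a + k)) := by
    intro a
    refine orbit_chain G b hcov hm (x := Tr a x) ?_ ?_
    · show Tr (-a) (Tr a x) ∈ D; simpa using hx
    · show Tr (-(a + k)) (G^[m] (Tr a x)) ∈ D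
      rw [hcomm.iter m, Tr_Tr]; simpa using h1
  have L2 : ∀ a : ℤ, Relation.TransGen (RG G b) (Sum.inl a) (Sum.inl (a - k')) := by
    intro a
    refine orbit_chain G b hcov hm' (x := Tr a x') ?_ ?_
    · show Tr (-a) (Tr a x') ∈ D; simpa using hx'
    · show Tr (-(a - k')) (G^[m'] (Tr a x')) ∈ D
      rw [hcomm.iter m', Tr_Tr]; simpa using h2
  have L1' : ∀ n : ℕ, ∀ a : ℤ, Relation.TransGen (RG G b) (Sum.inl a) (Sum.inl (a + (n + 1) * k)) := by
    intro n
    induction n with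
    | zero => intro a; simpa using L1 a
    | succ n ih =>
      intro a
      have := (ih a).trans (L1 _)
      convert this using 2
      push_cast; ring
  have L2' : ∀ n : ℕ, ∀ a : ℤ, Relation.TransGen (RG G b) (Sum.inl a) (Sum.inl (a - (n + 1) * k')) := by
    intro n
    induction n with
    | zero => intro a; simpa using L2 a
    | succ n ih =>
      intro a
      have := (ih a).trans (L2 _)
      convert this using 2
      push_cast; ring
  rcases hk.eq_or_lt with rfl | hk
  · exact F _ (by simpa using L1 0)
  rcases hk'.eq_or_lt with rfl | hk'
  · exact F _ (by simpa using L2 0)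
  have a1 := L1' (k'.toNat - 1) 0
  have a2 := L2' (k.toNat - 1) (0 + ((k'.toNat - 1 : ℕ) + 1) * k)
  have a3 := a1.trans a2
  apply F (Sum.inl 0)
  convert a3 using 2
  have e1 : ((k'.toNat - 1 : ℕ) : ℤ) + 1 = k' := by omega
  have e2 : ((k.toNat - 1 : ℕ) : ℤ) + 1 = k := by omega
  rw [e1, e2]; ring

theorem dl0 (G : Plane ≃ₜ Plane) (hG : IsoId G) (hfix : ∀ x, G x ≠ x) 
    (D : Set Plane) (hconv : Convex ℝ D)
    (hDf : ∀ x ∈ D, G x ∉ D) (x : Plane) (hx : x ∈ D) (m : ℕ) (hm : 1 ≤ m)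
    (h1 : G^[m] x ∈ D) : False := by
  let b : Option {x : Plane // x ∉ D} → Set Plane := fun i => i.elim D (fun x => {x.1})
  have hcov : ∀ x, ∃ i, x ∈ b i := by
    intro x
    by_cases h : x ∈ D
    · exact ⟨none, h⟩
    · exact ⟨some ⟨x, h⟩, rfl⟩
  refine franks G hG hfix b ?_ ?_ none (orbit_chain G b hcov hm (x := x) hx h1)
  · rintro (_ | i) z hz hz'
    · exact hDf _ hz hz'
    · have e1 : z = i.1 := hz
      have e2 : G z = i.1 := hz'
      exact hfix z (e2.trans e1.symm)
  · rintro (_ | i) u hu v hv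
    · refine ⟨segment ℝ u v, ?_, (convex_segment u v).isPreconnected, left_mem_segment _ _ _,
          right_mem_segment _ _ _, hconv.segment_subset hu hv, ?_⟩
      · rw [segment_eq_image]
        exact isCompact_Icc.image (by fun_prop)
      · rintro (_ | j) hj z hz hzj
        · exact absurd rfl hj
        · exfalso
          have e : z = j.1 := hzj
          apply j.2
          rw [← e]
          exact hconv.segment_subset hu hv hz
    · have e1 : u = i.1 := hu
      have e2 : v = i.1 := hv
      refine ⟨{u}, isCompact_singleton, isPreconnected_singleton, rfl, ?_, ?_, ?_⟩
      · rw [e1, e2]; rfl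
      · rw [e1]; exact subset_rfl
      · intro j hj z hz _; left; exact hz

/-- indices of tiles -/
abbrev TI := ℤ × ℤ × ℤ

/-- tiles: squares of side 1/N_j in the row j -/
def tile (N : ℤ → ℕ) (τ : TI) : Set Plane :=
  {p | (N τ.1 : ℤ) * τ.1 ≤ τ.2.2 ∧ τ.2.2 < N τ.1 * (τ.1 + 1) ∧
    (τ.2.1 : ℝ) ≤ N τ.1 * p.1 ∧ N τ.1 * p.1 ≤ τ.2.1 + 1 ∧
    (τ.2.2 : ℝ) ≤ N τ.1 * p.2 ∧ N τ.1 * p.2 ≤ τ.2.2 + 1}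

/-- translation of tile indices -/
def act (N : ℤ → ℕ) (k : ℤ) (τ : TI) : TI := (τ.1, τ.2.1 + k * N τ.1, τ.2.2)

theorem act_act (N : ℤ → ℕ) (k l : ℤ) (τ : TI) : act N k (act N l τ) = act N (k + l) τ := by
  simp only [act]; ext <;> simp; ring

theorem act_zero (N : ℤ → ℕ) (τ : TI) : act N 0 τ = τ := by simp [act]

theorem tile_act (N : ℤ → ℕ) (k : ℤ) (τ : TI) (p : Plane) :
    Tr k p ∈ tile N (act N k τ) ↔ p ∈ tile N τ := by
  simp only [tile, act, Tr, mem_ofPred_eq]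
  push_cast
  constructor
  · rintro ⟨h1, h2, h3, h4, h5, h6⟩
    refine ⟨h1, h2, ?_, ?_, h5, h6⟩ <;> nlinarith
  · rintro ⟨h1, h2, h3, h4, h5, h6⟩
    refine ⟨h1, h2, ?_, ?_, h5, h6⟩ <;> nlinarith

theorem tile_row {N : ℤ → ℕ} (hN : ∀ j, 1 ≤ N j) {τ : TI} {p : Plane} (h : p ∈ tile N τ) :
    (τ.1 : ℝ) ≤ p.2 ∧ p.2 ≤ τ.1 + 1 := by
  obtain ⟨h1, h2, h3, h4, h5, h6⟩ := h
  have n0 : (0:ℝ) < N τ.1 := by exact_mod_cast hN _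
  have h1' : (N τ.1 : ℝ) * τ.1 ≤ τ.2.2 := by exact_mod_cast h1
  have h2' : (τ.2.2 : ℝ) + 1 ≤ N τ.1 * (τ.1 + 1) := by exact_mod_cast h2
  constructor
  · exact le_of_mul_le_mul_left (h1'.trans h5) n0
  · exact le_of_mul_le_mul_left (h6.trans h2') n0

theorem tile_cover {N : ℤ → ℕ} (hN : ∀ j, 1 ≤ N j) (p : Plane) : ∃ τ, p ∈ tile N τ := by
  have n0 : (0:ℝ) < N ⌊p.2⌋ := by exact_mod_cast hN _
  refine ⟨(⌊p.2⌋, ⌊(N ⌊p.2⌋ : ℝ) * p.1⌋, ⌊(N ⌊p.2⌋ : ℝ) * p.2⌋), ?_, ?_, Int.floor_le _,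
    (Int.lt_floor_add_one _).le, Int.floor_le _, (Int.lt_floor_add_one _).le⟩
  · rw [Int.le_floor]; push_cast
    exact mul_le_mul_of_nonneg_left (Int.floor_le _) n0.le
  · rw [Int.floor_lt]; push_cast
    exact mul_lt_mul_of_pos_left (Int.lt_floor_add_one _) n0

theorem tile_closed (N : ℤ → ℕ) (τ : TI) : IsClosed (tile N τ) := by
  by_cases h : (N τ.1 : ℤ) * τ.1 ≤ τ.2.2 ∧ τ.2.2 < N τ.1 * (τ.1 + 1)
  · have e : tile N τ = {p : Plane | (τ.2.1 : ℝ) ≤ N τ.1 * p.1} ∩ ({p | N τ.1 * p.1 ≤ τ.2.1 + 1} ∩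
        ({p | (τ.2.2 : ℝ) ≤ N τ.1 * p.2} ∩ {p | N τ.1 * p.2 ≤ τ.2.2 + 1})) := by
      ext p
      exact ⟨fun hp => hp.2.2, fun hp => ⟨h.1, h.2, hp⟩⟩
    rw [e]
    refine (isClosed_le ?_ ?_).inter ((isClosed_le ?_ ?_).inter ((isClosed_le ?_ ?_).inter
      (isClosed_le ?_ ?_))) <;> fun_prop
  · have e : tile N τ = ∅ := by
      ext p
      refine ⟨fun hp => absurd ⟨hp.1, hp.2.1⟩ h, fun hp => hp.elim⟩
    rw [e]; exact isClosed_empty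

theorem tile_diam {N : ℤ → ℕ} (hN : ∀ j, 1 ≤ N j) {τ : TI} {p q : Plane} (h : p ∈ tile N τ)
    (h' : q ∈ tile N τ) : dist p q ≤ 1 / N τ.1 := by
  obtain ⟨h1, h2, h3, h4, h5, h6⟩ := h
  obtain ⟨h1', h2', h3', h4', h5', h6'⟩ := h'
  have n0 : (0:ℝ) < N τ.1 := by exact_mod_cast hN _
  rw [Prod.dist_eq, max_le_iff, Real.dist_eq, Real.dist_eq]
  constructor
  · rw [abs_le, le_div_iff₀ n0, neg_le, ← sub_nonneg]
    constructor
    · rw [sub_nonneg, le_div_iff₀ n0]; nlinarith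
    · nlinarith
  · rw [abs_le, le_div_iff₀ n0, neg_le, ← sub_nonneg]
    constructor
    · rw [sub_nonneg, le_div_iff₀ n0]; nlinarith
    · nlinarith

theorem int_eq_of {a b : ℤ} {x : ℝ} (h1 : (a:ℝ) < x) (h2 : x < a + 1) (h3 : (b:ℝ) ≤ x)
    (h4 : x ≤ b + 1) : b = a := by
  have e1 : (b:ℝ) < a + 1 := lt_of_le_of_lt h3 h2
  have e2 : (a:ℝ) < b + 1 := lt_of_lt_of_le h1 h4
  norm_cast at e1 e2
  omega

theorem tile_strict {N : ℤ → ℕ} (hN : ∀ j, 1 ≤ N j) {τ τ' : TI} {p : Plane}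
    (g1 : (N τ.1 : ℤ) * τ.1 ≤ τ.2.2) (g2 : τ.2.2 < N τ.1 * (τ.1 + 1))
    (g3 : (τ.2.1 : ℝ) < N τ.1 * p.1) (g4 : N τ.1 * p.1 < τ.2.1 + 1)
    (g5 : (τ.2.2 : ℝ) < N τ.1 * p.2) (g6 : N τ.1 * p.2 < τ.2.2 + 1)
    (h : p ∈ tile N τ') : τ' = τ := by
  have n0 : (0:ℝ) < N τ.1 := by exact_mod_cast hN _
  have g1' : (N τ.1 : ℝ) * τ.1 ≤ τ.2.2 := by exact_mod_cast g1
  have g2' : (τ.2.2 : ℝ) + 1 ≤ N τ.1 * (τ.1 + 1) := by exact_mod_cast g2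
  have e1 : (τ.1 : ℝ) < p.2 := lt_of_mul_lt_mul_left (g1'.trans_lt g5) n0.le
  have e2 : p.2 < τ.1 + 1 := lt_of_mul_lt_mul_left (g6.trans_le g2') n0.le
  have r := tile_row hN h
  have j := int_eq_of e1 e2 r.1 r.2
  obtain ⟨h1, h2, h3, h4, h5, h6⟩ := h
  rw [j] at h3 h4 h5 h6
  have a := int_eq_of g3 g4 h3 h4
  have b := int_eq_of g5 g6 h5 h6
  exact Prod.ext j (Prod.ext a b)

theorem tile_seg {N : ℤ → ℕ} (hN : ∀ j, 1 ≤ N j) {τ : TI} {x : Plane} (h : x ∈ tile N τ) :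
    ∃ K : Set Plane, IsCompact K ∧ IsPreconnected K ∧ x ∈ K ∧
      ((((τ.2.1 : ℝ) + 1/2) / N τ.1, ((τ.2.2 : ℝ) + 1/2) / N τ.1) : Plane) ∈ K ∧
      K ⊆ tile N τ ∧ ∀ j, j ≠ τ → ∀ z ∈ K, z ∈ tile N j → z = x := by
  have n0 : (0:ℝ) < N τ.1 := by exact_mod_cast hN _
  set c : Plane := (((τ.2.1 : ℝ) + 1/2) / N τ.1, ((τ.2.2 : ℝ) + 1/2) / N τ.1) with hc
  have c1 : N τ.1 * c.1 = τ.2.1 + 1/2 := by simp [hc]; field_simp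
  have c2 : N τ.1 * c.2 = τ.2.2 + 1/2 := by simp [hc]; field_simp
  obtain ⟨h1, h2, h3, h4, h5, h6⟩ := h
  refine ⟨segment ℝ x c, ?_, (convex_segment _ _).isPreconnected, left_mem_segment _ _ _,
          right_mem_segment _ _ _, ?_, ?_⟩
  · rw [segment_eq_image]
    exact isCompact_Icc.image (by fun_prop)
  · rintro _ ⟨a, b, ha, hb, hab, rfl⟩
    have ea : a = 1 - b := by linarith
    subst ea
    have w1 : N τ.1 * ((1 - b) * x.1 + b * c.1) = (1 - b) * (N τ.1 * x.1) + b * (τ.2.1 + 1/2) := by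
      rw [← c1]; ring
    have w2 : N τ.1 * ((1 - b) * x.2 + b * c.2) = (1 - b) * (N τ.1 * x.2) + b * (τ.2.2 + 1/2) := by
      rw [← c2]; ring
    refine ⟨h1, h2, ?_, ?_, ?_, ?_⟩ <;> simp only [Prod.fst_add, Prod.snd_add, Prod.smul_fst,
      Prod.smul_snd, smul_eq_mul, w1, w2] <;> nlinarith
  · rintro j hj _ ⟨a, b, ha, hb, hab, rfl⟩ hz
    have ea : a = 1 - b := by linarith
    subst ea
    have w1 : N τ.1 * ((1 - b) * x.1 + b * c.1) = (1 - b) * (N τ.1 * x.1) + b * (τ.2.1 + 1/2) := by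
      rw [← c1]; ring
    have w2 : N τ.1 * ((1 - b) * x.2 + b * c.2) = (1 - b) * (N τ.1 * x.2) + b * (τ.2.2 + 1/2) := by
      rw [← c2]; ring
    rcases hb.eq_or_lt with rfl | hb
    · simp
    · exfalso
      apply hj
      refine tile_strict hN h1 h2 ?_ ?_ ?_ ?_ hz <;> simp only [Prod.fst_add, Prod.snd_add, Prod.smul_fst,
        Prod.smul_snd, smul_eq_mul, w1, w2] <;> nlinarith

theorem tile_path {N : ℤ → ℕ} (hN : ∀ j, 1 ≤ N j) (τ : TI) : ∀ x ∈ tile N τ, ∀ y ∈ tile N τ,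
    ∃ K : Set Plane, IsCompact K ∧ IsPreconnected K ∧ x ∈ K ∧
      y ∈ K ∧ K ⊆ tile N τ ∧ ∀ j, j ≠ τ → ∀ z ∈ K, z ∈ tile N j → z = x ∨ z = y := by
  intro x hx y hy
  obtain ⟨K, a1, a2, a3, a4, a5, a6⟩ := tile_seg hN hx
  obtain ⟨K', b1, b2, b3, b4, b5, b6⟩ := tile_seg hN hy
  refine ⟨K ∪ K', a1.union b1, IsPreconnected.union _ a4 b4 a2 b2, Or.inl a3, Or.inr b3,
    union_subset a5 b5, ?_⟩
  rintro j hj z (hz | hz) hzj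
  · exact Or.inl (a6 j hj z hz hzj)
  · exact Or.inr (b6 j hj z hz hzj)

theorem tile_lf {N : ℤ → ℕ} (hN : ∀ j, 1 ≤ N j) : LocallyFinite (tile N) := by
  intro u
  refine ⟨Metric.ball u 1, Metric.ball_mem_nhds _ one_pos, ?_⟩
  have fin : (⋃ j ∈ Icc (⌊u.2⌋ - 3) (⌊u.2⌋ + 3), (fun ab : ℤ × ℤ => ((j, ab) : TI)) ''
      (Icc (⌊(N j : ℝ) * (u.1 - 1) - 1⌋) (⌈(N j : ℝ) * (u.1 + 1)⌉) ×ˢ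
       Icc (⌊(N j : ℝ) * (u.2 - 1) - 1⌋) (⌈(N j : ℝ) * (u.2 + 1)⌉))).Finite :=
    (Set.finite_Icc _ _).biUnion (fun j _ => ((Set.finite_Icc _ _).prod (Set.finite_Icc _ _)).image _)
  refine fin.subset ?_
  rintro ⟨j, a, b⟩ ⟨p, hp, hpu⟩
  have hr := tile_row hN hp
  rw [Metric.mem_ball, Prod.dist_eq, max_lt_iff, Real.dist_eq, Real.dist_eq, abs_lt, abs_lt] at hpu
  obtain ⟨⟨u1, u2⟩, u3, u4⟩ := hpu
  obtain ⟨h1, h2, h3, h4, h5, h6⟩ := hp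
  simp only at hr h1 h2 h3 h4 h5 h6
  have n0 : (0:ℝ) < N j := by exact_mod_cast hN _
  simp only [mem_iUnion]
  have f1 := Int.floor_le u.2
  have f2 := Int.lt_floor_add_one u.2
  refine ⟨j, ⟨?_, ?_⟩, (a, b), ⟨⟨?_, ?_⟩, ⟨?_, ?_⟩⟩, rfl⟩
  · have : (⌊u.2⌋ : ℝ) - 3 ≤ j := by linarith
    exact_mod_cast this
  · have : (j : ℝ) ≤ ⌊u.2⌋ + 3 := by linarith
    exact_mod_cast this
  · have := Int.floor_le ((N j : ℝ) * (u.1 - 1) - 1)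
    have : (⌊(N j : ℝ) * (u.1 - 1) - 1⌋ : ℝ) ≤ a := by nlinarith
    exact_mod_cast this
  · have := Int.le_ceil ((N j : ℝ) * (u.1 + 1))
    have : (a : ℝ) ≤ ⌈(N j : ℝ) * (u.1 + 1)⌉ := by nlinarith
    exact_mod_cast this
  · have := Int.floor_le ((N j : ℝ) * (u.2 - 1) - 1)
    have : (⌊(N j : ℝ) * (u.2 - 1) - 1⌋ : ℝ) ≤ b := by nlinarith
    exact_mod_cast this
  · have := Int.le_ceil ((N j : ℝ) * (u.2 + 1))
    have : (b : ℝ) ≤ ⌈(N j : ℝ) * (u.2 + 1)⌉ := by nlinarith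
    exact_mod_cast this

theorem tile_nhd {N : ℤ → ℕ} (hN : ∀ j, 1 ≤ N j) (u : Plane) :
    ∃ ε > 0, ∀ p, dist p u < ε → ∀ τ, p ∈ tile N τ → u ∈ tile N τ := by
  have := (tile_lf hN).iInter_compl_mem_nhds (tile_closed N) u
  obtain ⟨ε, hε, hb⟩ := Metric.mem_nhds_iff.1 this
  refine ⟨ε, hε, fun p hp τ hτ => ?_⟩
  by_contra hu
  have := hb hp
  simp only [mem_iInter] at this
  exact this τ hu hτ

theorem Tr_dist (k : ℤ) (p q : Plane) : dist (Tr k p) (Tr k q) = dist p q := by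
  simp [Tr, Prod.dist_eq]

theorem exists_N (G : Plane ≃ₜ Plane) (hfix : ∀ x, G x ≠ x) (hcomm : CommT G) :
    ∃ N : ℤ → ℕ, (∀ j, 1 ≤ N j) ∧ ∀ τ, ∀ x ∈ tile N τ, G x ∉ tile N τ := by
  have : ∀ j : ℤ, ∃ n : ℕ, 1 ≤ n ∧ ∀ p : Plane, (j:ℝ) ≤ p.2 → p.2 ≤ j + 1 →
      1 / (n:ℝ) < dist (G p) p := by
    intro j
    have hK : IsCompact (Icc (0:ℝ) 1 ×ˢ Icc (j:ℝ) (j + 1)) := isCompact_Icc.prod isCompact_Icc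
    obtain ⟨p0, hp0, hmin⟩ := hK.exists_isMinOn ⟨(0, j), by simp⟩
      (f := fun p : Plane => dist (G p) p) (by fun_prop)
    obtain ⟨n, hn⟩ := exists_nat_one_div_lt (dist_pos.2 (hfix p0))
    refine ⟨n + 1, by omega, fun p h1 h2 => ?_⟩
    have hp : Tr (-⌊p.1⌋) p ∈ Icc (0:ℝ) 1 ×ˢ Icc (j:ℝ) (j + 1) := by
      refine ⟨⟨?_, ?_⟩, h1, h2⟩
      · simp [Tr, Int.floor_le]
      · have := Int.lt_floor_add_one p.1
        simp [Tr]; linarith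
    have := hmin hp
    simp only [mem_ofPred_eq] at this
    rw [hcomm, Tr_dist] at this
    push_cast
    linarith
  choose N hN1 hN2 using this
  refine ⟨N, hN1, fun τ x hx hGx => ?_⟩
  have r := tile_row hN1 hx
  have := hN2 τ.1 x r.1 r.2
  linarith [tile_diam hN1 hGx hx]

/-- invariance under the deck group -/
def TInv (A : Set Plane) : Prop := ∀ (k : ℤ) p, p ∈ A → Tr k p ∈ A

/-- `z` has returns satisfying `P` (upstairs) -/
def Ret (F : Plane → Plane) (z : Plane) (P : ℕ → ℤ → Prop) : Prop :=
  ∀ ε > 0, ∃ m, 1 ≤ m ∧ ∃ k : ℤ, P m k ∧ dist (Tr (-k) (F^[m] z)) z < ε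

theorem TInv.iff {A : Set Plane} (h : TInv A) (k : ℤ) (p : Plane) : Tr k p ∈ A ↔ p ∈ A :=
  ⟨fun hp => by simpa using h (-k) _ hp, h k p⟩

theorem TInv.int {A : Set Plane} (h : TInv A) : TInv (_root_.interior A) := by
  intro k p hp
  have : Tr k p ∈ (TrH k) '' interior A := ⟨p, hp, rfl⟩
  rw [(TrH k).image_interior] at this
  refine interior_mono ?_ this
  rintro _ ⟨y, hy, rfl⟩
  exact h k y hy

theorem TInv.compl {A : Set Plane} (h : TInv A) : TInv Aᶜ := by
  intro k p hp h'
  exact hp ((h.iff k p).1 h')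

theorem TInv.image {A : Set Plane} (h : TInv A) {F : Plane → Plane} (hF : CommT F) :
    TInv (F '' A) := by
  rintro k _ ⟨x, hx, rfl⟩
  exact ⟨Tr k x, h k x hx, hF k x⟩

theorem infDist_Tr {A : Set Plane} (h : TInv A) (k : ℤ) (p : Plane) :
    Metric.infDist (Tr k p) A = Metric.infDist p A := by
  have e : (TrH k) '' A = A := by
    ext x
    constructor
    · rintro ⟨y, hy, rfl⟩; exact h k y hy
    · intro hx; exact ⟨Tr (-k) x, h _ _ hx, by simp [TrH]⟩
  conv_lhs => rw [← e]
  exact Metric.infDist_image (Φ := TrH k) (Isometry.of_dist_eq (Tr_dist k))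

theorem interp (A M : Set Plane) (hM : IsClosed M) (hAT : TInv A) (hMT : TInv M)
    (hne : M.Nonempty) (hMA : M ⊆ interior A) (hA : (interior A)ᶜ.Nonempty) :
    ∃ B, IsClosed B ∧ TInv B ∧ M ⊆ interior B ∧ B ⊆ interior A := by
  have hcl : IsClosed (interior A)ᶜ := isOpen_interior.isClosed_compl
  refine ⟨{x | Metric.infDist x M ≤ Metric.infDist x (interior A)ᶜ}, ?_, ?_, ?_, ?_⟩
  · exact isClosed_le (Metric.continuous_infDist_pt _) (Metric.continuous_infDist_pt _)
  · intro k p hp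
    simp only [mem_ofPred_eq] at hp ⊢
    rwa [infDist_Tr hMT, infDist_Tr hAT.int.compl]
  · have ho : IsOpen {x | Metric.infDist x M < Metric.infDist x (interior A)ᶜ} :=
      isOpen_lt (Metric.continuous_infDist_pt _) (Metric.continuous_infDist_pt _)
    have hs : M ⊆ {x | Metric.infDist x M < Metric.infDist x (interior A)ᶜ} := by
      intro x hx
      simp only [mem_ofPred_eq]
      rw [Metric.infDist_zero_of_mem hx]
      exact (hcl.notMem_iff_infDist_pos hA).1 (fun h => h (hMA hx))
    refine hs.trans (interior_maximal ?_ ho)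
    intro x hx
    have hx' : Metric.infDist x M < Metric.infDist x (interior A)ᶜ := hx
    exact hx'.le
  · intro x hx
    simp only [mem_ofPred_eq] at hx
    by_contra h
    rw [Metric.infDist_zero_of_mem (show x ∈ (interior A)ᶜ from h)] at hx
    have : x ∈ M := (hM.mem_iff_infDist_zero hne).2 (le_antisymm hx Metric.infDist_nonneg)
    exact h (hMA this)

theorem sep_of_A (F G : Plane ≃ₜ Plane) (hcomm : CommT F) (q : ℕ) (hq : 1 ≤ q) (p : ℤ)
    (hG : ∀ x, G x = Tr (-p) (F^[q] x)) (A : Set Plane) (hAc : IsClosed A) (hAT : TInv A)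
    (hGA : G '' A ⊆ interior A) (u z' : Plane) (hu : u ∈ A) (hur : Ret G u (fun _ _ => True))
    (hz' : ∀ i < q, F^[i] z' ∉ A) :
    ∃ V, IsClosed V ∧ TInv V ∧ F '' V ⊆ interior V ∧ u ∈ V ∧ F^[q - 1] z' ∉ V := by
  have Gcomm : CommT G := by
    intro k x
    rw [hG, hG, hcomm.iter q k x]; simp [add_comm]
  have hM : IsClosed (G '' A) := G.isClosedMap _ hAc
  have hMT : TInv (G '' A) := hAT.image Gcomm
  have huM : u ∈ G '' A := by
    rw [← hM.closure_eq, Metric.mem_closure_iff]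
    intro ε hε
    obtain ⟨m, hm, k, -, hd⟩ := hur ε hε
    refine ⟨_, ?_, by rw [dist_comm]; exact hd⟩
    have hit : ∀ n, G^[n] u ∈ A := by
      intro n
      induction n with
      | zero => exact hu
      | succ n ih => rw [Function.iterate_succ_apply']; exact interior_subset (hGA ⟨_, ih, rfl⟩)
    obtain ⟨n, rfl⟩ : ∃ n, m = n + 1 := ⟨m - 1, by omega⟩
    apply hMT
    rw [Function.iterate_succ_apply']
    exact ⟨_, hit n, rfl⟩
  have step : ∀ B : Set Plane, IsClosed B ∧ TInv B ∧ G '' A ⊆ interior B ∧ B ⊆ A →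
      ∃ C, (IsClosed C ∧ TInv C ∧ G '' A ⊆ interior C ∧ C ⊆ A) ∧ C ⊆ interior B := by
    rintro B ⟨b1, b2, b3, b4⟩
    obtain ⟨C, c1, c2, c3, c4⟩ := interp B (G '' A) hM b2 hMT ⟨u, huM⟩ b3
      ⟨F^[0] z', fun h => hz' 0 (by omega) (b4 (interior_subset h))⟩
    exact ⟨C, ⟨c1, c2, c3, c4.trans (interior_subset.trans b4)⟩, c4⟩
  choose! st hst1 hst2 using step
  let S : ℕ → Set Plane := fun n => st^[n] A
  have S0 : S 0 = A := rfl
  have Ss : ∀ n, S (n + 1) = st (S n) := fun n => Function.iterate_succ_apply' st n A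
  have Sp : ∀ n, IsClosed (S n) ∧ TInv (S n) ∧ G '' A ⊆ interior (S n) ∧ S n ⊆ A := by
    intro n
    induction n with
    | zero => exact ⟨hAc, hAT, hGA, subset_rfl⟩
    | succ n ih => rw [Ss]; exact hst1 _ ih
  have Sn : ∀ n, S (n + 1) ⊆ interior (S n) := by
    intro n; rw [Ss]; exact hst2 _ (Sp n)
  -- iterates of F as homeomorphisms
  have Fh : ∀ i : ℕ, ∃ h : Plane ≃ₜ Plane, ∀ x, h x = F^[i] x := by
    intro i
    induction i with
    | zero => exact ⟨Homeomorph.refl _, fun x => rfl⟩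
    | succ i ih =>
      obtain ⟨h, hh⟩ := ih
      exact ⟨h.trans F, fun x => by rw [Function.iterate_succ_apply', ← hh]; rfl⟩
  choose Fi hFi using Fh
  refine ⟨⋃ i ∈ {i | i < q}, Fi i '' S (q - 1 - i), ?_, ?_, ?_, ?_, ?_⟩
  · exact (Set.finite_lt_nat q).isClosed_biUnion (fun i _ => (Fi i).isClosedMap _ (Sp _).1)
  · intro k x hx
    simp only [mem_iUnion] at hx ⊢
    obtain ⟨i, hi, y, hy, rfl⟩ := hx
    refine ⟨i, hi, Tr k y, (Sp _).2.1 k y hy, ?_⟩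
    rw [hFi, hFi]; exact hcomm.iter i k y
  · rintro _ ⟨x, hx, rfl⟩
    simp only [mem_iUnion] at hx
    obtain ⟨i, hi, y, hy, rfl⟩ := hx
    have hi' : i < q := hi
    have sub : ∀ j < q, Fi j '' interior (S (q - 1 - j)) ⊆
        interior (⋃ i ∈ {i | i < q}, Fi i '' S (q - 1 - i)) := by
      intro j hj
      rw [(Fi j).image_interior]
      apply interior_mono
      intro w hw
      simp only [mem_iUnion]
      exact ⟨j, hj, hw⟩
    rw [hFi, ← Function.iterate_succ_apply' F]
    by_cases h : i + 1 < q
    · apply sub (i + 1) h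
      refine ⟨y, ?_, hFi _ _⟩
      apply Sn
      rwa [show q - 1 - (i + 1) + 1 = q - 1 - i by omega]
    · have hiq : i + 1 = q := by omega
      apply sub 0 (by omega)
      refine ⟨F^[i + 1] y, ?_, hFi _ _⟩
      apply (Sp _).2.2.1
      have : F^[i + 1] y = Tr p (G y) := by rw [hG, hiq]; simp
      rw [this]
      apply hMT
      exact ⟨y, (Sp _).2.2.2 hy, rfl⟩
  · simp only [mem_iUnion]
    exact ⟨0, by show 0 < q; omega, u, interior_subset ((Sp _).2.2.1 huM), hFi _ _⟩
  · intro h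
    simp only [mem_iUnion] at h
    obtain ⟨i, hi, y, hy, he⟩ := h
    have hi' : i < q := hi
    have : y = F^[q - 1 - i] z' := by
      apply (Fi i).injective
      rw [he, hFi, ← Function.iterate_add_apply]
      congr 2; omega
    rw [this] at hy
    exact hz' _ (by omega) ((Sp _).2.2.2 hy)

theorem RG_act {N : ℤ → ℕ} {G : Plane ≃ₜ Plane} (hcomm : CommT G) (k : ℤ) {τ τ' : TI}
    (h : RG G (tile N) τ τ') : RG G (tile N) (act N k τ) (act N k τ') := by
  obtain ⟨x, h1, h2⟩ := h
  exact ⟨Tr k x, (tile_act N k τ x).2 h1, by rw [hcomm]; exact (tile_act N k τ' _).2 h2⟩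

/-- The attractor generated by a tile -/
def attr (N : ℤ → ℕ) (G : Plane ≃ₜ Plane) (τ0 : TI) : Set Plane :=
  {p | ∃ τ, p ∈ tile N τ ∧ ∃ k, Relation.ReflTransGen (RG G (tile N)) τ0 (act N k τ)}

theorem attr_props {N : ℤ → ℕ} (hN : ∀ j, 1 ≤ N j) {G : Plane ≃ₜ Plane} (hcomm : CommT G) (τ0 : TI) :
    IsClosed (attr N G τ0) ∧ TInv (attr N G τ0) ∧ G '' attr N G τ0 ⊆ interior (attr N G τ0) := by
  refine ⟨?_, ?_, ?_⟩
  · have e : attr N G τ0 = ⋃ τ : {τ : TI // ∃ k, Relation.ReflTransGen (RG G (tile N)) τ0 (act N k τ)},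
        tile N τ.1 := by
      ext p
      simp only [mem_iUnion]
      exact ⟨fun ⟨τ, h1, h2⟩ => ⟨⟨τ, h2⟩, h1⟩, fun ⟨τ, h⟩ => ⟨τ.1, h, τ.2⟩⟩
    rw [e]
    exact ((tile_lf hN).comp_injective Subtype.val_injective).isClosed_iUnion
      (fun τ => tile_closed N τ.1)
  · rintro k p ⟨τ, h1, l, h2⟩
    refine ⟨act N k τ, (tile_act N k τ p).2 h1, l - k, ?_⟩
    rw [act_act]; simpa using h2
  · rintro _ ⟨x, ⟨τ, h1, k, h2⟩, rfl⟩
    obtain ⟨ε, hε, hb⟩ := tile_nhd hN (G x)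
    rw [mem_interior]
    refine ⟨Metric.ball (G x) ε, ?_, Metric.isOpen_ball, Metric.mem_ball_self hε⟩
    intro y hy
    obtain ⟨τ', hτ'⟩ := tile_cover hN y
    have := hb y hy τ' hτ'
    exact ⟨τ', hτ', k, h2.tail (RG_act hcomm k ⟨x, h1, this⟩)⟩

theorem ret_tile {N : ℤ → ℕ} (hN : ∀ j, 1 ≤ N j) {G : Plane ≃ₜ Plane} (u : Plane) {P : ℕ → ℤ → Prop}
    (hu : Ret G u P) : ∃ τ, u ∈ tile N τ ∧ ∃ m, 1 ≤ m ∧ ∃ k, P m k ∧ G^[m] u ∈ tile N (act N k τ) := by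
  obtain ⟨ε, hε, hb⟩ := tile_nhd hN u
  obtain ⟨m, hm, k, hP, hd⟩ := hu ε hε
  obtain ⟨τ, hτ⟩ := tile_cover hN (Tr (-k) (G^[m] u))
  refine ⟨τ, hb _ hd τ hτ, m, hm, k, hP, ?_⟩
  rw [← tile_act N k] at hτ
  simpa using hτ

theorem semigroup_zero (S : ℤ → Prop) (hadd : ∀ a b, S a → S b → S (a + b)) {s t : ℤ} (hs : S s)
    (hs0 : 0 ≤ s) (ht : S t) (ht0 : t ≤ 0) : S 0 := by
  have mul : ∀ a, S a → ∀ n : ℕ, S ((n + 1) * a) := by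
    intro a ha n
    induction n with
    | zero => simpa using ha
    | succ n ih =>
      have := hadd _ _ ih ha
      convert this using 1; push_cast; ring
  rcases hs0.eq_or_lt with rfl | hs0
  · exact hs
  rcases ht0.eq_or_lt with rfl | ht0
  · exact ht
  have a := hadd _ _ (mul s hs ((-t).toNat - 1)) (mul t ht (s.toNat - 1))
  have e1 : (((-t).toNat - 1 : ℕ) : ℤ) + 1 = -t := by omega
  have e2 : ((s.toNat - 1 : ℕ) : ℤ) + 1 = s := by omega
  rw [e1, e2] at a
  convert a using 1; ring

theorem ret_iter (F G : Plane ≃ₜ Plane) (hcomm : CommT F) (q : ℕ) (p : ℤ)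
    (hG : ∀ x, G x = Tr (-p) (F^[q] x)) (z : Plane) {P : ℕ → ℤ → Prop} (hz : Ret G z P) (i : ℕ) :
    Ret G (F^[i] z) P := by
  intro ε hε
  have hc : Continuous F^[i] := F.continuous.iterate i
  obtain ⟨δ, hδ, hd⟩ := Metric.continuous_iff.1 hc z ε hε
  obtain ⟨m, hm, k, hP, hdd⟩ := hz δ hδ
  refine ⟨m, hm, k, hP, ?_⟩
  have e : ∀ m x, G^[m] (F^[i] x) = F^[i] (G^[m] x) := by
    intro m
    induction m with
    | zero => intro x; rfl
    | succ m ih =>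
      intro x
      rw [Function.iterate_succ_apply, Function.iterate_succ_apply, ← ih]
      congr 1
      rw [hG, hG, hcomm.iter i, ← Function.iterate_add_apply, ← Function.iterate_add_apply, add_comm]
  rw [e, ← hcomm.iter i]
  exact hd _ hdd

theorem exists_max_rel {α : Type*} (R : α → α → Prop) (hr : ∀ a, R a a)
    (ht : ∀ a b c, R a b → R b c → R a c) (τ : ℕ → α) (q : ℕ) (hq : 1 ≤ q) :
    ∃ i < q, ∀ j < q, R (τ i) (τ j) → R (τ j) (τ i) := by
  induction q, hq using Nat.le_induction with
  | base =>
    refine ⟨0, by omega, fun j hj _ => ?_⟩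
    obtain rfl : j = 0 := by omega
    exact hr _
  | succ q hq ih =>
    obtain ⟨i, hi, h⟩ := ih
    by_cases c : R (τ i) (τ q) ∧ ¬ R (τ q) (τ i)
    · refine ⟨q, by omega, fun j hj hR => ?_⟩
      rcases Nat.lt_succ_iff_lt_or_eq.1 hj with hj | rfl
      · exact absurd (ht _ _ _ hR (h j hj (ht _ _ _ c.1 hR))) c.2
      · exact hr _
    · refine ⟨i, by omega, fun j hj hR => ?_⟩
      rcases Nat.lt_succ_iff_lt_or_eq.1 hj with hj | rfl
      · exact h j hj hR
      · by_contra h'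
        exact c ⟨hR, h'⟩

theorem sep_exists (F G : Plane ≃ₜ Plane) (hcomm : CommT F) (q : ℕ) (hq : 1 ≤ q) (p : ℤ)
    (hG : ∀ x, G x = Tr (-p) (F^[q] x)) (hiso : IsoId G) (hfix : ∀ x, G x ≠ x) (z z' : Plane)
    (hz : Ret G z (fun _ k => 0 ≤ k)) (hz' : Ret G z' (fun _ k => k ≤ 0)) :
    ∃ V, IsClosed V ∧ TInv V ∧ F '' V ⊆ interior V ∧ ∃ i j,
      (F^[i] z ∈ V ∧ F^[j] z' ∉ V) ∨ (F^[i] z' ∈ V ∧ F^[j] z ∉ V) := by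
  have Gcomm : CommT G := by
    intro k x
    rw [hG, hG, hcomm.iter q k x]; simp [add_comm]
  obtain ⟨N, hN, hfree⟩ := exists_N G hfix Gcomm
  choose τ t1 m hm k hk t2 using fun i => ret_tile hN _ (ret_iter F G hcomm q p hG z hz i)
  choose τ' t1' m' hm' k' hk' t2' using fun i => ret_tile hN _ (ret_iter F G hcomm q p hG z' hz' i)
  have FR := franks G hiso hfix (tile N) hfree (tile_path hN)
  set R := RG G (tile N) with hR
  have shift : ∀ l {a b}, Relation.ReflTransGen R a b →
      Relation.ReflTransGen R (act N l a) (act N l b) := fun l a b h =>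
    h.lift (act N l) (fun _ _ h => RG_act Gcomm l h)
  have shift' : ∀ l {a b}, Relation.TransGen R a b →
      Relation.TransGen R (act N l a) (act N l b) := fun l a b h =>
    h.lift (act N l) (fun _ _ h => RG_act Gcomm l h)
  let Ch : TI → TI → Prop := fun a b => ∃ l, Relation.ReflTransGen R a (act N l b)
  have Chrefl : ∀ a, Ch a a := fun a => ⟨0, by rw [act_zero]⟩
  have Chtrans : ∀ a b c, Ch a b → Ch b c → Ch a c := by
    rintro a b c ⟨l, h⟩ ⟨l', h'⟩
    refine ⟨l + l', h.trans ?_⟩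
    rw [← act_act]; exact shift l h'
  have trueRet : ∀ {P : ℕ → ℤ → Prop} {w}, Ret G w P → Ret G w (fun _ _ => True) := by
    intro P w hw ε hε
    obtain ⟨m, hm, k, -, hd⟩ := hw ε hε
    exact ⟨m, hm, k, trivial, hd⟩
  have notA : ∀ (σ0 σ' : TI) (u' : Plane) (m' : ℕ) (k' : ℤ), 1 ≤ m' →
      G^[m'] u' ∈ tile N (act N k' σ') → ¬ Ch σ0 σ' → u' ∉ attr N G σ0 := by
    rintro σ0 σ' u' m' k' hm' ht hn ⟨σ, h1, l, h2⟩
    apply hn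
    refine ⟨l + k', h2.trans ?_⟩
    rw [← act_act]
    exact shift l (orbit_chain G (tile N) (tile_cover hN) hm' h1 ht).to_reflTransGen
  have inA : ∀ (σ0 : TI) (u : Plane), u ∈ tile N σ0 → u ∈ attr N G σ0 := by
    intro σ0 u hu
    exact ⟨σ0, hu, 0, by rw [act_zero]⟩
  by_cases c1 : ∃ i, ∀ i' < q, ¬ Ch (τ i) (τ' i')
  · obtain ⟨i, hi⟩ := c1
    obtain ⟨a1, a2, a3⟩ := attr_props hN Gcomm (τ i)
    obtain ⟨V, v1, v2, v3, v4, v5⟩ := sep_of_A F G hcomm q hq p hG _ a1 a2 a3 (F^[i] z) z'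
      (inA _ _ (t1 i)) (trueRet (ret_iter F G hcomm q p hG z hz i))
      (fun i' h => notA _ (τ' i') _ (m' i') (k' i') (hm' i') (t2' i') (hi i' h))
    exact ⟨V, v1, v2, v3, i, q - 1, Or.inl ⟨v4, v5⟩⟩
  by_cases c2 : ∃ i, ∀ i' < q, ¬ Ch (τ' i) (τ i')
  · obtain ⟨i, hi⟩ := c2
    obtain ⟨a1, a2, a3⟩ := attr_props hN Gcomm (τ' i)
    obtain ⟨V, v1, v2, v3, v4, v5⟩ := sep_of_A F G hcomm q hq p hG _ a1 a2 a3 (F^[i] z') z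
      (inA _ _ (t1' i)) (trueRet (ret_iter F G hcomm q p hG z' hz' i))
      (fun i' h => notA _ (τ i') _ (m i') (k i') (hm i') (t2 i') (hi i' h))
    exact ⟨V, v1, v2, v3, i, q - 1, Or.inr ⟨v4, v5⟩⟩
  exfalso
  push Not at c1 c2
  obtain ⟨i, hi, hmax⟩ := exists_max_rel Ch Chrefl Chtrans τ q hq
  obtain ⟨i', hi', ch1⟩ := c1 i
  obtain ⟨i2, hi2, ch2⟩ := c2 i'
  have ch3 : Ch (τ i2) (τ i) := hmax i2 hi2 (Chtrans _ _ _ ch1 ch2)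
  have ch4 := Chtrans _ _ _ ch2 ch3
  obtain ⟨j, hj⟩ := ch1
  obtain ⟨l, hl⟩ := ch4
  have L' : Relation.TransGen R (τ' i') (act N (k' i') (τ' i')) :=
    orbit_chain G (tile N) (tile_cover hN) (hm' i') (t1' i') (t2' i')
  have L : Relation.TransGen R (τ i) (act N (k i) (τ i)) :=
    orbit_chain G (tile N) (tile_cover hN) (hm i) (t1 i) (t2 i)
  have L'n : ∀ n : ℕ, Relation.TransGen R (τ' i') (act N ((n + 1) * k' i') (τ' i')) := by
    intro n
    induction n with
    | zero => simpa using L'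
    | succ n ih =>
      have := ih.trans (shift' ((n + 1) * k' i') L')
      rw [act_act] at this
      convert this using 2
      push_cast; ring
  rcases (hk' i').eq_or_lt with h0 | hneg
  · rw [h0, act_zero] at L'
    exact FR _ L'
  have key := semigroup_zero (fun s => Relation.TransGen R (τ i) (act N s (τ i)))
    (by
      intro a b ha hb
      rw [← act_act]
      exact ha.trans (shift' a hb)) L (hk i)
    (t := j + ((((j + l).toNat + 1 : ℕ) : ℤ) * k' i' + l))
    (by
      have h1 := (shift' j (L'n ((j + l).toNat))).trans_left (shift j (shift _ hl))
      have h2 := Relation.TransGen.trans_right hj h1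
      simp only [act_act] at h2
      convert h2 using 2
      push_cast; ring)
    (by
      have : ((((j + l).toNat + 1 : ℕ) : ℤ)) ≥ j + l := by omega
      have h3 : (0:ℤ) ≤ (((j + l).toNat + 1 : ℕ) : ℤ) := by positivity
      nlinarith)
  simp only [act_zero] at key
  exact FR _ key

/-- all the standing facts on the lift -/
structure Good (F : Plane ≃ₜ Plane) : Prop where
  comm : CommT F
  iso : ∀ (a : ℕ) (b : ℤ), ∃ G : Plane ≃ₜ Plane, (∀ x, G x = Tr b (F^[a] x)) ∧ IsoId G
  free : ∀ (a : ℕ) (b : ℤ), 1 ≤ a → ∀ x, Tr b (F^[a] x) ≠ x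

theorem comp_map {U : Set Plane} {S : Plane → Plane} (hS : Continuous S) (hU : ∀ x ∈ U, S x ∈ U)
    {v y : Plane} (hy : y ∈ connectedComponentIn U v) (hSy : S y ∈ connectedComponentIn U v) :
    ∀ x ∈ connectedComponentIn U v, S x ∈ connectedComponentIn U v := by
  intro x hx
  have h1 : IsPreconnected (S '' connectedComponentIn U v) :=
    isPreconnected_connectedComponentIn.image _ hS.continuousOn
  have h2 := h1.subset_connectedComponentIn (x := S y) (F := U) ⟨y, hy, rfl⟩ (by
    rintro _ ⟨w, hw, rfl⟩
    exact hU _ (connectedComponentIn_subset _ _ hw))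
  rw [connectedComponentIn_eq hSy]
  exact h2 ⟨x, hx, rfl⟩

theorem TrF_iter {Φ : Plane → Plane} (h : CommT Φ) (n : ℕ) (k : ℤ) (s : ℕ) (x : Plane) :
    (fun y => Tr k (Φ^[n] y))^[s] x = Tr (s * k) (Φ^[n * s] x) := by
  induction s with
  | zero => simp
  | succ s ih =>
    rw [Function.iterate_succ_apply', ih, h.iter n, Tr_Tr, ← Function.iterate_add_apply]
    congr 2
    · push_cast; ring
    · ring

theorem iter_maps {U : Set Plane} {S : Plane → Plane} (h : ∀ x ∈ U, S x ∈ U) (n : ℕ) :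
    ∀ x ∈ U, S^[n] x ∈ U := by
  intro x hx
  induction n with
  | zero => exact hx
  | succ n ih => rw [Function.iterate_succ_apply']; exact h _ ih

theorem per_core {Φ : Plane → Plane} (hΦc : Continuous Φ) (hc : CommT Φ) {U : Set Plane}
    (hUT : TInv U) (hU : ∀ x ∈ U, Φ x ∈ U) {v : Plane} (hv : v ∈ U) {n n' : ℕ} {k k' : ℤ}
    (h1 : Tr (-k) (Φ^[n] v) ∈ connectedComponentIn U v)
    (h2 : Tr (-k') (Φ^[n'] v) ∈ connectedComponentIn U v) (hne : n * k' ≠ n' * k) :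
    ∃ j : ℤ, 1 ≤ j ∧ Tr j v ∈ connectedComponentIn U v := by
  have hself := mem_connectedComponentIn hv
  have key : ∀ (n : ℕ) (k : ℤ) (s : ℕ), Tr (-k) (Φ^[n] v) ∈ connectedComponentIn U v →
      Tr (s * (-k)) (Φ^[n * s] v) ∈ connectedComponentIn U v := by
    intro n k s h
    rw [← TrF_iter hc]
    refine iter_maps (comp_map (S := fun y => Tr (-k) (Φ^[n] y)) ?_ ?_ hself h) s v hself
    · exact (Tr_cont _).comp (hΦc.iterate n)
    · intro x hx
      exact hUT _ _ (iter_maps hU n x hx)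
  have a1 := key n k n' h1
  have a2 := key n' k' n h2
  rw [mul_comm n' n] at a2
  have tr : ∀ j : ℤ, ∀ w, w ∈ connectedComponentIn U v → Tr j w ∈ connectedComponentIn U v →
      Tr j v ∈ connectedComponentIn U v := fun j w hw hjw =>
    comp_map (Tr_cont j) (hUT j) hw hjw v hself
  rcases lt_or_gt_of_ne hne with h | h
  · refine ⟨n' * k - n * k', by linarith, tr _ _ a1 ?_⟩
    rw [Tr_Tr]; convert a2 using 2; ring
  · refine ⟨n * k' - n' * k, by linarith, tr _ _ a2 ?_⟩
    rw [Tr_Tr]; convert a1 using 2; ring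

theorem free_ball {G : Plane → Plane} (hG : Continuous G) {v : Plane} (h : G v ≠ v) :
    ∃ ε > 0, ∀ x ∈ Metric.ball v ε, G x ∉ Metric.ball v ε := by
  have hd : 0 < dist (G v) v := dist_pos.2 h
  obtain ⟨δ, hδ, hh⟩ := Metric.continuous_iff.1 hG v (dist (G v) v / 2) (by linarith)
  refine ⟨min δ (dist (G v) v / 2), by positivity, fun x hx hx' => ?_⟩
  rw [Metric.mem_ball, lt_min_iff] at hx hx'
  have := hh x hx.1
  have t := dist_triangle_left (G v) v (G x)
  linarith [hx'.2]

theorem prop_false {F : Plane ≃ₜ Plane} (hF : Good F) (v : Plane) (n0 : ℕ) (hn0 : 1 ≤ n0) (k0 : ℤ)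
    (h : Ret F v (fun n k => (n : ℤ) * k0 = n0 * k)) : False := by
  obtain ⟨g, hg0, hg⟩ : ∃ g : ℕ, 1 ≤ g ∧ g = Int.gcd n0 k0 :=
    ⟨_, by
      have : Int.gcd n0 k0 ≠ 0 := by
        rw [Ne, Int.gcd_eq_zero_iff]; omega
      omega, rfl⟩
  obtain ⟨b, hb⟩ : (g : ℤ) ∣ n0 := hg ▸ Int.gcd_dvd_left _ _
  obtain ⟨a, ha⟩ : (g : ℤ) ∣ k0 := hg ▸ Int.gcd_dvd_right _ _
  have hb0 : 1 ≤ b := by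
    by_contra hcon
    have : (g : ℤ) * b ≤ 0 := mul_nonpos_of_nonneg_of_nonpos (by positivity) (by omega)
    omega
  have hcop : IsCoprime b a := by
    rw [Int.isCoprime_iff_gcd_eq_one]
    have h3 : Int.gcd ((g : ℤ) * b) (g * a) = g * Int.gcd b a := by
      rw [Int.gcd_mul_left]; simp
    rw [← hb, ← ha, ← hg] at h3
    nlinarith [h3]
  obtain ⟨b, rfl⟩ := Int.eq_ofNat_of_zero_le (show 0 ≤ b by omega)
  obtain ⟨G, hG, hiso⟩ := hF.iso b (-a)
  have hfix : ∀ x, G x ≠ x := fun x => by rw [hG]; exact hF.free _ _ (by exact_mod_cast hb0) x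
  obtain ⟨ε, hε, hball⟩ := free_ball G.continuous (hfix v)
  obtain ⟨n, hn, k, hP, hd⟩ := h ε hε
  have e1 : (n : ℤ) * a = b * k := by
    have : (g : ℤ) * (n * a) = g * (b * k) := by
      rw [ha, hb] at hP; linarith
    exact mul_left_cancel₀ (by positivity) this
  obtain ⟨s, hs⟩ : (b : ℤ) ∣ n := hcop.dvd_of_dvd_mul_right ⟨k, e1⟩
  have hs0 : 0 ≤ s := by
    by_contra hcon
    have : (b : ℤ) * s ≤ 0 := mul_nonpos_of_nonneg_of_nonpos (by positivity) (by omega)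
    omega
  obtain ⟨s, rfl⟩ := Int.eq_ofNat_of_zero_le hs0
  have hns : n = b * s := by exact_mod_cast hs
  have hk : k = s * a := by
    have : (b : ℤ) * k = b * (s * a) := by rw [← e1, hns]; push_cast; ring
    exact mul_left_cancel₀ (by positivity) this
  have hGf : (G : Plane → Plane) = fun y => Tr (-a) (F^[b] y) := funext hG
  refine dl0 G hiso hfix _ (convex_ball v ε) hball v (Metric.mem_ball_self hε) s ?_ ?_
  · rcases Nat.eq_zero_or_pos s with rfl | h
    · simp at hns; omega
    · exact h
  · rw [hGf, TrF_iter hF.comm, Metric.mem_ball, ← hns]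
    convert hd using 3
    rw [hk]; ring

theorem comp_per_pos {F : Plane ≃ₜ Plane} (hF : Good F) {U : Set Plane} (hUo : IsOpen U)
    (hUT : TInv U) (hU : ∀ x ∈ U, F x ∈ U) {v : Plane} (hv : v ∈ U)
    (hr : Ret F v (fun _ _ => True)) :
    ∃ j : ℤ, 1 ≤ j ∧ Tr j v ∈ connectedComponentIn U v := by
  by_contra hcon
  obtain ⟨ε, hε, hb⟩ := Metric.isOpen_iff.1 (hUo.connectedComponentIn (x := v)) v
    (mem_connectedComponentIn hv)
  obtain ⟨n0, hn0, k0, -, h0⟩ := hr ε hε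
  refine prop_false hF v n0 hn0 k0 ?_
  intro δ hδ
  obtain ⟨n, hn, k, -, h1⟩ := hr (min ε δ) (by positivity)
  rw [lt_min_iff] at h1
  refine ⟨n, hn, k, ?_, h1.2⟩
  by_contra hne
  exact hcon (per_core F.continuous hF.comm hUT hU hv (hb h1.1) (hb h0) hne)

theorem symm_comm {F : Plane ≃ₜ Plane} (h : CommT F) : CommT F.symm := by
  intro k p
  apply F.injective
  rw [h]; simp

theorem symm_iter (F : Plane ≃ₜ Plane) (n : ℕ) (x : Plane) : F.symm^[n] (F^[n] x) = x := by
  induction n generalizing x with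
  | zero => rfl
  | succ n ih =>
    rw [Function.iterate_succ_apply' F, Function.iterate_succ_apply F.symm, F.symm_apply_apply, ih]

theorem comp_per_neg {F : Plane ≃ₜ Plane} (hF : Good F) {U : Set Plane} (hUo : IsOpen U)
    (hUT : TInv U) (hU : ∀ x ∈ U, F.symm x ∈ U) {v : Plane} (hv : v ∈ U)
    (hr : Ret F v (fun _ _ => True)) :
    ∃ j : ℤ, 1 ≤ j ∧ Tr j v ∈ connectedComponentIn U v := by
  by_contra hcon
  have sc := symm_comm hF.comm
  obtain ⟨ε, hε, hb⟩ := Metric.isOpen_iff.1 (hUo.connectedComponentIn (x := v)) v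
    (mem_connectedComponentIn hv)
  have back : ∀ (n : ℕ) (k : ℤ), Tr (-k) (F^[n] v) ∈ connectedComponentIn U v →
      Tr (- -k) (F.symm^[n] v) ∈ connectedComponentIn U v := by
    intro n k h
    refine comp_map (S := fun y => Tr (- -k) (F.symm^[n] y)) ?_ ?_ h ?_ v (mem_connectedComponentIn hv)
    · exact (Tr_cont _).comp (F.symm.continuous.iterate n)
    · intro x hx
      exact hUT _ _ (iter_maps hU n x hx)
    · show Tr (- -k) (F.symm^[n] (Tr (-k) (F^[n] v))) ∈ _
      rw [sc.iter n, Tr_Tr, symm_iter]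
      simpa using mem_connectedComponentIn hv
  obtain ⟨n0, hn0, k0, -, h0⟩ := hr ε hε
  refine prop_false hF v n0 hn0 k0 ?_
  intro δ hδ
  obtain ⟨n, hn, k, -, h1⟩ := hr (min ε δ) (by positivity)
  rw [lt_min_iff] at h1
  refine ⟨n, hn, k, ?_, h1.2⟩
  by_contra hne
  refine hcon (per_core F.symm.continuous sc hUT hU hv (back _ _ (hb h1.1)) (back _ _ (hb h0)) ?_)
  intro h
  apply hne
  linarith

/-- If no component of the open invariant set `W` is periodic under the deck group, there is an
integer valued map on `W`, constant on components, with `ψ ∘ T = ψ + 1`. -/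
theorem exists_psi {W : Set Plane} (hWT : TInv W)
    (hno : ∀ w ∈ W, ∀ k : ℤ, k ≠ 0 → Tr k w ∉ connectedComponentIn W w) :
    ∃ ψ : Plane → ℤ, (∀ w ∈ W, ∀ y ∈ connectedComponentIn W w, ψ y = ψ w) ∧
      ∀ w ∈ W, ψ (Tr 1 w) = ψ w + 1 := by
  have tr : ∀ k w, Tr k '' connectedComponentIn W w ⊆ connectedComponentIn W (Tr k w) := by
    intro k w
    by_cases hw : w ∈ W
    · apply (isPreconnected_connectedComponentIn.image _ (Tr_cont k).continuousOn).subset_connectedComponentIn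
      · exact ⟨w, mem_connectedComponentIn hw, rfl⟩
      · rintro _ ⟨x, hx, rfl⟩
        exact hWT _ _ (connectedComponentIn_subset _ _ hx)
    · rw [connectedComponentIn_eq_empty hw]; simp
  have tr' : ∀ k w x, x ∈ connectedComponentIn W w → Tr k x ∈ connectedComponentIn W (Tr k w) :=
    fun k w x hx => tr k w ⟨x, hx, rfl⟩
  let cl : Plane → Set Plane := fun w => {x | ∃ k : ℤ, Tr k x ∈ connectedComponentIn W w}
  have clmem : ∀ w ∈ W, w ∈ cl w := fun w hw => ⟨0, by simpa using mem_connectedComponentIn hw⟩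
  let r : Plane → Plane := fun w => Classical.epsilon (fun x => x ∈ cl w)
  have hr : ∀ w ∈ W, ∃ k : ℤ, Tr k (r w) ∈ connectedComponentIn W w := fun w hw =>
    Classical.epsilon_spec (p := fun x => x ∈ cl w) ⟨w, clmem w hw⟩
  have rcl : ∀ w w', cl w = cl w' → r w = r w' := by
    intro w w' h
    simp only [r, h]
  let ψ : Plane → ℤ := fun w => Classical.epsilon (fun k : ℤ => Tr k (r w) ∈ connectedComponentIn W w)
  have hψ : ∀ w ∈ W, Tr (ψ w) (r w) ∈ connectedComponentIn W w := fun w hw =>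
    Classical.epsilon_spec (p := fun k : ℤ => Tr k (r w) ∈ connectedComponentIn W w) (hr w hw)
  have uniq : ∀ w x, ∀ k k' : ℤ, Tr k x ∈ connectedComponentIn W w →
      Tr k' x ∈ connectedComponentIn W w → k = k' := by
    intro w x k k' h h'
    by_contra hne
    have hxW := connectedComponentIn_subset _ _ h
    rw [connectedComponentIn_eq h] at h'
    refine hno _ hxW (k' - k) (by omega) ?_
    rw [Tr_Tr]; simpa using h'
  refine ⟨ψ, ?_, ?_⟩
  · intro w hw y hy
    have hyW := connectedComponentIn_subset _ _ hy
    have e := connectedComponentIn_eq hy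
    have h1 := hψ y hyW
    have h2 := hψ w hw
    have e' : r y = r w := rcl _ _ (by simp only [cl, e])
    rw [← e, e'] at h1
    exact uniq _ _ _ _ h1 h2
  · intro w hw
    have h1 := hψ _ (hWT 1 w hw)
    have h2 := tr' 1 _ _ (hψ w hw)
    have e' : r (Tr 1 w) = r w := by
      apply rcl
      ext x
      constructor
      · rintro ⟨k, hk⟩
        refine ⟨k - 1, ?_⟩
        have := tr' (-1) _ _ hk
        simp only [Tr_Tr] at this
        simpa [add_comm, sub_eq_add_neg] using this
      · rintro ⟨k, hk⟩
        refine ⟨1 + k, ?_⟩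
        have := tr' 1 _ _ hk
        simpa only [Tr_Tr] using this
    rw [e'] at h1
    rw [Tr_Tr] at h2
    have := uniq _ _ _ _ h1 h2
    omega

theorem sep_comp {M N : Set Plane} (hM : IsClosed M) (hN : IsClosed N) (hMT : TInv M) (hNT : TInv N)
    (hdisj : ∀ x ∈ M, x ∉ N) {a b : Plane} {k l : ℤ} (hk : 1 ≤ k) (hl : 1 ≤ l)
    {A B : Set Plane} (hA : IsPreconnected A) (hAM : A ⊆ M) (ha : a ∈ A) (ha' : Tr k a ∈ A)
    (hB : IsPreconnected B) (hBN : B ⊆ N) (hb : b ∈ B) (hb' : Tr l b ∈ B) :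
    ∃ w ∈ (M ∪ N)ᶜ, ∃ j : ℤ, j ≠ 0 ∧ Tr j w ∈ connectedComponentIn (M ∪ N)ᶜ w := by
  by_contra hcon
  push Not at hcon
  have hWo : IsOpen (M ∪ N)ᶜ := (hM.union hN).isOpen_compl
  have hWT : TInv (M ∪ N)ᶜ := by
    apply TInv.compl
    rintro k p (h | h)
    · exact Or.inl (hMT k p h)
    · exact Or.inr (hNT k p h)
  obtain ⟨ψ, hψ1, hψ2⟩ := exists_psi hWT hcon
  have neM : M.Nonempty := ⟨a, hAM ha⟩
  have neN : N.Nonempty := ⟨b, hBN hb⟩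
  let dM : Plane → ℝ := fun x => Metric.infDist x M
  let dN : Plane → ℝ := fun x => Metric.infDist x N
  have dMc : Continuous dM := Metric.continuous_infDist_pt _
  have dNc : Continuous dN := Metric.continuous_infDist_pt _
  have dM0 : ∀ x, 0 ≤ dM x := fun x => Metric.infDist_nonneg
  have dN0 : ∀ x, 0 ≤ dN x := fun x => Metric.infDist_nonneg
  have zM : ∀ x, dM x = 0 ↔ x ∈ M := fun x => (hM.mem_iff_infDist_zero neM).symm
  have zN : ∀ x, dN x = 0 ↔ x ∈ N := fun x => (hN.mem_iff_infDist_zero neN).symm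
  have pos : ∀ x, 0 < dM x + dN x := by
    intro x
    rcases (dM0 x).eq_or_lt with h | h
    · have h1 := (zM x).1 h.symm
      have h2 : dN x ≠ 0 := fun h => hdisj x h1 ((zN x).1 h)
      have := lt_of_le_of_ne (dN0 x) (Ne.symm h2)
      linarith
    · linarith [dN0 x]
  let h : Plane → ℝ := fun x => dM x / (dM x + dN x)
  have hc : Continuous h := dMc.div (dMc.add dNc) (fun x => (pos x).ne')
  have hM0 : ∀ x ∈ M, h x = 0 := fun x hx => by simp [h, (zM x).2 hx]
  have hN1 : ∀ x ∈ N, h x = 1 := fun x hx => by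
    have := pos x
    simp only [h, (zN x).2 hx, add_zero] at this ⊢
    exact div_self this.ne'
  have hT : ∀ x, h (Tr 1 x) = h x := fun x => by
    simp only [h, dM, dN, infDist_Tr hMT, infDist_Tr hNT]
  let ρ : ℝ → ℝ := fun t => max 0 (min 1 (2 - 3 * t))
  have ρc : Continuous ρ := by fun_prop
  have ρ1 : ∀ t, t ≤ 1 / 3 → ρ t = 1 := fun t ht => by
    simp only [ρ]; rw [min_eq_left (by linarith)]; norm_num
  have ρ0 : ∀ t, 2 / 3 ≤ t → ρ t = 0 := fun t ht => by
    simp only [ρ]; rw [max_eq_left]; exact (min_le_right _ _).trans (by linarith)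
  let Φ : Plane → ℂ := fun x =>
    Complex.exp (2 * Real.pi * Complex.I * ((ρ (h x) : ℝ) * ((x.1 : ℂ) - (ψ x : ℂ))))
  have Φ1 : ∀ x, h x ≤ 1 / 3 → Φ x = Complex.exp (2 * Real.pi * Complex.I * (x.1 : ℂ)) := by
    intro x hx
    simp only [Φ, ρ1 _ hx]
    rw [Complex.exp_eq_exp_iff_exists_int]
    exact ⟨-ψ x, by push_cast; ring⟩
  have Φ0 : ∀ x, 2 / 3 ≤ h x → Φ x = 1 := by
    intro x hx
    simp [Φ, ρ0 _ hx]
  have Φc : Continuous Φ := by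
    rw [continuous_iff_continuousAt]
    intro x
    by_cases h1 : h x < 1 / 3
    · have : Φ =ᶠ[𝓝 x] fun x => Complex.exp (2 * Real.pi * Complex.I * (x.1 : ℂ)) := by
        filter_upwards [hc.continuousAt.eventually (gt_mem_nhds h1)] with y hy
        exact Φ1 y (le_of_lt hy)
      refine ContinuousAt.congr ?_ this.symm
      apply Continuous.continuousAt
      fun_prop
    by_cases h2 : 2 / 3 < h x
    · have : Φ =ᶠ[𝓝 x] fun _ => 1 := by
        filter_upwards [hc.continuousAt.eventually (lt_mem_nhds h2)] with y hy
        exact Φ0 y (le_of_lt hy)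
      exact ContinuousAt.congr continuousAt_const this.symm
    have hxW : x ∈ (M ∪ N)ᶜ := by
      rintro (hx | hx)
      · rw [hM0 x hx] at h1; norm_num at h1
      · rw [hN1 x hx] at h2; norm_num at h2
    have : Φ =ᶠ[𝓝 x] fun y =>
        Complex.exp (2 * Real.pi * Complex.I * ((ρ (h y) : ℝ) * ((y.1 : ℂ) - (ψ x : ℂ)))) := by
      filter_upwards [hWo.connectedComponentIn.mem_nhds (mem_connectedComponentIn hxW)] with y hy
      simp only [Φ, hψ1 x hxW y hy]
    refine ContinuousAt.congr ?_ this.symm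
    apply Continuous.continuousAt
    fun_prop
  have ΦT : ∀ x, Φ (Tr 1 x) = Φ x := by
    intro x
    by_cases hx : x ∈ (M ∪ N)ᶜ
    · have e1 : (Tr 1 x).1 = x.1 + 1 := by simp [Tr]
      simp only [Φ, hT, hψ2 x hx, e1]
      congr 1; push_cast; ring
    · rw [notMem_compl_iff] at hx
      rcases hx with hx | hx
      · have := hM0 x hx
        rw [Φ1 _ (by rw [hT, this]; norm_num), Φ1 _ (by rw [this]; norm_num),
          Complex.exp_eq_exp_iff_exists_int]
        exact ⟨1, by simp only [Tr]; push_cast; ring⟩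
      · have := hN1 x hx
        rw [Φ0 _ (by rw [hT, this]; norm_num), Φ0 _ (by rw [this]; norm_num)]
  obtain ⟨L, Lc, hL⟩ := log_lift Φ Φc (fun x => Complex.exp_ne_zero _)
  obtain ⟨μ, hμ⟩ : ∃ μ, ∀ x, L (Tr 1 x) = L x + μ := by
    refine ⟨L (Tr 1 0) - L 0, fun x => ?_⟩
    have := exp_const (fun x => L (Tr 1 x)) L (Lc.comp (Tr_cont 1)) Lc
      (fun x => by rw [hL, hL, ΦT]) x 0
    linear_combination this
  have hμn : ∀ (n : ℕ) x, L (Tr n x) = L x + n * μ := by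
    intro n x
    induction n with
    | zero => simp
    | succ n ih =>
      have : Tr ((n + 1 : ℕ) : ℤ) x = Tr 1 (Tr n x) := by rw [Tr_Tr]; push_cast; rw [add_comm]
      rw [this, hμ, ih]; push_cast; ring
  obtain ⟨k, rfl⟩ := Int.eq_ofNat_of_zero_le (show 0 ≤ k by omega)
  obtain ⟨l, rfl⟩ := Int.eq_ofNat_of_zero_le (show 0 ≤ l by omega)
  have eA : (k : ℂ) * μ = k * (2 * Real.pi * Complex.I) := by
    have : PreconnectedSpace A := Subtype.preconnectedSpace hA
    have := exp_const (A := A) (fun x => L x) (fun x => 2 * Real.pi * Complex.I * (x.1.1 : ℂ))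
      (by fun_prop) (by fun_prop)
      (fun x => by rw [hL, Φ1 _ (by rw [hM0 _ (hAM x.2)]; norm_num)]) ⟨_, ha'⟩ ⟨a, ha⟩
    simp only [hμn] at this
    simp only [Tr] at this
    push_cast at this
    linear_combination this
  have eB : (l : ℂ) * μ = 0 := by
    have : PreconnectedSpace B := Subtype.preconnectedSpace hB
    have := exp_const (A := B) (fun x => L x) (fun x => 0)
      (by fun_prop) (by fun_prop)
      (fun x => by rw [hL, Φ0 _ (by rw [hN1 _ (hBN x.2)]; norm_num)]; simp) ⟨_, hb'⟩ ⟨b, hb⟩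
    simp only [hμn] at this
    linear_combination this
  have hl0 : (l : ℂ) ≠ 0 := by
    have : l ≠ 0 := by omega
    exact_mod_cast this
  have hk0 : (k : ℂ) ≠ 0 := by
    have : k ≠ 0 := by omega
    exact_mod_cast this
  have hμ0 : μ = 0 := (mul_eq_zero.1 eB).resolve_left hl0
  rw [hμ0, mul_zero] at eA
  exact mul_ne_zero hk0 Complex.two_pi_I_ne_zero eA.symm

/-- unit vectors of the lattice -/
def UnitV (d : ℤ × ℤ) : Prop := d = (1, 0) ∨ d = (-1, 0) ∨ d = (0, 1) ∨ d = (0, -1)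

/-- points of scaled lattice edges -/
def pt (N : ℕ) (a d : ℤ × ℤ) (t : ℝ) : Plane :=
  ((a.1 + t * d.1) / (N : ℝ), (a.2 + t * d.2) / (N : ℝ))

/-- lattice edges inside `W` -/
def LEdge (W : Set Plane) (N : ℕ) (a b : ℤ × ℤ) : Prop :=
  UnitV (b - a) ∧ ∀ t : ℝ, 0 ≤ t → t ≤ 1 → pt N a (b - a) t ∈ W

theorem le_step1 {W : Set Plane} {N : ℕ} (a : ℤ × ℤ) (e : ℤ) (he : e = -1 ∨ e = 0 ∨ e = 1)
    (h : ∀ t : ℝ, 0 ≤ t → t ≤ 1 → pt N a (e, 0) t ∈ W) :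
    Relation.ReflTransGen (LEdge W N) a (a + (e, 0)) := by
  by_cases h0 : e = 0
  · subst h0
    rw [show a + ((0 : ℤ), (0 : ℤ)) = a from add_zero a]
  · apply Relation.ReflTransGen.single
    refine ⟨?_, ?_⟩
    · rw [add_sub_cancel_left]
      rcases he with rfl | rfl | rfl
      · right; left; rfl
      · exact absurd rfl h0
      · left; rfl
    · rw [add_sub_cancel_left]; exact h

theorem le_step2 {W : Set Plane} {N : ℕ} (a : ℤ × ℤ) (e : ℤ) (he : e = -1 ∨ e = 0 ∨ e = 1)
    (h : ∀ t : ℝ, 0 ≤ t → t ≤ 1 → pt N a (0, e) t ∈ W) :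
    Relation.ReflTransGen (LEdge W N) a (a + (0, e)) := by
  by_cases h0 : e = 0
  · subst h0
    rw [show a + ((0 : ℤ), (0 : ℤ)) = a from add_zero a]
  · apply Relation.ReflTransGen.single
    refine ⟨?_, ?_⟩
    · rw [add_sub_cancel_left]
      rcases he with rfl | rfl | rfl
      · right; right; right; rfl
      · exact absurd rfl h0
      · right; right; left; rfl
    · rw [add_sub_cancel_left]; exact h

/-- lattice cell of a point -/
def cell (N : ℕ) (x : Plane) : ℤ × ℤ := (⌊(N : ℝ) * x.1⌋, ⌊(N : ℝ) * x.2⌋)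

theorem floor_near {u v : ℝ} (h : |u - v| < 1) :
    ⌊v⌋ - ⌊u⌋ = -1 ∨ ⌊v⌋ - ⌊u⌋ = 0 ∨ ⌊v⌋ - ⌊u⌋ = 1 := by
  rw [abs_lt] at h
  have a1 := Int.floor_le u
  have a2 := Int.lt_floor_add_one u
  have b1 := Int.floor_le v
  have b2 := Int.lt_floor_add_one v
  have h1 : ((⌊v⌋ - ⌊u⌋ : ℤ) : ℝ) < 2 := by push_cast; linarith
  have h2 : (-2 : ℝ) < ((⌊v⌋ - ⌊u⌋ : ℤ) : ℝ) := by push_cast; linarith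
  have h1' : ⌊v⌋ - ⌊u⌋ < 2 := by exact_mod_cast h1
  have h2' : -2 < ⌊v⌋ - ⌊u⌋ := by exact_mod_cast h2
  omega

theorem cell_close {N : ℕ} (hN : 1 ≤ N) {x q : Plane} {δ : ℝ} (hδ : 2 < N * δ)
    (h1 : |N * q.1 - N * x.1| ≤ 2) (h2 : |N * q.2 - N * x.2| ≤ 2) : dist q x < δ := by
  have hN0 : (0 : ℝ) < N := by exact_mod_cast hN
  rw [← mul_sub, abs_mul, abs_of_pos hN0] at h1 h2
  rw [Prod.dist_eq, max_lt_iff, Real.dist_eq, Real.dist_eq]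
  constructor <;> nlinarith

theorem cell_step {W : Set Plane} {N : ℕ} (hN : 1 ≤ N) {δ : ℝ} (hδ : 2 < N * δ) {x y : Plane}
    (hx : Metric.ball x δ ⊆ W) (hxy : N * dist x y < 1) :
    Relation.ReflTransGen (LEdge W N) (cell N x) (cell N y) := by
  have hN0 : (0 : ℝ) < N := by exact_mod_cast hN
  have d1 : |N * x.1 - N * y.1| < 1 := by
    rw [← mul_sub, abs_mul, abs_of_pos hN0]
    refine lt_of_le_of_lt ?_ hxy
    gcongr
    rw [Prod.dist_eq, ← Real.dist_eq]; exact le_max_left _ _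
  have d2 : |N * x.2 - N * y.2| < 1 := by
    rw [← mul_sub, abs_mul, abs_of_pos hN0]
    refine lt_of_le_of_lt ?_ hxy
    gcongr
    rw [Prod.dist_eq, ← Real.dist_eq]; exact le_max_right _ _
  have f1 := floor_near d1
  have f2 := floor_near d2
  set e1 := ⌊(N : ℝ) * y.1⌋ - ⌊(N : ℝ) * x.1⌋ with he1
  set e2 := ⌊(N : ℝ) * y.2⌋ - ⌊(N : ℝ) * x.2⌋ with he2
  have ey : cell N y = cell N x + (e1, 0) + (0, e2) := by
    simp only [cell, Prod.mk_add_mk, he1, he2]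
    ext <;> simp
  have a1 := Int.floor_le ((N : ℝ) * x.1)
  have a2 := Int.lt_floor_add_one ((N : ℝ) * x.1)
  have b1 := Int.floor_le ((N : ℝ) * x.2)
  have b2 := Int.lt_floor_add_one ((N : ℝ) * x.2)
  have bd : ∀ e : ℤ, (e = -1 ∨ e = 0 ∨ e = 1) → (-1 : ℝ) ≤ e ∧ (e : ℝ) ≤ 1 := by
    rintro e (rfl | rfl | rfl) <;> norm_num
  have g1 := bd _ f1
  have g2 := bd _ f2
  rw [ey]
  refine (le_step1 _ e1 f1 ?_).trans (le_step2 _ e2 f2 ?_)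
  · intro t t0 t1
    apply hx
    rw [Metric.mem_ball]
    apply cell_close hN hδ
    · simp only [pt, cell]
      rw [mul_div_cancel₀ _ hN0.ne', abs_le]
      constructor <;> nlinarith
    · simp only [pt, cell]
      rw [mul_div_cancel₀ _ hN0.ne', abs_le]
      push_cast
      constructor <;> nlinarith
  · intro t t0 t1
    apply hx
    rw [Metric.mem_ball]
    apply cell_close hN hδ
    · simp only [pt, cell, Prod.mk_add_mk]
      rw [mul_div_cancel₀ _ hN0.ne', abs_le]
      push_cast
      constructor <;> nlinarith
    · simp only [pt, cell, Prod.mk_add_mk]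
      rw [mul_div_cancel₀ _ hN0.ne', abs_le]
      push_cast
      constructor <;> nlinarith

theorem lattice_walk {W : Set Plane} (hW : IsOpen W) {w : Plane} (hw : w ∈ W) {j : ℤ}
    (hj : Tr j w ∈ connectedComponentIn W w) :
    ∃ N : ℕ, 3 ≤ N ∧ ∃ a, Relation.ReflTransGen (LEdge W N) a (a + (j * N, 0)) := by
  have hC : IsPathConnected (connectedComponentIn W w) := by
    rw [← (hW.connectedComponentIn).isConnected_iff_isPathConnected]
    exact isConnected_connectedComponentIn_iff.2 hw
  obtain ⟨γ, hγ⟩ := hC.joinedIn w (mem_connectedComponentIn hw) _ hj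
  have Kc : IsCompact (range γ) := isCompact_range γ.continuous
  have Kp : IsPreconnected (range γ) := isPreconnected_range γ.continuous
  have KW : range γ ⊆ W := by
    rintro _ ⟨t, rfl⟩
    exact connectedComponentIn_subset _ _ (hγ t)
  obtain ⟨δ, hδ, hth⟩ := Kc.exists_thickening_subset_open hW KW
  obtain ⟨n, hn⟩ := exists_nat_gt (2 / δ)
  have hN : (1 : ℕ) ≤ n + 3 := by omega
  have hNδ : 2 < ((n + 3 : ℕ) : ℝ) * δ := by
    rw [div_lt_iff₀ hδ] at hn
    push_cast; nlinarith
  set N := n + 3 with hNdef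
  have hN0 : (0 : ℝ) < N := by exact_mod_cast hN
  refine ⟨N, by omega, cell N w, ?_⟩
  have hball : ∀ x ∈ range γ, Metric.ball x δ ⊆ W := fun x hx y hy =>
    hth (Metric.mem_thickening_iff.2 ⟨x, hx, hy⟩)
  have main : Relation.ReflTransGen (LEdge W N) (cell N w) (cell N (Tr j w)) := by
    refine Kp.induction₂' (fun x y => Relation.ReflTransGen (LEdge W N) (cell N x) (cell N y)) ?_
      ?_ ⟨0, γ.source⟩ ⟨1, γ.target⟩
    · intro x hx
      filter_upwards [self_mem_nhdsWithin, nhdsWithin_le_nhds (Metric.ball_mem_nhds x (show (0:ℝ) < 1 / N by positivity))]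
        with y hy hxy
      rw [Metric.mem_ball, lt_div_iff₀ hN0] at hxy
      refine ⟨cell_step hN hNδ (hball x hx) ?_, cell_step hN hNδ (hball y hy) ?_⟩
      · rw [dist_comm]; linarith
      · linarith
    · intro x y z _ _ _ h1 h2
      exact h1.trans h2
  convert main using 1
  simp only [cell, Tr, Prod.mk_add_mk, add_zero]
  rw [mul_add, show (N : ℝ) * (j : ℝ) = ((j * N : ℤ) : ℝ) by push_cast; ring, Int.floor_add_intCast]

theorem edge_meet {a b d e : ℤ × ℤ} (hd : UnitV d) (he : UnitV e) {s t : ℝ} (hs0 : 0 ≤ s) (hs : s < 1)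
    (ht0 : 0 ≤ t) (ht : t < 1) (h1 : (a.1 : ℝ) + s * d.1 = b.1 + t * e.1)
    (h2 : (a.2 : ℝ) + s * d.2 = b.2 + t * e.2) :
    (a = b ∧ s = t) ∨ (b = a + d ∧ a = b + e) := by
  have key : ∀ (m n : ℤ) (x : ℝ), 0 ≤ x → x < 1 → (m : ℝ) = n + x → m = n ∧ x = 0 := by
    intro m n x h0 h1 h
    have u1 : (m : ℝ) < (n + 1 : ℤ) := by push_cast; linarith
    have u2 : (n : ℝ) ≤ m := by linarith
    have u1' : m < n + 1 := by exact_mod_cast u1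
    have u2' : n ≤ m := by exact_mod_cast u2
    have : m = n := by omega
    subst this
    exact ⟨rfl, by linarith⟩
  have key2 : ∀ (m n : ℤ) (x : ℝ), -1 < x → x < 1 → (m : ℝ) = n + x → m = n ∧ x = 0 := by
    intro m n x h0 h1 h
    have u1 : (m : ℝ) < (n + 1 : ℤ) := by push_cast; linarith
    have u2 : ((n - 1 : ℤ) : ℝ) < m := by push_cast; linarith
    have u1' : m < n + 1 := by exact_mod_cast u1
    have u2' : n - 1 < m := by exact_mod_cast u2
    have : m = n := by omega
    subst this
    exact ⟨rfl, by linarith⟩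
  have key3 : ∀ (m n : ℤ), (m : ℝ) + s = n - t → (m = n ∧ s = 0 ∧ t = 0) ∨ (n = m + 1) := by
    intro m n h
    have u1 : (m : ℝ) ≤ n := by linarith
    have u2 : (n : ℝ) < (m + 2 : ℤ) := by push_cast; linarith
    have u1' : m ≤ n := by exact_mod_cast u1
    have u2' : n < m + 2 := by exact_mod_cast u2
    rcases (show n = m ∨ n = m + 1 by omega) with h | h
    · subst h; left; exact ⟨rfl, by linarith, by linarith⟩
    · right; exact h
  have key4 : ∀ (m n : ℤ), (m : ℝ) - s = n + t → (m = n ∧ s = 0 ∧ t = 0) ∨ (m = n + 1) := by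
    intro m n h
    have u1 : (n : ℝ) ≤ m := by linarith
    have u2 : (m : ℝ) < (n + 2 : ℤ) := by push_cast; linarith
    have u1' : n ≤ m := by exact_mod_cast u1
    have u2' : m < n + 2 := by exact_mod_cast u2
    rcases (show m = n ∨ m = n + 1 by omega) with h | h
    · subst h; left; exact ⟨rfl, by linarith, by linarith⟩
    · right; exact h
  obtain ⟨a1, a2⟩ := a
  obtain ⟨b1, b2⟩ := b
  have same : ∀ u v : ℤ, (u : ℝ) = v → u = v := fun u v h => by exact_mod_cast h
  rcases hd with rfl | rfl | rfl | rfl <;> rcases he with rfl | rfl | rfl | rfl <;>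
    simp only [Int.cast_one, Int.cast_zero, Int.cast_neg, mul_one, mul_zero, mul_neg, add_zero,
      ← sub_eq_add_neg] at h1 h2
  · obtain ⟨r1, r2⟩ := key2 a1 b1 (t - s) (by linarith) (by linarith) (by linarith)
    left; exact ⟨Prod.ext r1 (same _ _ h2), by linarith⟩
  · have r := same _ _ h2
    rcases key3 _ _ h1 with ⟨r1, r2, r3⟩ | r1
    · left; exact ⟨Prod.ext r1 r, by linarith⟩
    · right; constructor <;> ext <;> simp <;> omega
  · obtain ⟨r1, r2⟩ := key b1 a1 s hs0 hs (by linarith)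
    obtain ⟨r3, r4⟩ := key a2 b2 t ht0 ht (by linarith)
    left; exact ⟨Prod.ext r1.symm r3, by linarith⟩
  · obtain ⟨r1, r2⟩ := key b1 a1 s hs0 hs (by linarith)
    obtain ⟨r3, r4⟩ := key b2 a2 t ht0 ht (by linarith)
    left; exact ⟨Prod.ext r1.symm r3.symm, by linarith⟩
  · have r := same _ _ h2
    rcases key4 _ _ h1 with ⟨r1, r2, r3⟩ | r1
    · left; exact ⟨Prod.ext r1 r, by linarith⟩
    · right; constructor <;> ext <;> simp <;> omega
  · obtain ⟨r1, r2⟩ := key2 a1 b1 (s - t) (by linarith) (by linarith) (by linarith)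
    left; exact ⟨Prod.ext r1 (same _ _ h2), by linarith⟩
  · obtain ⟨r1, r2⟩ := key a1 b1 s hs0 hs (by linarith)
    obtain ⟨r3, r4⟩ := key a2 b2 t ht0 ht (by linarith)
    left; exact ⟨Prod.ext r1 r3, by linarith⟩
  · obtain ⟨r1, r2⟩ := key a1 b1 s hs0 hs (by linarith)
    obtain ⟨r3, r4⟩ := key b2 a2 t ht0 ht (by linarith)
    left; exact ⟨Prod.ext r1 r3.symm, by linarith⟩
  · obtain ⟨r1, r2⟩ := key a1 b1 t ht0 ht (by linarith)
    obtain ⟨r3, r4⟩ := key b2 a2 s hs0 hs (by linarith)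
    left; exact ⟨Prod.ext r1 r3.symm, by linarith⟩
  · obtain ⟨r1, r2⟩ := key b1 a1 t ht0 ht (by linarith)
    obtain ⟨r3, r4⟩ := key b2 a2 s hs0 hs (by linarith)
    left; exact ⟨Prod.ext r1.symm r3.symm, by linarith⟩
  · obtain ⟨r1, r2⟩ := key2 a2 b2 (t - s) (by linarith) (by linarith) (by linarith)
    left; exact ⟨Prod.ext (same _ _ h1) r1, by linarith⟩
  · have r := same _ _ h1
    rcases key3 _ _ h2 with ⟨r1, r2, r3⟩ | r1
    · left; exact ⟨Prod.ext r r1, by linarith⟩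
    · right; constructor <;> ext <;> simp <;> omega
  · obtain ⟨r1, r2⟩ := key a1 b1 t ht0 ht (by linarith)
    obtain ⟨r3, r4⟩ := key a2 b2 s hs0 hs (by linarith)
    left; exact ⟨Prod.ext r1 r3, by linarith⟩
  · obtain ⟨r1, r2⟩ := key b1 a1 t ht0 ht (by linarith)
    obtain ⟨r3, r4⟩ := key a2 b2 s hs0 hs (by linarith)
    left; exact ⟨Prod.ext r1.symm r3, by linarith⟩
  · have r := same _ _ h1
    rcases key4 _ _ h2 with ⟨r1, r2, r3⟩ | r1
    · left; exact ⟨Prod.ext r r1, by linarith⟩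
    · right; constructor <;> ext <;> simp <;> omega
  · obtain ⟨r1, r2⟩ := key2 a2 b2 (s - t) (by linarith) (by linarith) (by linarith)
    left; exact ⟨Prod.ext (same _ _ h1) r1, by linarith⟩

theorem coe_circ {x y : ℝ} : (x : AddCircle (1 : ℝ)) = y ↔ ∃ m : ℤ, x = y + m := by
  rw [← sub_eq_zero, ← AddCircle.coe_sub, AddCircle.coe_eq_zero_iff]
  constructor
  · rintro ⟨n, hn⟩
    refine ⟨n, ?_⟩
    simp at hn
    linarith
  · rintro ⟨n, hn⟩
    refine ⟨n, ?_⟩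
    simp
    linarith

theorem prj_eq {p q : Plane} : prj p = prj q ↔ ∃ m : ℤ, p = Tr m q := by
  simp only [prj, Tr, Prod.mk.injEq, coe_circ]
  constructor
  · rintro ⟨⟨m, h1⟩, h2⟩
    exact ⟨m, Prod.ext h1 h2⟩
  · rintro ⟨m, h⟩
    exact ⟨⟨m, by rw [h]⟩, by rw [h]⟩

theorem prj_cont : Continuous prj := by
  unfold prj
  exact (AddCircle.continuous_mk' 1 |>.comp continuous_fst).prodMk continuous_snd

/-- clamp to the unit interval -/
def clamp (u : ℝ) : ℝ := max 0 (min 1 u)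

/-- piecewise linear interpolation -/
def pl (u : ℕ → ℝ) (L : ℕ) (s : ℝ) : ℝ :=
  u 0 + ∑ m ∈ Finset.range L, clamp (s - m) * (u (m + 1) - u m)

theorem pl_cont (u : ℕ → ℝ) (L : ℕ) : Continuous (pl u L) := by
  unfold pl clamp
  fun_prop

theorem pl_apply (u : ℕ → ℝ) {L i : ℕ} (hi : i < L) {t : ℝ} (t0 : 0 ≤ t) (t1 : t ≤ 1) :
    pl u L (i + t) = u i + t * (u (i + 1) - u i) := by
  induction L, (show i + 1 ≤ L from hi) using Nat.le_induction with
  | base =>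
    unfold pl
    rw [Finset.sum_range_succ]
    have h1 : ∀ m ∈ Finset.range i, clamp (i + t - m) * (u (m + 1) - u m) = u (m + 1) - u m := by
      intro m hm
      have : (m : ℝ) + 1 ≤ i := by exact_mod_cast Finset.mem_range.1 hm
      rw [clamp, min_eq_left (by linarith), max_eq_right (by norm_num), one_mul]
    rw [Finset.sum_congr rfl h1, Finset.sum_range_sub]
    have h2 : clamp (i + t - i) = t := by
      rw [add_sub_cancel_left, clamp, min_eq_right t1, max_eq_right t0]
    rw [h2]; ring
  | succ L hL ih =>
    have := ih (by omega)
    unfold pl at this ⊢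
    rw [Finset.sum_range_succ, ← add_assoc, this]
    have hL' : (i : ℝ) + 1 ≤ L := by exact_mod_cast hL
    have : clamp (i + t - L) = 0 := by
      rw [clamp, max_eq_left]
      exact (min_le_right _ _).trans (by linarith)
    rw [this]; ring

theorem not_null {φ : C(AddCircle (1 : ℝ), Ann)} {g : ℝ → Plane} (hg : Continuous g)
    (h : ∀ s : ℝ, 0 ≤ s → s ≤ 1 → φ (s : AddCircle (1 : ℝ)) = prj (g s)) {k : ℤ} (hk : k ≠ 0)
    (hg1 : (g 1).1 = (g 0).1 + k) : ¬ ∃ pt : Ann, φ.Homotopic (ContinuousMap.const _ pt) := by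
  rintro ⟨q, ⟨H⟩⟩
  let pI : ℝ → unitInterval := Set.projIcc 0 1 zero_le_one
  have pIc : Continuous pI := continuous_projIcc
  let e : Ann → ℂ := fun z => ((AddCircle.toCircle z.1 : Circle) : ℂ)
  have ec : Continuous e := continuous_subtype_val.comp (AddCircle.continuous_toCircle.comp continuous_fst)
  have ee : ∀ p : Plane, e (prj p) = Complex.exp (2 * Real.pi * Complex.I * p.1) := by
    intro p
    simp only [e, prj]
    rw [AddCircle.toCircle_apply_mk, Circle.coe_exp]
    congr 1; push_cast; ring
  let Ψ : ℝ × ℝ → ℂ := fun x => e (H (pI x.1, ((x.2 : ℝ) : AddCircle (1 : ℝ))))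
  have Ψc : Continuous Ψ := by
    apply ec.comp
    apply H.continuous.comp
    exact (pIc.comp continuous_fst).prodMk ((AddCircle.continuous_mk' 1).comp continuous_snd)
  obtain ⟨L, Lc, hL⟩ := log_lift Ψ Ψc (fun x => Circle.coe_ne_zero _)
  have p0 : pI 0 = 0 := Set.projIcc_left _
  have p1 : pI 1 = 1 := Set.projIcc_right _
  have c1 := exp_const (fun x : ℝ × ℝ => L (x.1, x.2 + 1)) L (by fun_prop) Lc
    (fun x => by
      rw [hL, hL]; simp only [Ψ]
      rw [AddCircle.coe_add_period]) (0, 0) (1, 0)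
  have c2 := exp_const (fun s : ℝ => L (1, s)) (fun _ => L (1, 0)) (by fun_prop) (by fun_prop)
    (fun s => by
      rw [hL, hL]; simp only [Ψ, p1]
      rw [H.apply_one, H.apply_one]; rfl) 1 0
  have c3 := exp_const (A := Icc (0:ℝ) 1) (fun s => L (0, s.1))
    (fun s => 2 * Real.pi * Complex.I * ((g s.1).1 : ℂ)) (by fun_prop) (by fun_prop)
    (fun s => by
      rw [hL]; simp only [Ψ, p0]
      rw [H.apply_zero]
      show e (φ _) = _
      rw [h s.1 s.2.1 s.2.2, ee]) ⟨1, by simp⟩ ⟨0, by simp⟩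
  simp only [hg1, zero_add] at c1 c2 c3
  push_cast at c3
  have : (k : ℂ) * (2 * Real.pi * Complex.I) = 0 := by
    linear_combination c1 + c2 - c3
  have hk' : (k : ℂ) ≠ 0 := by exact_mod_cast hk
  exact mul_ne_zero hk' Complex.two_pi_I_ne_zero this

theorem ess_circle {W : Set Plane} (hW : IsOpen W) {w : Plane} (hw : w ∈ W) {j : ℤ} (hj0 : j ≠ 0)
    (hj : Tr j w ∈ connectedComponentIn W w) :
    ∃ c, IsEssentialCircle c ∧ ∀ z ∈ c, ∃ x ∈ W, prj x = z := by
  obtain ⟨N, hN, a0, hwalk⟩ := lattice_walk hW hw hj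
  have hN0 : (0 : ℝ) < N := by exact_mod_cast (show 0 < N by omega)
  have ex : ∃ L : ℕ, ∃ (a : ℤ × ℤ) (k : ℤ), k ≠ 0 ∧ Walk (LEdge W N) L a (a + (k * N, 0)) := by
    rcases Relation.reflTransGen_iff_eq_or_transGen.1 hwalk with h | h
    · exact ⟨0, a0, j, hj0, h.symm⟩
    · obtain ⟨L, -, hL⟩ := Walk.of_transGen h
      exact ⟨L, a0, j, hj0, hL⟩
  classical
  obtain ⟨a, k, hk, hLw⟩ := Nat.find_spec ex
  have hmin : ∀ m < Nat.find ex, ¬ ∃ (a : ℤ × ℤ) (k : ℤ), k ≠ 0 ∧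
      Walk (LEdge W N) m a (a + (k * N, 0)) := fun m hm => Nat.find_min ex hm
  generalize Nat.find ex = L at hLw hmin
  obtain ⟨v, v0, vL, hv⟩ := hLw.seq
  have distinct : ∀ i l, i < l → l ≤ L → ¬ (i = 0 ∧ l = L) → ∀ m : ℤ, v l ≠ v i + (m * N, 0) := by
    intro i l hil hlL hnot m heq
    by_cases hm : m = 0
    · subst hm
      have e : v l = v i := by
        rw [heq]
        simp only [zero_mul]
        exact add_zero (v i)
      have w1 := Walk.slice' hv (Nat.zero_le i) (show i ≤ L by omega)
      have w2 := Walk.slice' hv hlL le_rfl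
      rw [e] at w2
      have := w1.add w2
      rw [v0, vL] at this
      exact hmin (i - 0 + (L - l)) (by omega) ⟨a, k, hk, this⟩
    · have w1 := Walk.slice' hv hil.le hlL
      rw [heq] at w1
      exact hmin (l - i) (by omega) ⟨v i, m, hm, w1⟩
  have hL3 : 3 ≤ L := by
    have : ∀ i ≤ L, |(v i).1 - (v 0).1| ≤ i := by
      intro i
      induction i with
      | zero => simp
      | succ i ih =>
        intro hi
        have h1 := ih (by omega)
        have h2 : |(v (i + 1)).1 - (v i).1| ≤ 1 := by
          have := (hv i (by omega)).1
          have e : (v (i + 1)).1 - (v i).1 = (v (i + 1) - v i).1 := rfl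
          rw [e]
          rcases this with h | h | h | h <;> rw [h] <;> simp
        have := abs_add_le ((v (i + 1)).1 - (v i).1) ((v i).1 - (v 0).1)
        rw [sub_add_sub_cancel] at this
        push_cast
        linarith
    have h := this L le_rfl
    rw [vL, v0] at h
    simp only [Prod.fst_add, add_sub_cancel_left, abs_mul] at h
    have h1 : 1 ≤ |k| := Int.one_le_abs hk
    have h2 : |(N : ℤ)| = N := abs_of_nonneg (by positivity)
    rw [h2] at h
    have : (N : ℤ) ≤ L := by nlinarith
    omega
  have hL0 : (0 : ℝ) < L := by exact_mod_cast (show 0 < L by omega)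
  let P : ℝ → Plane := fun s => (pl (fun i => ((v i).1 : ℝ)) L s / N, pl (fun i => ((v i).2 : ℝ)) L s / N)
  have Pc : Continuous P := ((pl_cont _ _).div_const _).prodMk ((pl_cont _ _).div_const _)
  have hP : ∀ i < L, ∀ t : ℝ, 0 ≤ t → t ≤ 1 → P (i + t) = pt N (v i) (v (i + 1) - v i) t := by
    intro i hi t t0 t1
    simp only [P, pt]
    rw [pl_apply _ hi t0 t1, pl_apply _ hi t0 t1]
    simp
  have PW : ∀ i < L, ∀ t : ℝ, 0 ≤ t → t ≤ 1 → P (i + t) ∈ W := by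
    intro i hi t t0 t1
    rw [hP i hi t t0 t1]
    exact (hv i hi).2 t t0 t1
  have PL : P L = Tr k (P 0) := by
    have h1 := hP (L - 1) (by omega) 1 (by norm_num) le_rfl
    have h0 := hP 0 (by omega) 0 le_rfl (by norm_num)
    rw [show L - 1 + 1 = L by omega] at h1
    rw [show ((L - 1 : ℕ) : ℝ) + 1 = L by
      rw [Nat.cast_sub (by omega)]; simp] at h1
    simp only [Nat.cast_zero, add_zero] at h0
    rw [h1, h0]
    simp only [pt, Tr]
    rw [vL, v0]
    ext
    · simp; field_simp
    · simp
  let g : ℝ → Plane := fun s => P (L * s)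
  have gc : Continuous g := by fun_prop
  have g01 : prj (g 0) = prj (g (0 + 1)) := by
    simp only [g, zero_add, mul_zero, mul_one]
    rw [PL]
    exact (prj_eq.2 ⟨k, rfl⟩).symm
  let φ : C(AddCircle (1 : ℝ), Ann) := ⟨AddCircle.liftIco 1 0 (fun s => prj (g s)),
    AddCircle.liftIco_continuous g01 (prj_cont.comp gc).continuousOn⟩
  have φ1 : ∀ s : ℝ, 0 ≤ s → s < 1 → φ (s : AddCircle (1 : ℝ)) = prj (g s) := by
    intro s s0 s1
    exact AddCircle.liftIco_coe_apply (f := fun s => prj (g s)) ⟨s0, by simpa using s1⟩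
  have φ2 : ∀ s : ℝ, 0 ≤ s → s ≤ 1 → φ (s : AddCircle (1 : ℝ)) = prj (g s) := by
    intro s s0 s1
    rcases s1.lt_or_eq with h | rfl
    · exact φ1 s s0 h
    · rw [show ((1 : ℝ) : AddCircle (1 : ℝ)) = ((0 : ℝ) : AddCircle (1 : ℝ)) by
        rw [AddCircle.coe_period]; rfl, φ1 0 le_rfl one_pos, g01, zero_add]
  have rep : ∀ x : AddCircle (1 : ℝ), ∃ s : ℝ, 0 ≤ s ∧ s < 1 ∧ (s : AddCircle (1 : ℝ)) = x := by
    intro x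
    have := (AddCircle.equivIco (1 : ℝ) 0 x).2
    exact ⟨_, this.1, by simpa using this.2, AddCircle.coe_equivIco⟩
  have dec : ∀ s : ℝ, 0 ≤ s → s < 1 → ∃ i < L, ∃ t : ℝ, 0 ≤ t ∧ t < 1 ∧ L * s = i + t := by
    intro s s0 s1
    have h0 : 0 ≤ (L : ℝ) * s := by positivity
    refine ⟨⌊(L : ℝ) * s⌋₊, ?_, L * s - ⌊(L : ℝ) * s⌋₊, ?_, ?_, by ring⟩
    · rw [Nat.floor_lt h0]; nlinarith
    · linarith [Nat.floor_le h0]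
    · linarith [Nat.lt_floor_add_one ((L : ℝ) * s)]
  refine ⟨range φ, ⟨φ, ?_, rfl, ?_⟩, ?_⟩
  · intro x y hxy
    obtain ⟨s, s0, s1, rfl⟩ := rep x
    obtain ⟨s', s0', s1', rfl⟩ := rep y
    rw [φ1 s s0 s1, φ1 s' s0' s1'] at hxy
    obtain ⟨m, hm⟩ := prj_eq.1 hxy
    obtain ⟨i, hi, t, t0, t1, e⟩ := dec s s0 s1
    obtain ⟨i', hi', t', t0', t1', e'⟩ := dec s' s0' s1'
    simp only [g] at hm
    rw [e, e', hP i hi t t0 t1.le, hP i' hi' t' t0' t1'.le] at hm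
    simp only [pt, Tr, Prod.mk.injEq] at hm
    have key := edge_meet (a := v i) (b := v i' + (m * N, 0)) (hv i hi).1 (hv i' hi').1 t0 t1 t0' t1'
      (by
        have := hm.1
        field_simp at this
        rw [this]
        simp only [Prod.fst_add]; push_cast; ring)
      (by
        have := hm.2
        field_simp at this
        rw [this]
        simp only [Prod.snd_add]; push_cast; ring)
    have neg : ∀ x y : ℤ × ℤ, x = y + (m * N, 0) → y = x + (-m * N, 0) := by
      intro x y h
      rw [h]; ext <;> simp
    rcases key with ⟨h1, h2⟩ | ⟨h1, h2⟩
    · have : i = i' := by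
        rcases lt_trichotomy i i' with h | h | h
        · exact absurd (neg _ _ h1) (distinct i i' h hi'.le (by omega) _)
        · exact h
        · exact absurd h1 (distinct i' i h hi.le (by omega) _)
      subst this
      subst h2
      rw [← e'] at e
      have : s = s' := mul_left_cancel₀ hL0.ne' e
      rw [this]
    · exfalso
      have h1' : v (i + 1) = v i' + (m * N, 0) := by rw [h1]; abel
      have h2' : v i = v (i' + 1) + (m * N, 0) := by rw [h2]; abel
      rcases lt_trichotomy i i' with h | h | h
      · by_cases c : i = 0 ∧ i' + 1 = L
        · exact distinct (i + 1) i' (by omega) (by omega) (by omega) _ (neg _ _ h1')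
        · exact distinct i (i' + 1) (by omega) (by omega) c _ (neg _ _ h2')
      · subst h
        exact distinct i (i + 1) (by omega) (by omega) (by omega) _ h1'
      · by_cases c : i' = 0 ∧ i + 1 = L
        · exact distinct (i' + 1) i (by omega) (by omega) (by omega) _ h2'
        · exact distinct i' (i + 1) (by omega) (by omega) c _ h1'
  · refine not_null gc φ2 hk ?_
    simp only [g, mul_one, mul_zero, PL, Tr]
  · rintro _ ⟨x, rfl⟩
    obtain ⟨s, s0, s1, rfl⟩ := rep x
    obtain ⟨i, hi, t, t0, t1, e⟩ := dec s s0 s1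
    refine ⟨g s, ?_, (φ1 s s0 s1).symm⟩
    simp only [g]
    rw [e]
    exact PW i hi t t0 t1.le

/-- No attracting invariant set separates two recurrent points. -/
theorem no_sep {f : Ann ≃ₜ Ann} {F : Plane ≃ₜ Plane} (hint : IntersectionProperty f)
    (hlift : IsLift f F) (hF : Good F) {V : Set Plane} (hV : IsClosed V) (hVT : TInv V)
    (hFV : F '' V ⊆ interior V) {v v' : Plane} (hv : v ∈ V) (hv' : v' ∉ V)
    (hr : Ret F v (fun _ _ => True)) (hr' : Ret F v' (fun _ _ => True)) : False := by
  have Mcl : IsClosed (F '' V) := F.isClosedMap _ hV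
  have MT : TInv (F '' V) := hVT.image hF.comm
  have hvM : v ∈ F '' V := by
    rw [← Mcl.closure_eq, Metric.mem_closure_iff]
    intro ε hε
    obtain ⟨m, hm, k, -, hd⟩ := hr ε hε
    refine ⟨_, ?_, by rw [dist_comm]; exact hd⟩
    obtain ⟨n, rfl⟩ : ∃ n, m = n + 1 := ⟨m - 1, by omega⟩
    apply MT
    rw [Function.iterate_succ_apply']
    exact ⟨_, iter_maps (U := V) (fun x hx => interior_subset (hFV ⟨x, hx, rfl⟩)) n v hv, rfl⟩
  obtain ⟨k, hk, hkv⟩ := comp_per_pos hF isOpen_interior hVT.int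
    (fun x hx => hFV ⟨x, interior_subset hx, rfl⟩) (hFV hvM) hr
  obtain ⟨l, hl, hlv⟩ := comp_per_neg hF hV.isOpen_compl hVT.compl (fun x hx hx' => hx (by
    have := interior_subset (hFV ⟨_, hx', rfl⟩)
    simpa using this)) hv' hr'
  have vint := hFV hvM
  obtain ⟨w, hw, j, hj0, hj⟩ := sep_comp (M := F '' V) (N := (interior V)ᶜ) Mcl
    isOpen_interior.isClosed_compl MT hVT.int.compl (fun x hx hx' => hx' (hFV hx)) hk hl
    (A := F '' connectedComponentIn (interior V) v) (a := F v)
    (isPreconnected_connectedComponentIn.image _ F.continuous.continuousOn)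
    (image_mono ((connectedComponentIn_subset _ _).trans interior_subset))
    ⟨v, mem_connectedComponentIn vint, rfl⟩ ⟨_, hkv, hF.comm k v⟩
    (B := connectedComponentIn Vᶜ v') (b := v') isPreconnected_connectedComponentIn
    ((connectedComponentIn_subset _ _).trans (compl_subset_compl.2 interior_subset))
    (mem_connectedComponentIn hv') hlv
  obtain ⟨c, hc, hcW⟩ := ess_circle (Mcl.union isOpen_interior.isClosed_compl).isOpen_compl hw hj0 hj
  obtain ⟨z, hz, z', hz', e⟩ := hint c hc
  obtain ⟨x, hx, rfl⟩ := hcW z hz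
  obtain ⟨y, hy, rfl⟩ := hcW z' hz'
  rw [← hlift] at e
  obtain ⟨m, hm⟩ := prj_eq.1 e.symm
  apply hx
  left
  rw [hm]
  apply MT
  refine ⟨y, ?_, rfl⟩
  by_contra h
  apply hy
  right
  intro h'
  exact h (interior_subset h')

theorem int_const {A : Type*} [TopologicalSpace A] [PreconnectedSpace A] (g : A → ℝ)
    (hg : Continuous g) (h : ∀ x, ∃ m : ℤ, g x = m) (a b : A) : g a = g b := by
  have := exp_const (fun x => 2 * Real.pi * Complex.I * (g x : ℂ)) (fun _ => 0) (by fun_prop)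
    (by fun_prop) (fun x => by
      obtain ⟨m, hm⟩ := h x
      rw [hm, Complex.exp_eq_exp_iff_exists_int]
      exact ⟨m, by push_cast; ring⟩) a b
  simp only [sub_zero] at this
  have := mul_left_cancel₀ Complex.two_pi_I_ne_zero this
  exact_mod_cast this

theorem prj_iter {f : Ann ≃ₜ Ann} {F : Plane ≃ₜ Plane} (hlift : IsLift f F) (n : ℕ) (p : Plane) :
    prj (F^[n] p) = f^[n] (prj p) := by
  induction n generalizing p with
  | zero => rfl
  | succ n ih => rw [Function.iterate_succ_apply, ih, hlift, Function.iterate_succ_apply]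

theorem prj_Tr (k : ℤ) (p : Plane) : prj (Tr k p) = prj p := prj_eq.2 ⟨k, rfl⟩

theorem lift_iso {f : Ann ≃ₜ Ann} {F : Plane ≃ₜ Plane} (hiso : IsotopicToId f) (hlift : IsLift f F) :
    CommT F ∧ IsoId F := by
  obtain ⟨H, Hc, Hh, H0, H1⟩ := hiso
  let θ : C(ℝ × Plane, AddCircle (1 : ℝ)) := ⟨fun x => (H x.1 (prj x.2)).1,
    continuous_fst.comp (Hc.comp (continuous_fst.prodMk (prj_cont.comp continuous_snd)))⟩
  obtain ⟨X, ⟨X0, hX⟩, -⟩ := (AddCircle.isCoveringMap_coe (1 : ℝ)).existsUnique_continuousMap_lifts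
    θ (a₀ := ((0 : ℝ), (0 : Plane))) (e₀ := (0 : ℝ)) (by
      show _ = (H 0 (prj 0)).1
      rw [H0]; rfl)
  have hX' : ∀ t p, ((X (t, p) : ℝ) : AddCircle (1 : ℝ)) = (H t (prj p)).1 := fun t p =>
    congrFun hX (t, p)
  let K : ℝ → Plane → Plane := fun t p => (X (t, p), (H t (prj p)).2)
  have Kc : Continuous (fun q : ℝ × Plane => K q.1 q.2) := by
    refine Continuous.prodMk X.continuous ?_
    exact continuous_snd.comp (Hc.comp (continuous_fst.prodMk (prj_cont.comp continuous_snd)))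
  have hK : ∀ t p, prj (K t p) = H t (prj p) := fun t p => Prod.ext (hX' t p) rfl
  have K0 : ∀ p, K 0 p = p := by
    intro p
    have := int_const (fun p : Plane => X (0, p) - p.1) (by fun_prop) (fun p => by
      have h : prj (K 0 p) = prj p := by rw [hK, H0]
      obtain ⟨m, hm⟩ := prj_eq.1 h
      refine ⟨m, ?_⟩
      have := congrArg Prod.fst hm
      simp only [K, Tr] at this
      linarith) p 0
    rw [X0] at this
    have h : prj (K 0 p) = prj p := by rw [hK, H0]
    refine Prod.ext ?_ (congrArg Prod.snd h :)
    simp only [K]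
    simp at this
    linarith
  have KT : ∀ t k p, K t (Tr k p) = Tr k (K t p) := by
    intro t k p
    have := int_const (fun q : ℝ × Plane => X (q.1, Tr k q.2) - X (q.1, q.2))
      (by have := Tr_cont k; fun_prop) (fun q => by
        have h : prj (K q.1 (Tr k q.2)) = prj (K q.1 q.2) := by rw [hK, hK, prj_Tr]
        obtain ⟨m, hm⟩ := prj_eq.1 h
        refine ⟨m, ?_⟩
        have := congrArg Prod.fst hm
        simp only [K, Tr] at this
        simp only [Tr]
        linarith) (t, p) (0, p)
    have e1 := congrArg Prod.fst (K0 p)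
    have e2 := congrArg Prod.fst (K0 (Tr k p))
    simp only [K] at e1 e2
    simp only [e1, e2] at this
    refine Prod.ext ?_ ?_
    · simp only [K]
      have e3 : (Tr k p).1 = p.1 + k := rfl
      show X (t, Tr k p) = X (t, p) + k
      linarith
    · simp only [K, Tr]
      have := prj_Tr k p
      simp only [Tr] at this
      rw [this]
  have Kinj : ∀ t, Function.Injective (K t) := by
    intro t p q h
    have h1 : prj (K t p) = prj (K t q) := by rw [h]
    rw [hK, hK] at h1
    obtain ⟨g, hg⟩ := Hh t
    rw [hg, hg] at h1
    obtain ⟨m, rfl⟩ := prj_eq.1 (g.injective h1)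
    rw [KT] at h
    have := congrArg Prod.fst h
    simp only [Tr] at this
    have hm : (m : ℝ) = 0 := by linarith
    have hm' : m = 0 := by exact_mod_cast hm
    rw [hm', Tr_zero]
  have FK : ∀ p, ∃ m : ℤ, F p = Tr m (K 1 p) := fun p => prj_eq.1 (by rw [hK, H1, hlift])
  obtain ⟨c, hc⟩ := FK 0
  have K1c : Continuous (K 1) := Kc.comp (continuous_const.prodMk continuous_id)
  have hFK : ∀ p, F p = Tr c (K 1 p) := by
    intro p
    have := int_const (fun p : Plane => (F p).1 - (K 1 p).1) (by fun_prop) (fun p => by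
      obtain ⟨m, hm⟩ := FK p
      exact ⟨m, by rw [hm]; simp [Tr]⟩) p 0
    obtain ⟨m, hm⟩ := FK p
    rw [hc, hm] at this
    simp [Tr] at this
    rw [hm, this]
  refine ⟨?_, ?_⟩
  · intro k p
    rw [hFK, hFK, KT]; simp [add_comm]
  · refine ⟨fun t p => ((K t p).1 + t * c, (K t p).2), ?_, ?_, ?_, ?_⟩
    · exact ((continuous_fst.comp Kc).add (continuous_fst.mul continuous_const)).prodMk
        (continuous_snd.comp Kc)
    · intro t p q h
      simp only [Prod.mk.injEq, add_left_inj] at h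
      exact Kinj t (Prod.ext h.1 h.2)
    · intro p
      simp [K0]
    · intro p
      rw [hFK]; simp [Tr]

theorem Tr_iso (k : ℤ) : IsoId (TrH k) :=
  ⟨fun t p => (p.1 + t * k, p.2), by fun_prop, by
    intro t p q h
    simp only [Prod.mk.injEq, add_left_inj] at h
    exact Prod.ext h.1 h.2, by simp, by intro z; simp [TrH, Tr]⟩

theorem good_of {f : Ann ≃ₜ Ann} {F : Plane ≃ₜ Plane} (hiso : IsotopicToId f) (hlift : IsLift f F)
    (hper : ¬ ∃ z : Ann, ∃ n : ℕ, 0 < n ∧ f^[n] z = z) : Good F := by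
  obtain ⟨hc, hi⟩ := lift_iso hiso hlift
  refine ⟨hc, ?_, ?_⟩
  · intro a b
    have : ∃ G : Plane ≃ₜ Plane, (∀ x, G x = F^[a] x) ∧ IsoId G := by
      induction a with
      | zero => exact ⟨Homeomorph.refl _, fun x => rfl, IsoId.refl⟩
      | succ a ih =>
        obtain ⟨G, hG, hGi⟩ := ih
        exact ⟨G.trans F, fun x => by rw [Function.iterate_succ_apply', ← hG]; rfl, hGi.trans hi⟩
    obtain ⟨G, hG, hGi⟩ := this
    exact ⟨G.trans (TrH b), fun x => by rw [← hG]; rfl, hGi.trans (Tr_iso b)⟩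
  · intro a b ha x hx
    refine hper ⟨prj x, a, ha, ?_⟩
    rw [← prj_iter hlift, ← prj_Tr b, hx]

theorem ret_mono {F : Plane → Plane} {z : Plane} {P Q : ℕ → ℤ → Prop} (h : Ret F z P)
    (hPQ : ∀ n k, 1 ≤ n → P n k → Q n k) : Ret F z Q := by
  intro ε hε
  obtain ⟨m, hm, k, hP, hd⟩ := h ε hε
  exact ⟨m, hm, k, hPQ _ _ hm hP, hd⟩

theorem ret_or {F : Plane → Plane} {z : Plane} {P Q : ℕ → ℤ → Prop}
    (h : Ret F z (fun n k => P n k ∨ Q n k)) : Ret F z P ∨ Ret F z Q := by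
  by_contra hcon
  simp only [Ret, not_or, not_forall] at hcon
  obtain ⟨⟨e1, h1, c1⟩, ⟨e2, h2, c2⟩⟩ := hcon
  obtain ⟨m, hm, k, hP, hd⟩ := h (min e1 e2) (lt_min h1 h2)
  rw [lt_min_iff] at hd
  rcases hP with hP | hP
  · exact c1 ⟨m, hm, k, hP, hd.1⟩
  · exact c2 ⟨m, hm, k, hP, hd.2⟩

/-- eventual version of returns -/
theorem ret_not {F : Plane → Plane} {z : Plane} {P : ℕ → ℤ → Prop} (h : ¬ Ret F z P) :
    ∃ ε > 0, ∀ m, 1 ≤ m → ∀ k, dist (Tr (-k) (F^[m] z)) z < ε → ¬ P m k := by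
  simp only [Ret, not_forall] at h
  obtain ⟨e, he, c⟩ := h
  exact ⟨e, he, fun m hm k hd hP => c ⟨m, hm, k, hP, hd⟩⟩

theorem ret_small {F : Plane → Plane} {z : Plane} {P : ℕ → ℤ → Prop} (h : Ret F z P) {e : ℝ}
    (he : 0 < e) {Q : ℕ → ℤ → Prop}
    (hQ : ∀ m, 1 ≤ m → ∀ k, dist (Tr (-k) (F^[m] z)) z < e → P m k → Q m k) : Ret F z Q := by
  intro ε hε
  obtain ⟨m, hm, k, hP, hd⟩ := h (min ε e) (lt_min hε he)
  rw [lt_min_iff] at hd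
  exact ⟨m, hm, k, hQ m hm k hd.2 hP, hd.1⟩

theorem ret_pigeon {F : Plane → Plane} {z : Plane} {P : ℕ → ℤ → Prop} (h : Ret F z P) (N : ℕ)
    (hN : 1 ≤ N) : ∃ r, Ret F z (fun n k => P n k ∧ n % N = r) := by
  have key : ∀ M : ℕ, ∀ P : ℕ → ℤ → Prop, Ret F z P → (∀ n k, P n k → n % N < M) →
      ∃ r, Ret F z (fun n k => P n k ∧ n % N = r) := by
    intro M
    induction M with
    | zero =>
      intro P hP hlt
      obtain ⟨m, hm, k, hp, -⟩ := hP 1 one_pos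
      exact absurd (hlt m k hp) (by omega)
    | succ M ih =>
      intro P hP hlt
      have : Ret F z (fun n k => (P n k ∧ n % N = M) ∨ (P n k ∧ n % N < M)) := by
        refine ret_mono hP fun n k _ hp => ?_
        have := hlt n k hp
        rcases Nat.lt_succ_iff_lt_or_eq.1 this with h | h
        · exact Or.inr ⟨hp, h⟩
        · exact Or.inl ⟨hp, h⟩
      rcases ret_or this with h | h
      · exact ⟨M, h⟩
      · obtain ⟨r, hr⟩ := ih _ h (fun n k h => h.2)
        exact ⟨r, ret_mono hr fun n k _ hp => ⟨hp.1.1, hp.2⟩⟩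
  exact key N P h (fun n k _ => Nat.mod_lt _ (by omega))

theorem ret_add {F : Plane → Plane} (hFc : Continuous F) (hc : CommT F) {z : Plane}
    {P Q R : ℕ → ℤ → Prop} (hP : Ret F z P) (hQ : Ret F z Q)
    (hR : ∀ n k n' k', 1 ≤ n → 1 ≤ n' → P n k → Q n' k' → R (n + n') (k + k')) : Ret F z R := by
  intro ε hε
  obtain ⟨n, hn, k, hp, hd⟩ := hP ε hε
  have cont : Continuous (fun w => dist (Tr (-k) (F^[n] w)) z) :=
    (((Tr_cont _).comp (hFc.iterate n))).dist continuous_const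
  obtain ⟨δ, hδ, hb⟩ := Metric.isOpen_iff.1 (isOpen_lt cont continuous_const (g := fun _ => ε)) z hd
  obtain ⟨n', hn', k', hq, hd'⟩ := hQ δ hδ
  refine ⟨n + n', by omega, k + k', hR _ _ _ _ hn hn' hp hq, ?_⟩
  have : dist (Tr (-k) (F^[n] (Tr (-k') (F^[n'] z)))) z < ε :=
    hb (show Tr (-k') (F^[n'] z) ∈ Metric.ball z δ from hd')
  rw [hc.iter n, Tr_Tr, ← Function.iterate_add_apply] at this
  convert this using 3
  ring

theorem ret_dvd {F : Plane → Plane} (hFc : Continuous F) (hc : CommT F) {z : Plane}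
    {P : ℕ → ℤ → Prop} (hP : Ret F z P)
    (hadd : ∀ n k n' k', P n k → P n' k' → P (n + n') (k + k')) (N : ℕ) (hN : 1 ≤ N) :
    Ret F z (fun n k => P n k ∧ N ∣ n) := by
  obtain ⟨r, hr⟩ := ret_pigeon hP N hN
  have key : ∀ i : ℕ, Ret F z (fun n k => P n k ∧ n % N = ((i + 1) * r) % N) := by
    intro i
    induction i with
    | zero =>
      refine ret_mono hr fun n k _ h => ⟨h.1, ?_⟩
      rw [← h.2]; simp
    | succ i ih =>
      refine ret_add hFc hc ih hr ?_
      intro n k n' k' _ _ h h'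
      refine ⟨hadd _ _ _ _ h.1 h'.1, ?_⟩
      rw [Nat.add_mod, h.2, h'.2, show (i + 1 + 1) * r = (i + 1) * r + r by ring]
      simp
  refine ret_mono (key (N - 1)) fun n k _ h => ⟨h.1, ?_⟩
  have := h.2
  rw [show N - 1 + 1 = N by omega] at this
  simp at this
  exact Nat.dvd_of_mod_eq_zero this

/-- returns of `F` seen by `G = T^{-p} F^q` -/
theorem ret_pow {F G : Plane ≃ₜ Plane} (hc : CommT F) {q : ℕ} (hq : 1 ≤ q) {p : ℤ}
    (hG : ∀ x, G x = Tr (-p) (F^[q] x)) {z : Plane} {P : ℕ → ℤ → Prop} (hP : Ret F z P)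
    (hadd : ∀ n k n' k', P n k → P n' k' → P (n + n') (k + k')) :
    Ret G z (fun m K => P (q * m) (K + p * m)) := by
  intro ε hε
  obtain ⟨n, hn, k, ⟨hp, m, rfl⟩, hd⟩ := ret_dvd F.continuous hc hP hadd q hq ε hε
  have hGf : (G : Plane → Plane) = fun y => Tr (-p) (F^[q] y) := funext hG
  refine ⟨m, ?_, k - p * m, ?_, ?_⟩
  · rcases Nat.eq_zero_or_pos m with rfl | h
    · simp at hn
    · exact h
  · simpa using hp
  · rw [hGf, TrF_iter hc, Tr_Tr]
    convert hd using 3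
    ring

theorem good_pow {F : Plane ≃ₜ Plane} (hF : Good F) {q : ℕ} (hq : 1 ≤ q) {p : ℤ}
    {G : Plane ≃ₜ Plane} (hG : ∀ x, G x = Tr (-p) (F^[q] x)) : Good G := by
  have hGf : (G : Plane → Plane) = fun y => Tr (-p) (F^[q] y) := funext hG
  refine ⟨?_, ?_, ?_⟩
  · intro k x
    rw [hG, hG, hF.comm.iter q]; simp [add_comm]
  · intro a b
    obtain ⟨K, hK, hi⟩ := hF.iso (q * a) (b + a * (-p))
    refine ⟨K, fun x => ?_, hi⟩
    rw [hK, hGf, TrF_iter hF.comm, Tr_Tr]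
  · intro a b ha x
    rw [hGf, TrF_iter hF.comm, Tr_Tr]
    exact hF.free _ _ (Nat.mul_pos hq ha) x

theorem C1 {f : Ann ≃ₜ Ann} {F : Plane ≃ₜ Plane} (hint : IntersectionProperty f)
    (hlift : IsLift f F) (hF : Good F) {q : ℕ} (hq : 1 ≤ q) {p : ℤ} {z z' : Plane}
    (h : Ret F z (fun n k => p * n ≤ k * q)) (h' : Ret F z' (fun n k => k * q ≤ p * n)) : False := by
  obtain ⟨G, hG, hGi⟩ := hF.iso q (-p)
  have hfix : ∀ x, G x ≠ x := fun x => by rw [hG]; exact hF.free _ _ hq x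
  have hq0 : (0 : ℤ) < q := by exact_mod_cast hq
  have g1 : Ret G z (fun _ k => 0 ≤ k) := by
    refine ret_mono (ret_pow hF.comm hq hG h ?_) ?_
    · intro n k n' k' a b; push_cast; linarith
    · intro m K _ hh
      push_cast at hh
      have : 0 ≤ K * q := by linarith
      exact nonneg_of_mul_nonneg_left this hq0
  have g2 : Ret G z' (fun _ k => k ≤ 0) := by
    refine ret_mono (ret_pow hF.comm hq hG h' ?_) ?_
    · intro n k n' k' a b; push_cast; linarith
    · intro m K _ hh
      push_cast at hh
      have : K * q ≤ 0 := by linarith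
      by_contra hc
      have := mul_pos (not_le.1 hc) hq0
      linarith
  obtain ⟨V, v1, v2, v3, i, j, hij⟩ := sep_exists F G hF.comm q hq p hG hGi hfix z z' g1 g2
  have r1 : ∀ i, Ret F (F^[i] z) (fun _ _ => True) := fun i =>
    ret_iter F F hF.comm 1 0 (by simp) z (ret_mono h fun _ _ _ _ => trivial) i
  have r2 : ∀ i, Ret F (F^[i] z') (fun _ _ => True) := fun i =>
    ret_iter F F hF.comm 1 0 (by simp) z' (ret_mono h' fun _ _ _ _ => trivial) i
  rcases hij with ⟨a, b⟩ | ⟨a, b⟩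
  · exact no_sep hint hlift hF v1 v2 v3 a b (r1 _) (r2 _)
  · exact no_sep hint hlift hF v1 v2 v3 a b (r2 _) (r1 _)

theorem ball_disj {z : Plane} {ε : ℝ} (hε : ε ≤ 1 / 2) :
    ∀ j : ℤ, j ≠ 0 → ∀ x ∈ Metric.ball z ε, Tr j x ∉ Metric.ball z ε := by
  intro j hj x hx hx'
  rw [Metric.mem_ball] at hx hx'
  have h := dist_triangle_right (Tr j x) x z
  have h2 : dist (Tr j x).1 x.1 ≤ dist (Tr j x) x := by
    rw [Prod.dist_eq]; exact le_max_left _ _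
  have h3 : dist (Tr j x).1 x.1 = |(j : ℝ)| := by
    rw [Real.dist_eq]; simp [Tr]
  have h4 : (1 : ℝ) ≤ |(j : ℝ)| := by exact_mod_cast Int.one_le_abs hj
  linarith

/-- unified version of the disk lemma with a sign -/
theorem dl_sign (G : Plane ≃ₜ Plane) (hG : IsoId G) (hfix : ∀ x, G x ≠ x) (hcomm : CommT G)
    (D : Set Plane) (hconv : Convex ℝ D) (hDT : ∀ j : ℤ, j ≠ 0 → ∀ x ∈ D, Tr j x ∉ D)
    (hDf : ∀ x ∈ D, G x ∉ D) (x : Plane) (hx : x ∈ D) (s : ℤ) (hs : s = 1 ∨ s = -1)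
    (m m' : ℕ) (hm : 1 ≤ m) (hm' : 1 ≤ m') (k k' : ℤ) (hk : 0 ≤ s * k) (hk' : s * k' ≤ 0)
    (h1 : Tr (-k) (G^[m] x) ∈ D) (h2 : Tr (-k') (G^[m'] x) ∈ D) : False := by
  rcases hs with rfl | rfl
  · exact dl_lemma G hG hfix hcomm D hconv hDT hDf x x hx hx m m' hm hm' k (-k') (by omega)
      (by omega) h1 h2
  · exact dl_lemma G hG hfix hcomm D hconv hDT hDf x x hx hx m' m hm' hm k' (-k) (by omega)
      (by omega) h2 h1

theorem finite_core {F : Plane ≃ₜ Plane} (hF : Good F)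
    {z : Plane} (hr : Ret F z (fun _ _ => True)) (s : ℤ) (hs : s = 1 ∨ s = -1) :
    ∃ P : ℤ, ¬ Ret F z (fun n k => 0 ≤ s * (k - P * n)) := by
  have hne : prj (F z) ≠ prj z := by
    intro h
    obtain ⟨m, hm⟩ := prj_eq.1 h
    refine hF.free 1 (-m) le_rfl z ?_
    simp [hm]
  obtain ⟨U, V, hU, hV, zU, zV, hUV⟩ := t2_separation hne
  have ho : IsOpen ((fun x => prj (F x)) ⁻¹' U ∩ prj ⁻¹' V) :=
    (hU.preimage (prj_cont.comp F.continuous)).inter (hV.preimage prj_cont)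
  obtain ⟨e, he, hb⟩ := Metric.isOpen_iff.1 ho z ⟨zU, zV⟩
  set ε := min e (1 / 2) with hεdef
  have hε : 0 < ε := lt_min he (by norm_num)
  have hb' : Metric.ball z ε ⊆ Metric.ball z e := Metric.ball_subset_ball (min_le_left _ _)
  obtain ⟨n0, hn0, k0, -, hd0⟩ := hr ε hε
  refine ⟨s * |k0|, fun hRet => ?_⟩
  obtain ⟨n, hn, k, hk, hd⟩ := hRet ε hε
  obtain ⟨G, hG, hGi⟩ := hF.iso 1 (-(s * |k0|))
  have hGg : Good G := good_pow hF le_rfl hG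
  have hGf : (G : Plane → Plane) = fun y => Tr (-(s * |k0|)) (F^[1] y) := funext hG
  refine dl_sign G hGi (fun x => by simpa using hGg.free 1 0 le_rfl x) hGg.comm (Metric.ball z ε)
    (convex_ball _ _) (ball_disj (min_le_right _ _)) ?_ z (Metric.mem_ball_self hε) s hs
    n n0 hn hn0 (k - s * |k0| * n) (k0 - s * |k0| * n0) hk ?_ ?_ ?_
  · intro x hx hx'
    have a := (hb (hb' hx)).1
    have b := (hb (hb' hx')).2
    simp only [mem_preimage] at a b
    rw [hG, prj_Tr] at b
    exact Set.disjoint_left.1 hUV a b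
  · have hn0' : (1 : ℤ) ≤ n0 := by exact_mod_cast hn0
    have h1 : |k0| ≤ |k0| * n0 := le_mul_of_one_le_right (abs_nonneg _) hn0'
    have h2 := le_abs_self k0
    have h3 := neg_abs_le k0
    rcases hs with rfl | rfl <;> nlinarith
  · rw [hGf, TrF_iter hF.comm, Tr_Tr, Metric.mem_ball]
    convert hd using 3
    · ring
    · simp
  · rw [hGf, TrF_iter hF.comm, Tr_Tr, Metric.mem_ball]
    convert hd0 using 3
    · ring
    · simp

theorem irr_core {G : Plane ≃ₜ Plane} (hG : Good G) {z : Plane} (h1 : Ret G z (fun _ _ => True))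
    (s : ℤ) (hs : s = 1 ∨ s = -1)
    (h2 : ∃ e > 0, ∀ m, 1 ≤ m → ∀ k : ℤ, dist (Tr (-k) (G^[m] z)) z < e → 1 ≤ s * k)
    (h3 : ∀ N : ℕ, 1 ≤ N → ∃ e > 0, ∀ m, 1 ≤ m → ∀ k : ℤ, dist (Tr (-k) (G^[m] z)) z < e →
      N * (s * k) < m) : False := by
  obtain ⟨e0, he0, h2⟩ := h2
  have hfix : ∀ x, G x ≠ x := fun x => by simpa using hG.free 1 0 le_rfl x
  obtain ⟨G', hG', hGi⟩ := hG.iso 1 0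
  have hGG : G' = G := by ext x <;> simp [hG']
  rw [hGG] at hGi
  obtain ⟨e1, he1, hf1⟩ := free_ball G.continuous (hfix z)
  obtain ⟨m1, hm1, k1, -, hd1⟩ := h1 (min e0 e1) (lt_min he0 he1)
  rw [lt_min_iff] at hd1
  have hk1 := h2 m1 hm1 k1 hd1.1
  have cont : Continuous (fun w => Tr (-k1) (G^[m1] w)) :=
    (Tr_cont _).comp (G.continuous.iterate m1)
  obtain ⟨e2, he2, hf2⟩ := free_ball cont (hG.free m1 (-k1) hm1 z)
  obtain ⟨e3, he3, hb3⟩ := Metric.isOpen_iff.1 (Metric.isOpen_ball.preimage cont) z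
    (show z ∈ (fun w => Tr (-k1) (G^[m1] w)) ⁻¹' Metric.ball z e1 from hd1.2)
  obtain ⟨ε, hε, l1, l2, l3, l4⟩ : ∃ ε > 0, ε ≤ e1 ∧ ε ≤ e2 ∧ ε ≤ e3 ∧ ε ≤ 1 / 2 :=
    ⟨min (min e1 e2) (min e3 (1 / 2)), by positivity,
      (min_le_left _ _).trans (min_le_left _ _), (min_le_left _ _).trans (min_le_right _ _),
      (min_le_right _ _).trans (min_le_left _ _), (min_le_right _ _).trans (min_le_right _ _)⟩
  have free : ∀ j : ℕ, ∀ w ∈ Metric.ball z ε, Tr (-k1) (G^[j] w) ∉ Metric.ball z ε := by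
    intro j w hw hw'
    have u1 : Tr (-k1) (G^[m1] w) ∈ Metric.ball z e1 := hb3 (Metric.ball_subset_ball l3 hw)
    rcases lt_trichotomy j m1 with h | h | h
    · refine dl0 G hGi hfix _ (convex_ball z e1) hf1 _ (Metric.ball_subset_ball l1 hw') (m1 - j)
        (by omega) ?_
      rw [hG.comm.iter, ← Function.iterate_add_apply, show m1 - j + j = m1 by omega]
      exact u1
    · subst h
      exact hf2 w (Metric.ball_subset_ball l2 hw) (Metric.ball_subset_ball l2 hw')
    · refine dl0 G hGi hfix _ (convex_ball z e1) hf1 _ u1 (j - m1) (by omega) ?_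
      rw [hG.comm.iter, ← Function.iterate_add_apply, show j - m1 + m1 = j by omega]
      exact Metric.ball_subset_ball l1 hw'
  have big : ∀ i : ℕ, Ret G z (fun _ k => (i : ℤ) + 1 ≤ s * k) := by
    have one : Ret G z (fun _ k => 1 ≤ s * k) := ret_small h1 he0 fun m hm k hd _ => h2 m hm k hd
    intro i
    induction i with
    | zero => simpa using one
    | succ i ih =>
      refine ret_add G.continuous hG.comm ih one ?_
      intro n k n' k' _ _ a b
      push_cast; linarith
  obtain ⟨n, hn, k, hk, hd⟩ := big (s * k1).toNat ε hε
  rw [Int.toNat_of_nonneg (by omega)] at hk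
  obtain ⟨e4, he4, h4⟩ := h3 n hn
  obtain ⟨m', hm', k', ⟨-, m, rfl⟩, hd'⟩ := ret_dvd G.continuous hG.comm h1 (by simp) n hn
    (min ε e4) (lt_min hε he4)
  rw [lt_min_iff] at hd'
  have hlt := h4 _ hm' k' hd'.2
  have hm0 : 1 ≤ m := by
    rcases Nat.eq_zero_or_pos m with rfl | h
    · simp at hm'
    · exact h
  have hlt' : s * k' < m := by
    push_cast at hlt
    exact lt_of_mul_lt_mul_left hlt (by positivity)
  obtain ⟨H, hH, hHi⟩ := hG.iso n (-k1)
  have hHg : Good H := good_pow hG hn hH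
  have hHf : (H : Plane → Plane) = fun y => Tr (-k1) (G^[n] y) := funext hH
  refine dl_sign H hHi (fun x => by simpa using hHg.free 1 0 le_rfl x) hHg.comm (Metric.ball z ε)
    (convex_ball _ _) (ball_disj l4) ?_ z (Metric.mem_ball_self hε) s hs
    1 m le_rfl hm0 (k - k1) (k' - k1 * m) ?_ ?_ ?_ ?_
  · intro x hx
    rw [hH]; exact free n x hx
  · rw [mul_sub]; linarith
  · have : (m : ℤ) ≤ s * k1 * m := le_mul_of_one_le_left (by positivity) hk1
    linarith [mul_sub s k' (k1 * m), mul_assoc s k1 (m : ℤ)]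
  · rw [hHf, TrF_iter hG.comm, Tr_Tr, Metric.mem_ball]
    convert hd using 3
    · push_cast; ring
    · simp
  · rw [hHf, TrF_iter hG.comm, Tr_Tr, Metric.mem_ball]
    have hd'' : dist (Tr (-k') (G^[n * m] z)) z < ε := hd'.1
    convert hd'' using 3
    ring

theorem prj_open : IsOpenMap prj :=
  (QuotientAddGroup.isOpenMap_coe (N := AddSubgroup.zmultiples (1 : ℝ))).prodMap IsOpenMap.id

theorem near_lift (zt : Plane) {ε : ℝ} (hε : 0 < ε) :
    ∀ᶠ x in 𝓝 (prj zt), ∀ w, prj w = x → ∃ k : ℤ, dist (Tr (-k) w) zt < ε := by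
  have : prj '' Metric.ball zt ε ∈ 𝓝 (prj zt) :=
    prj_open.image_mem_nhds (Metric.ball_mem_nhds zt hε)
  filter_upwards [this]
  rintro x ⟨y, hy, rfl⟩ w hw
  obtain ⟨m, hm⟩ := prj_eq.1 hw.symm
  refine ⟨-m, ?_⟩
  rw [neg_neg, ← hm]; exact hy

theorem ev_ret {f : Ann ≃ₜ Ann} {F : Plane ≃ₜ Plane} (hlift : IsLift f F) {z : Ann} {zt : Plane}
    (hz : prj zt = z) {φ : ℕ → ℕ} (hφ : Tendsto (fun k => f^[φ k] z) atTop (𝓝 z)) {ε : ℝ}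
    (hε : 0 < ε) : ∀ᶠ i in atTop, ∃ k : ℤ, dist (Tr (-k) (F^[φ i] zt)) zt < ε := by
  subst hz
  filter_upwards [hφ.eventually (near_lift zt hε)] with i hi
  exact hi _ (prj_iter hlift _ _)

theorem ret_of_posRec {f : Ann ≃ₜ Ann} {F : Plane ≃ₜ Plane} (hlift : IsLift f F) {z : Ann}
    {zt : Plane} (hz : prj zt = z) (h : PosRec f z) : Ret F zt (fun _ _ => True) := by
  intro ε hε
  obtain ⟨φ, hm, ht⟩ := h
  obtain ⟨i, ⟨k, hk⟩, hi⟩ := ((ev_ret hlift hz ht hε).and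
    (hm.tendsto_atTop.eventually_ge_atTop 1)).exists
  exact ⟨φ i, hi, k, trivial, hk⟩

theorem rot_of_bounds {f : Ann ≃ₜ Ann} {F : Plane ≃ₜ Plane} (hlift : IsLift f F) {z : Ann} {ρ : ℝ}
    (hrec : PosRec f z)
    (hlo : ∀ zt, prj zt = z → ∀ r : ℚ, (r : ℝ) < ρ → ∃ e > 0, ∀ m, 1 ≤ m → ∀ k : ℤ,
      dist (Tr (-k) (F^[m] zt)) zt < e → (r : ℝ) * m < k)
    (hhi : ∀ zt, prj zt = z → ∀ r : ℚ, ρ < (r : ℝ) → ∃ e > 0, ∀ m, 1 ≤ m → ∀ k : ℤ,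
      dist (Tr (-k) (F^[m] zt)) zt < e → (k : ℝ) < r * m) : HasRotNum f F z ρ := by
  refine ⟨hrec, fun zt hzt φ hφ ht => ?_⟩
  have cl : ∀ (m : ℕ) (k : ℤ), dist (Tr (-k) (F^[m] zt)) zt < 1 →
      |(F^[m] zt).1 - zt.1 - k| < 1 := by
    intro m k h
    rw [Prod.dist_eq, max_lt_iff, Real.dist_eq] at h
    have := h.1
    simp only [Tr] at this
    push_cast at this
    rwa [show (F^[m] zt).1 + -(k : ℝ) - zt.1 = (F^[m] zt).1 - zt.1 - k by ring] at this
  have hinf : Tendsto (fun i => (φ i : ℝ)) atTop atTop :=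
    tendsto_natCast_atTop_atTop.comp hφ.tendsto_atTop
  rw [tendsto_order]
  constructor
  · intro a ha
    obtain ⟨r, hr1, hr2⟩ := exists_rat_btwn ha
    obtain ⟨e, he, hh⟩ := hlo zt hzt r hr2
    filter_upwards [ev_ret hlift hzt ht (lt_min he one_pos), hφ.tendsto_atTop.eventually_ge_atTop 1,
      hinf.eventually_ge_atTop (1 / ((r : ℝ) - a))] with i hi h1 h2
    obtain ⟨k, hk⟩ := hi
    have b1 := hh _ h1 k (hk.trans_le (min_le_left _ _))
    have b2 := abs_lt.1 (cl _ k (hk.trans_le (min_le_right _ _)))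
    have hpos : (0 : ℝ) < φ i := by exact_mod_cast h1
    rw [div_le_iff₀ (by linarith)] at h2
    rw [lt_div_iff₀ hpos]
    nlinarith [b2.1]
  · intro a ha
    obtain ⟨r, hr1, hr2⟩ := exists_rat_btwn ha
    obtain ⟨e, he, hh⟩ := hhi zt hzt r hr1
    filter_upwards [ev_ret hlift hzt ht (lt_min he one_pos), hφ.tendsto_atTop.eventually_ge_atTop 1,
      hinf.eventually_ge_atTop (1 / (a - (r : ℝ)))] with i hi h1 h2
    obtain ⟨k, hk⟩ := hi
    have b1 := hh _ h1 k (hk.trans_le (min_le_left _ _))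
    have b2 := abs_lt.1 (cl _ k (hk.trans_le (min_le_right _ _)))
    have hpos : (0 : ℝ) < φ i := by exact_mod_cast h1
    rw [div_le_iff₀ (by linarith)] at h2
    rw [div_lt_iff₀ hpos]
    nlinarith [b2.2]

theorem rat_le (r : ℚ) (n : ℕ) (k : ℤ) : (r : ℝ) * n ≤ k ↔ r.num * n ≤ k * r.den := by
  have hd : (0 : ℝ) < r.den := by exact_mod_cast r.den_pos
  rw [Rat.cast_def, div_mul_eq_mul_div, div_le_iff₀ hd]
  exact_mod_cast Iff.rfl

theorem rat_ge (r : ℚ) (n : ℕ) (k : ℤ) : (k : ℝ) ≤ r * n ↔ k * r.den ≤ r.num * n := by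
  have hd : (0 : ℝ) < r.den := by exact_mod_cast r.den_pos
  rw [Rat.cast_def, div_mul_eq_mul_div, le_div_iff₀ hd]
  exact_mod_cast Iff.rfl

theorem C1rat {f : Ann ≃ₜ Ann} {F : Plane ≃ₜ Plane} (hint : IntersectionProperty f)
    (hlift : IsLift f F) (hF : Good F) (r : ℚ) {z z' : Plane}
    (h : Ret F z (fun n k => (r : ℝ) * n ≤ k)) (h' : Ret F z' (fun n k => (k : ℝ) ≤ r * n)) :
    False :=
  C1 hint hlift hF (q := r.den) r.den_pos (p := r.num)
    (ret_mono h fun n k _ hh => (rat_le r n k).1 hh)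
    (ret_mono h' fun n k _ hh => (rat_ge r n k).1 hh)

theorem backward {f : Ann ≃ₜ Ann} {F : Plane ≃ₜ Plane} (hint : IntersectionProperty f)
    (hlift : IsLift f F) (hF : Good F) {z : Ann} (hz : PosRec f z) :
    ∃ ρ : ℝ, Irrational ρ ∧ Rot f F = {ρ} := by
  obtain ⟨z0, hz0⟩ : ∃ z0, prj z0 = z := by
    obtain ⟨a, ha⟩ := QuotientAddGroup.mk_surjective z.1
    exact ⟨(a, z.2), Prod.ext ha rfl⟩
  have hr0 := ret_of_posRec hlift hz0 hz
  have dich : ∀ (w : Plane) (r : ℚ), Ret F w (fun _ _ => True) →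
      Ret F w (fun n k => (r : ℝ) * n ≤ k) ∨ Ret F w (fun n k => (k : ℝ) ≤ r * n) := fun w r h =>
    ret_or (ret_mono h fun n k _ _ => le_total _ _)
  set A : Set ℝ := {x | ∃ r : ℚ, (r : ℝ) = x ∧ Ret F z0 (fun n k => (r : ℝ) * n ≤ k)} with hA
  have low : ∀ r r' : ℚ, r' ≤ r → Ret F z0 (fun n k => (r : ℝ) * n ≤ k) →
      Ret F z0 (fun n k => (r' : ℝ) * n ≤ k) := by
    intro r r' hrr h
    refine ret_mono h fun n k _ hh => ?_
    have : (r' : ℝ) ≤ r := by exact_mod_cast hrr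
    have : (r' : ℝ) * n ≤ r * n := mul_le_mul_of_nonneg_right this (by positivity)
    linarith
  have hne : A.Nonempty := by
    obtain ⟨P, hP⟩ := finite_core hF hr0 (-1) (Or.inr rfl)
    obtain ⟨e, he, hh⟩ := ret_not hP
    refine ⟨((P : ℚ) : ℝ), (P : ℚ), rfl, ret_small hr0 he fun m hm k hd _ => ?_⟩
    have := hh m hm k hd
    have h2 : P * m ≤ k := by omega
    rw [Rat.cast_intCast]
    exact_mod_cast h2
  have hbd : BddAbove A := by
    obtain ⟨P, hP⟩ := finite_core hF hr0 1 (Or.inl rfl)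
    refine ⟨P, ?_⟩
    rintro x ⟨r, rfl, hr⟩
    by_contra hlt
    have hlt' : (P : ℚ) ≤ r := by
      have := (not_le.1 hlt).le
      exact_mod_cast this
    refine hP (ret_mono (low _ _ hlt' hr) fun n k _ hh => ?_)
    rw [Rat.cast_intCast] at hh
    have h2 : P * n ≤ k := by exact_mod_cast hh
    omega
  set ρ := sSup A with hρ
  have hlt : ∀ r : ℚ, (r : ℝ) < ρ → Ret F z0 (fun n k => (r : ℝ) * n ≤ k) := by
    intro r hr
    obtain ⟨_, ⟨r', rfl, h'⟩, hh⟩ := exists_lt_of_lt_csSup hne hr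
    exact low r' r (by exact_mod_cast hh.le) h'
  have hgt : ∀ r : ℚ, ρ < (r : ℝ) → Ret F z0 (fun n k => (k : ℝ) ≤ r * n) := by
    intro r hr
    rcases dich z0 r hr0 with h | h
    · exact absurd (le_csSup hbd ⟨r, rfl, h⟩) (not_le.2 hr)
    · exact h
  have elo : ∀ (w : Plane) (r : ℚ), (r : ℝ) < ρ → ∃ e > 0, ∀ m, 1 ≤ m → ∀ k : ℤ,
      dist (Tr (-k) (F^[m] w)) w < e → (r : ℝ) * m < k := by
    intro w r hr
    obtain ⟨e, he, hh⟩ := ret_not (fun h => C1rat hint hlift hF r (hlt r hr) (z' := w) h)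
    exact ⟨e, he, fun m hm k hd => not_le.1 (hh m hm k hd)⟩
  have ehi : ∀ (w : Plane) (r : ℚ), ρ < (r : ℝ) → ∃ e > 0, ∀ m, 1 ≤ m → ∀ k : ℤ,
      dist (Tr (-k) (F^[m] w)) w < e → (k : ℝ) < r * m := by
    intro w r hr
    obtain ⟨e, he, hh⟩ := ret_not (fun h => C1rat hint hlift hF r (z := w) h (hgt r hr))
    exact ⟨e, he, fun m hm k hd => not_le.1 (hh m hm k hd)⟩
  have hrot : ∀ y, PosRec f y → HasRotNum f F y ρ := fun y hy =>
    rot_of_bounds hlift hy (fun w _ => elo w) (fun w _ => ehi w)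
  refine ⟨ρ, ?_, ?_⟩
  · rintro ⟨r, hr⟩
    obtain ⟨G, hG, hGi⟩ := hF.iso r.den (-r.num)
    have hGg : Good G := good_pow hF r.den_pos hG
    have hGf : (G : Plane → Plane) = fun y => Tr (-r.num) (F^[r.den] y) := funext hG
    have tr : ∀ (m : ℕ) (K : ℤ), Tr (-K) (G^[m] z0) = Tr (-(K + r.num * m)) (F^[r.den * m] z0) := by
      intro m K
      rw [hGf, TrF_iter hF.comm, Tr_Tr]
      congr 1; ring
    have h1 : Ret G z0 (fun _ _ => True) := ret_pow hF.comm r.den_pos hG hr0 (by simp)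
    have hd0 : (0 : ℤ) < r.den := by exact_mod_cast r.den_pos
    have hdR : (0 : ℝ) < r.den := by exact_mod_cast r.den_pos
    have hrd : (r : ℝ) * r.den = r.num := by
      rw [Rat.cast_def]; field_simp
    rcases dich z0 r hr0 with h | h
    · obtain ⟨e, he, hh⟩ := ret_not (fun h' => C1rat hint hlift hF r h (z' := z0) h')
      refine irr_core hGg h1 1 (Or.inl rfl) ⟨e, he, fun m hm K hd => ?_⟩ fun N hN => ?_
      · rw [tr] at hd
        have := hh _ (Nat.mul_pos r.den_pos hm) _ hd
        rw [not_le] at this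
        push_cast at this
        rw [← mul_assoc, hrd] at this
        have h2 : (0 : ℝ) < K := by linarith
        have h3 : 0 < K := by exact_mod_cast h2
        omega
      · have hN0 : (0 : ℝ) < N := by exact_mod_cast hN
        obtain ⟨e, he, hh⟩ := ehi z0 (r + 1 / (N * r.den)) (by
          push_cast; rw [hr]
          have : (0 : ℝ) < 1 / (N * r.den) := by positivity
          linarith)
        refine ⟨e, he, fun m hm K hd => ?_⟩
        rw [tr] at hd
        have := hh _ (Nat.mul_pos r.den_pos hm) _ hd
        push_cast at this
        have e1 : ((r : ℝ) + 1 / (N * r.den)) * (r.den * m) = r.num * m + m / N := by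
          rw [← hrd]; field_simp
        rw [e1] at this
        have h2 : (K : ℝ) < m / N := by linarith
        rw [lt_div_iff₀ hN0] at h2
        have h3 : K * N < m := by exact_mod_cast h2
        linarith
    · obtain ⟨e, he, hh⟩ := ret_not (fun h' => C1rat hint hlift hF r (z := z0) h' h)
      refine irr_core hGg h1 (-1) (Or.inr rfl) ⟨e, he, fun m hm K hd => ?_⟩ fun N hN => ?_
      · rw [tr] at hd
        have := hh _ (Nat.mul_pos r.den_pos hm) _ hd
        rw [not_le] at this
        push_cast at this
        rw [← mul_assoc, hrd] at this
        have h2 : (K : ℝ) < 0 := by linarith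
        have h3 : K < 0 := by exact_mod_cast h2
        omega
      · have hN0 : (0 : ℝ) < N := by exact_mod_cast hN
        obtain ⟨e, he, hh⟩ := elo z0 (r - 1 / (N * r.den)) (by
          push_cast; rw [hr]
          have : (0 : ℝ) < 1 / (N * r.den) := by positivity
          linarith)
        refine ⟨e, he, fun m hm K hd => ?_⟩
        rw [tr] at hd
        have := hh _ (Nat.mul_pos r.den_pos hm) _ hd
        push_cast at this
        have e1 : ((r : ℝ) - 1 / (N * r.den)) * (r.den * m) = r.num * m - m / N := by
          rw [← hrd]; field_simp
        rw [e1] at this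
        have h2 : (-K : ℝ) < m / N := by linarith
        rw [lt_div_iff₀ hN0] at h2
        have h3 : -K * N < m := by exact_mod_cast h2
        linarith
  · ext σ
    constructor
    · rintro ⟨y, hy⟩
      have h2 := hrot y hy.1
      obtain ⟨φ, hφ, ht⟩ := hy.1
      obtain ⟨w, hw⟩ : ∃ w, prj w = y := by
        obtain ⟨a, ha⟩ := QuotientAddGroup.mk_surjective y.1
        exact ⟨(a, y.2), Prod.ext ha rfl⟩
      exact tendsto_nhds_unique (hy.2 w hw φ hφ ht) (h2.2 w hw φ hφ ht)
    · rintro rfl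
      exact ⟨z, hrot z hz⟩

theorem forward {f : Ann ≃ₜ Ann} {F : Plane ≃ₜ Plane} (hc : CommT F)
    (hlift : IsLift f F) {ρ : ℝ} (hirr : Irrational ρ) (hR : Rot f F = {ρ}) :
    (∃ z : Ann, PosRec f z) ∧ ¬ ∃ z : Ann, ∃ n : ℕ, 0 < n ∧ f^[n] z = z := by
  constructor
  · have : ρ ∈ Rot f F := by rw [hR]; rfl
    obtain ⟨z, hz⟩ := this
    exact ⟨z, hz.1⟩
  · rintro ⟨z, n, hn, hfz⟩
    have hn0 : (0 : ℝ) < n := by exact_mod_cast hn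
    have hit : ∀ a : ℕ, f^[n * a] z = z := by
      intro a
      rw [Function.iterate_mul]
      exact Function.iterate_fixed hfz a
    have hrec : PosRec f z := ⟨fun i => n * i, fun i j h => Nat.mul_lt_mul_of_pos_left h hn, by
      simp only [hit]; exact tendsto_const_nhds⟩
    obtain ⟨zt, hzt⟩ : ∃ w, prj w = z := by
      obtain ⟨a, ha⟩ := QuotientAddGroup.mk_surjective z.1
      exact ⟨(a, z.2), Prod.ext ha rfl⟩
    obtain ⟨k, hk⟩ : ∃ k : ℤ, F^[n] zt = Tr k zt :=
      prj_eq.1 (by rw [prj_iter hlift, hzt, hfz])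
    have hFa : ∀ w : Plane, prj w = z → ∀ a : ℕ, F^[n * a] w = Tr (a * k) w := by
      intro w hw a
      obtain ⟨j, rfl⟩ := prj_eq.1 (hw.trans hzt.symm)
      rw [hc.iter]
      have : F^[n * a] zt = Tr (a * k) zt := by
        induction a with
        | zero => simp
        | succ a ih =>
          rw [Nat.mul_succ, Function.iterate_add_apply, hk, hc.iter, ih, Tr_Tr]
          congr 1; push_cast; ring
      rw [this, Tr_Tr, Tr_Tr, add_comm]
    have hmem : ((k : ℝ) / n) ∈ Rot f F := by
      refine ⟨z, hrec, fun w hw φ hφ ht => ?_⟩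
      obtain ⟨C, hC⟩ : ∃ C, ∀ r < n, |(F^[r] w).1 - w.1 - r * ((k : ℝ) / n)| ≤ C := by
        obtain ⟨C, hC⟩ := ((Set.finite_lt_nat n).image
          (fun r => |(F^[r] w).1 - w.1 - r * ((k : ℝ) / n)|)).bddAbove
        exact ⟨C, fun r hr => hC ⟨r, hr, rfl⟩⟩
      have bd : ∀ m, |(F^[m] w).1 - w.1 - m * ((k : ℝ) / n)| ≤ C := by
        intro m
        have hm := Nat.mod_add_div m n
        have h1 : F^[m] w = Tr ((m / n : ℕ) * k) (F^[m % n] w) := by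
          conv_lhs => rw [← hm, Function.iterate_add_apply, hFa w hw, hc.iter]
        have h2 := hC _ (Nat.mod_lt m hn)
        have h3 : (m : ℝ) = (m % n : ℕ) + n * (m / n : ℕ) := by exact_mod_cast hm.symm
        have h4 : (F^[m] w).1 - w.1 - m * ((k : ℝ) / n)
            = (F^[m % n] w).1 - w.1 - (m % n : ℕ) * ((k : ℝ) / n) := by
          rw [h1, h3]
          simp only [Tr, Int.cast_mul, Int.cast_natCast]
          field_simp
          ring
        rwa [h4]
      have hinf : Tendsto (fun i => (φ i : ℝ)) atTop atTop :=
        tendsto_natCast_atTop_atTop.comp hφ.tendsto_atTop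
      have h0 : Tendsto (fun i => C / (φ i : ℝ)) atTop (𝓝 0) := hinf.const_div_atTop C
      rw [tendsto_iff_dist_tendsto_zero]
      refine squeeze_zero' (Eventually.of_forall fun _ => dist_nonneg) ?_ h0
      filter_upwards [hφ.tendsto_atTop.eventually_ge_atTop 1] with i hi
      have hpos : (0 : ℝ) < φ i := by exact_mod_cast hi
      rw [Real.dist_eq, le_div_iff₀ hpos, ← abs_of_pos hpos, ← abs_mul, abs_of_pos hpos]
      refine le_trans (le_of_eq ?_) (bd (φ i))
      congr 1
      field_simp
    rw [hR] at hmem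
    exact hirr ⟨(k : ℚ) / n, by push_cast; exact hmem⟩

/-- Corollary 4.4: `Rot(F)` is reduced to a single irrational number if and only if
`Rec⁺(f) ≠ ∅` and `f` has no periodic orbit. -/
theorem single_irrational_iff_recurrent_no_periodic
    (f : Ann ≃ₜ Ann) (F : Plane ≃ₜ Plane)
    (hiso : IsotopicToId f) (hint : IntersectionProperty f) (hlift : IsLift f F) :
    (∃ ρ : ℝ, Irrational ρ ∧ Rot ⇑f ⇑F = {ρ}) ↔
      ((∃ z : Ann, PosRec ⇑f z) ∧ ¬ ∃ z : Ann, ∃ n : ℕ, 0 < n ∧ (⇑f)^[n] z = z) := by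
  constructor
  · rintro ⟨ρ, hirr, hR⟩
    exact forward (lift_iso hiso hlift).1 hlift hirr hR
  · rintro ⟨⟨z, hz⟩, hper⟩
    exact backward hint hlift (good_of hiso hlift hper) hz
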